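/- Fix a pattern ω = (ω₁,…,ω_m). For each n ≥ 1, let L_n denote the finite nonempty set of Łukasiewicz paths of length n, equipped with the uniform probability measure, and let X_n(p) be the number of occurrences of ω in the path p ∈ L_n. Then there exist real constants μ > 0 and v > 0 such that E[X_n]/n → μ and Var[X_n]/n → v as n → ∞, and X_n converges after standardization to a standard Gaussian: for every x ∈ ℝ, the proportion of paths p ∈ L_n with X_n(p) ≤ μn + x·√(v·n) tends to (2π)^{−1/2} ∫_{−∞}^{x} e^{−t²/2} dt as n → ∞. -/

import Mathlib

noncomputable section

open Filter MeasureTheory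

/-- `s : ℕ → ℤ` is the step sequence of a Łukasiewicz path of length `n`: each of the first
`n` steps is at most `1`, every partial sum `y_i = s 0 + ⋯ + s (i-1)` with `1 ≤ i ≤ n` is
strictly positive, and (for canonicity) `s` vanishes from index `n` on. -/
def IsLukaSteps (n : ℕ) (s : ℕ → ℤ) : Prop :=
  (∀ i, n ≤ i → s i = 0) ∧ (∀ i < n, s i ≤ 1) ∧
    ∀ i : ℕ, 1 ≤ i → i ≤ n → 0 < ∑ j ∈ Finset.range i, s j

/-- `ω : ℕ → ℤ` (restricted to indices `< m`) is a pattern: each step is at most `1` and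
every partial sum is strictly positive. -/
def IsPattern (m : ℕ) (ω : ℕ → ℤ) : Prop :=
  (∀ j < m, ω j ≤ 1) ∧ ∀ i : ℕ, 1 ≤ i → i ≤ m → 0 < ∑ j ∈ Finset.range i, ω j

/-- The number of occurrences of the pattern `ω` (of length `m`) in the Łukasiewicz path
with step sequence `s` (of length `n`). -/
def occCount (m : ℕ) (ω : ℕ → ℤ) (n : ℕ) (s : ℕ → ℤ) : ℕ :=
  Nat.card {k : ℕ // k + m ≤ n ∧ ∀ j < m, s (k + j) = ω j}

/-- The mean number of occurrences of `ω` over all Łukasiewicz paths of length `n`. -/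
def lukaMean (m : ℕ) (ω : ℕ → ℤ) (n : ℕ) : ℝ :=
  (∑' p : {s : ℕ → ℤ // IsLukaSteps n s}, (occCount m ω n p.1 : ℝ)) /
    (Nat.card {s : ℕ → ℤ // IsLukaSteps n s} : ℝ)

/-- The mean square of the number of occurrences of `ω` over all Łukasiewicz paths of
length `n`. -/
def lukaSqMean (m : ℕ) (ω : ℕ → ℤ) (n : ℕ) : ℝ :=
  (∑' p : {s : ℕ → ℤ // IsLukaSteps n s}, (occCount m ω n p.1 : ℝ) ^ 2) /
    (Nat.card {s : ℕ → ℤ // IsLukaSteps n s} : ℝ)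


/-- The average of a function over all words `ι → Bool`. -/
def bavg {ι : Type} [Fintype ι] [DecidableEq ι] (F : (ι → Bool) → ℂ) : ℂ :=
  (∑ b, F b) / 2 ^ (Fintype.card ι)

section bavg

variable {ι : Type} [Fintype ι] [DecidableEq ι]

lemma bavg_add (F G : (ι → Bool) → ℂ) :
    bavg (fun b => F b + G b) = bavg F + bavg G := by
  unfold bavg; rw [Finset.sum_add_distrib, add_div]

lemma bavg_sub (F G : (ι → Bool) → ℂ) :
    bavg (fun b => F b - G b) = bavg F - bavg G := by
  unfold bavg; rw [Finset.sum_sub_distrib, sub_div]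

lemma bavg_const_mul (c : ℂ) (F : (ι → Bool) → ℂ) :
    bavg (fun b => c * F b) = c * bavg F := by
  unfold bavg; rw [← Finset.mul_sum, mul_div_assoc]

lemma bavg_sum {κ : Type} (s : Finset κ) (F : κ → (ι → Bool) → ℂ) :
    bavg (fun b => ∑ k ∈ s, F k b) = ∑ k ∈ s, bavg (F k) := by
  unfold bavg; rw [Finset.sum_comm, Finset.sum_div]

lemma bavg_const (c : ℂ) : bavg (fun _ : ι → Bool => c) = c := by
  unfold bavg
  simp [Finset.sum_const, Fintype.card_pi]

lemma bavg_norm_le (F : (ι → Bool) → ℂ) (K : ℝ) (h : ∀ b, ‖F b‖ ≤ K) : ‖bavg F‖ ≤ K := by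
  unfold bavg
  rw [norm_div, norm_pow, Complex.norm_ofNat, div_le_iff₀ (by positivity)]
  refine (norm_sum_le _ _).trans ?_
  refine (Finset.sum_le_sum (fun b _ => h b)).trans ?_
  simp [Fintype.card_pi, mul_comm]

/-- Functions of disjoint sets of coordinates are independent. -/
lemma bavg_mul_of_dep (F G : (ι → Bool) → ℂ) (A : Finset ι)
    (hF : DependsOn F (A : Set ι)) (hG : DependsOn G ((A : Set ι)ᶜ)) :
    bavg (fun b => F b * G b) = bavg F * bavg G := by
  have key : (∑ b, F b) * (∑ b, G b) = 2 ^ (Fintype.card ι) * ∑ b, F b * G b := by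
    let e : ((ι → Bool) × (ι → Bool)) → ((ι → Bool) × (ι → Bool)) :=
      fun q => (A.piecewise q.1 q.2, A.piecewise q.2 q.1)
    have he : Function.Involutive e := by
      rintro ⟨a, b⟩
      simp only [e, Prod.mk.injEq]
      constructor <;> ext i <;> by_cases hi : i ∈ A <;> simp [Finset.piecewise, hi]
    rw [Finset.sum_mul_sum, ← Fintype.sum_prod_type']
    have : ∀ q : (ι → Bool) × (ι → Bool), F q.1 * G q.2 = F (e q).1 * G (e q).1 := by
      rintro ⟨a, b⟩
      congr 1
      · apply hF
        intro i hi
        have : i ∈ A := by simpa using hi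
        simp [e, Finset.piecewise, this]
      · apply hG
        intro i hi
        have : i ∉ A := by simpa using hi
        simp [e, Finset.piecewise, this]
    rw [Finset.sum_congr rfl (fun q _ => this q)]
    have hs := Equiv.sum_comp (Function.Involutive.toPerm e he)
      (fun q : (ι → Bool) × (ι → Bool) => F q.1 * G q.1)
    simp only [Function.Involutive.coe_toPerm] at hs
    rw [hs]
    rw [Fintype.sum_prod_type_right (fun q : (ι → Bool) × (ι → Bool) => F q.1 * G q.1)]
    simp [Fintype.card_pi]
  unfold bavg
  have h2 : (2 : ℂ) ^ (Fintype.card ι) ≠ 0 := pow_ne_zero _ two_ne_zero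
  field_simp
  rw [key, mul_comm]

end bavg

lemma norm_exp_I_sub_le (x y : ℝ) :
    ‖Complex.exp (Complex.I * x) - Complex.exp (Complex.I * y)‖ ≤ |x - y| := by
  have h : Complex.exp (Complex.I * x) - Complex.exp (Complex.I * y)
      = Complex.exp (Complex.I * y) * (Complex.exp (Complex.I * (x - y : ℝ)) - 1) := by
    rw [mul_sub, ← Complex.exp_add]
    push_cast; ring_nf
  rw [h, norm_mul, mul_comm Complex.I, Complex.norm_exp_ofReal_mul_I, one_mul]
  simpa using Real.norm_exp_I_mul_ofReal_sub_one_le (x := x - y)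

lemma norm_exp_I_sub_one_sub_le (x : ℝ) :
    ‖Complex.exp (Complex.I * x) - 1 - Complex.I * x‖ ≤ 2 * x ^ 2 := by
  by_cases hx : |x| ≤ 1
  · have h := Complex.norm_exp_sub_one_sub_id_le (x := Complex.I * x) (by simpa using hx)
    refine h.trans ?_
    simp only [norm_mul, Complex.norm_I, one_mul, Complex.norm_real, Real.norm_eq_abs, sq_abs]
    nlinarith [sq_nonneg x]
  · push Not at hx
    have h1 : ‖Complex.exp (Complex.I * x) - 1‖ ≤ |x| := by
      simpa using Real.norm_exp_I_mul_ofReal_sub_one_le (x := x)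
    refine (norm_sub_le _ _).trans ?_
    simp only [norm_mul, Complex.norm_I, one_mul, Complex.norm_real, Real.norm_eq_abs]
    nlinarith [sq_abs x]

section tikh

variable {ι : Type} [Fintype ι] [DecidableEq ι]

lemma hasDerivAt_bavg_exp (X : (ι → Bool) → ℝ) (l : ℝ) :
    HasDerivAt (fun l : ℝ => bavg (fun b => Complex.exp (Complex.I * ((l * X b : ℝ) : ℂ))))
      (bavg (fun b => Complex.I * X b * Complex.exp (Complex.I * ((l * X b : ℝ) : ℂ)))) l := by
  unfold bavg
  apply HasDerivAt.div_const
  apply HasDerivAt.fun_sum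
  intro b _
  have h1 : HasDerivAt (fun l : ℝ => Complex.I * ((l * X b : ℝ) : ℂ)) (Complex.I * X b) l := by
    have : HasDerivAt (fun l : ℝ => l * X b) (X b) l := by
      simpa using (hasDerivAt_id l).mul_const (X b)
    exact (this.ofReal_comp).const_mul Complex.I
  have := h1.cexp
  rw [mul_comm] at this
  exact this

/-- Local estimate for one summand in the characteristic function ODE. -/
lemma tikh_local (A : Finset ι) (N N' : Finset ι) (hNN : N ⊆ N') (X : ι → (ι → Bool) → ℝ)
    (j : ι) (hXj : DependsOn (X j) (A : Set ι))
    (hW : ∀ k ∉ N, DependsOn (X k) ((A : Set ι)ᶜ))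
    (B : Finset ι) (hjB : DependsOn (X j) (B : Set ι))
    (hZ : ∀ k ∈ N, DependsOn (X k) (B : Set ι))
    (hW' : ∀ k ∉ N', DependsOn (X k) ((B : Set ι)ᶜ))
    (hmean : bavg (fun b => (X j b : ℂ)) = 0) (K Q : ℝ) (hK : 0 ≤ K)
    (hXK : ∀ k b, |X k b| ≤ K) (hQ : (N'.card : ℝ) * K ≤ Q) (l : ℝ) (hl : 0 ≤ l) :
    ‖bavg (fun b => (X j b : ℂ) * Complex.exp (Complex.I * ((l * ∑ k, X k b : ℝ) : ℂ)))
      - Complex.I * l * bavg (fun b => ((X j b * ∑ k, X k b : ℝ) : ℂ))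
        * bavg (fun b => Complex.exp (Complex.I * ((l * ∑ k, X k b : ℝ) : ℂ)))‖
      ≤ 4 * K * Q ^ 2 * l ^ 2 := by
  set Z : (ι → Bool) → ℝ := fun b => ∑ k ∈ N, X k b with hZdef
  set W : (ι → Bool) → ℝ := fun b => ∑ k ∈ Nᶜ, X k b with hWdef
  set Z' : (ι → Bool) → ℝ := fun b => ∑ k ∈ N', X k b with hZ'def
  set W' : (ι → Bool) → ℝ := fun b => ∑ k ∈ N'ᶜ, X k b with hW'def
  have hTW : ∀ b, ∑ k, X k b = Z b + W b := fun b => (Finset.sum_add_sum_compl N _).symm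
  have hTW' : ∀ b, ∑ k, X k b = Z' b + W' b := fun b => (Finset.sum_add_sum_compl N' _).symm
  have sb : ∀ (S : Finset ι), S ⊆ N' → ∀ b, |∑ k ∈ S, X k b| ≤ Q := by
    intro S hS b
    refine (Finset.abs_sum_le_sum_abs _ _).trans ?_
    refine (Finset.sum_le_sum (fun k _ => hXK k b)).trans ?_
    rw [Finset.sum_const, nsmul_eq_mul]
    refine le_trans ?_ hQ
    gcongr
  have hQ0 : 0 ≤ Q := le_trans (by positivity) hQ
  have hZb : ∀ b, |Z b| ≤ Q := sb N hNN
  have hZ'b : ∀ b, |Z' b| ≤ Q := sb N' le_rfl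
  have hWWb : ∀ b, |W b - W' b| ≤ Q := by
    intro b
    have : W b - W' b = ∑ k ∈ N' \ N, X k b := by
      have h1 := Finset.sum_sdiff (f := fun k => X k b) hNN
      have h2 := hTW b
      have h3 := hTW' b
      simp only [hZdef, hZ'def] at h2 h3
      linarith
    rw [this]
    exact sb _ Finset.sdiff_subset b
  -- dependence facts
  have dW : DependsOn W ((A : Set ι)ᶜ) := by
    intro x y hxy
    exact Finset.sum_congr rfl (fun k hk => hW k (Finset.mem_compl.1 hk) hxy)
  have dW' : DependsOn W' ((B : Set ι)ᶜ) := by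
    intro x y hxy
    exact Finset.sum_congr rfl (fun k hk => hW' k (Finset.mem_compl.1 hk) hxy)
  have dZ : DependsOn Z (B : Set ι) := by
    intro x y hxy
    exact Finset.sum_congr rfl (fun k hk => hZ k hk hxy)
  have i1 : bavg (fun b => (X j b : ℂ) * Complex.exp (Complex.I * ((l * W b : ℝ) : ℂ))) = 0 := by
    rw [bavg_mul_of_dep (fun b => (X j b : ℂ)) _ A, hmean, zero_mul]
    · intro x y hxy; simp only [hXj hxy]
    · intro x y hxy; simp only [dW hxy]
  have i1' : bavg (fun b => (X j b : ℂ) * (W b : ℂ)) = 0 := by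
    rw [bavg_mul_of_dep (fun b => (X j b : ℂ)) _ A, hmean, zero_mul]
    · intro x y hxy; simp only [hXj hxy]
    · intro x y hxy; simp only [dW hxy]
  have i2 : bavg (fun b => ((X j b * Z b : ℝ) : ℂ) * Complex.exp (Complex.I * ((l * W' b : ℝ) : ℂ)))
      = bavg (fun b => ((X j b * Z b : ℝ) : ℂ)) *
        bavg (fun b => Complex.exp (Complex.I * ((l * W' b : ℝ) : ℂ))) := by
    rw [bavg_mul_of_dep (fun b => ((X j b * Z b : ℝ) : ℂ)) _ B]
    · intro x y hxy; simp only [hjB hxy, dZ hxy]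
    · intro x y hxy; simp only [dW' hxy]
  have i3 : bavg (fun b => ((X j b * ∑ k, X k b : ℝ) : ℂ)) = bavg (fun b => ((X j b * Z b : ℝ) : ℂ)) := by
    have : (fun b => ((X j b * ∑ k, X k b : ℝ) : ℂ))
        = fun b => ((X j b * Z b : ℝ) : ℂ) + (X j b : ℂ) * (W b : ℂ) := by
      funext b; rw [hTW b]; push_cast; ring
    rw [this, bavg_add, i1', add_zero]
  rw [i3]
  set c : ℂ := bavg (fun b => ((X j b * Z b : ℝ) : ℂ)) with hc
  have hcn : ‖c‖ ≤ K * Q := by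
    apply bavg_norm_le
    intro b
    rw [Complex.norm_real, Real.norm_eq_abs, abs_mul]
    exact mul_le_mul (hXK j b) (hZb b) (abs_nonneg _) hK
  -- decomposition
  have decomp : bavg (fun b => (X j b : ℂ) * Complex.exp (Complex.I * ((l * ∑ k, X k b : ℝ) : ℂ)))
      - Complex.I * l * c * bavg (fun b => Complex.exp (Complex.I * ((l * ∑ k, X k b : ℝ) : ℂ)))
      = bavg (fun b => (X j b : ℂ) * (Complex.exp (Complex.I * ((l * W b : ℝ) : ℂ)) *
          (Complex.exp (Complex.I * ((l * Z b : ℝ) : ℂ)) - 1 - Complex.I * ((l * Z b : ℝ) : ℂ))))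
        + Complex.I * l * bavg (fun b => ((X j b * Z b : ℝ) : ℂ) *
          (Complex.exp (Complex.I * ((l * W b : ℝ) : ℂ)) -
            Complex.exp (Complex.I * ((l * W' b : ℝ) : ℂ))))
        + Complex.I * l * c * bavg (fun b => Complex.exp (Complex.I * ((l * W' b : ℝ) : ℂ)) -
            Complex.exp (Complex.I * ((l * ∑ k, X k b : ℝ) : ℂ))) := by
    have e1 : (fun b => (X j b : ℂ) * (Complex.exp (Complex.I * ((l * W b : ℝ) : ℂ)) *
          (Complex.exp (Complex.I * ((l * Z b : ℝ) : ℂ)) - 1 - Complex.I * ((l * Z b : ℝ) : ℂ))))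
        = fun b => (X j b : ℂ) * Complex.exp (Complex.I * ((l * ∑ k, X k b : ℝ) : ℂ)) -
          (X j b : ℂ) * Complex.exp (Complex.I * ((l * W b : ℝ) : ℂ)) -
          Complex.I * l * (((X j b * Z b : ℝ) : ℂ) * Complex.exp (Complex.I * ((l * W b : ℝ) : ℂ))) := by
      funext b
      have : Complex.exp (Complex.I * ((l * ∑ k, X k b : ℝ) : ℂ)) =
          Complex.exp (Complex.I * ((l * W b : ℝ) : ℂ)) * Complex.exp (Complex.I * ((l * Z b : ℝ) : ℂ)) := by
        rw [← Complex.exp_add, hTW b]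
        congr 1; push_cast; ring
      rw [this]; push_cast; ring
    rw [e1, bavg_sub, bavg_sub, bavg_const_mul, i1, bavg_sub]
    have e2 : (fun b => ((X j b * Z b : ℝ) : ℂ) *
          (Complex.exp (Complex.I * ((l * W b : ℝ) : ℂ)) -
            Complex.exp (Complex.I * ((l * W' b : ℝ) : ℂ)))) =
        fun b => ((X j b * Z b : ℝ) : ℂ) * Complex.exp (Complex.I * ((l * W b : ℝ) : ℂ)) -
          ((X j b * Z b : ℝ) : ℂ) * Complex.exp (Complex.I * ((l * W' b : ℝ) : ℂ)) := by
      funext b; ring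
    rw [e2, bavg_sub, i2]
    ring
  rw [decomp]
  have unit : ∀ x : ℝ, ‖Complex.exp (Complex.I * (x : ℂ))‖ = 1 := by
    intro x; rw [mul_comm, Complex.norm_exp_ofReal_mul_I]
  have n1 : ‖bavg (fun b => (X j b : ℂ) * (Complex.exp (Complex.I * ((l * W b : ℝ) : ℂ)) *
          (Complex.exp (Complex.I * ((l * Z b : ℝ) : ℂ)) - 1 - Complex.I * ((l * Z b : ℝ) : ℂ))))‖
      ≤ K * (2 * (l * Q) ^ 2) := by
    apply bavg_norm_le
    intro b
    rw [norm_mul, norm_mul, unit, one_mul, Complex.norm_real, Real.norm_eq_abs]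
    refine mul_le_mul (hXK j b) ?_ (norm_nonneg _) hK
    refine (norm_exp_I_sub_one_sub_le _).trans ?_
    rw [mul_pow, mul_pow, ← sq_abs (Z b)]
    gcongr
    exact hZb b
  have n2 : ‖bavg (fun b => ((X j b * Z b : ℝ) : ℂ) *
          (Complex.exp (Complex.I * ((l * W b : ℝ) : ℂ)) -
            Complex.exp (Complex.I * ((l * W' b : ℝ) : ℂ))))‖ ≤ K * Q * (l * Q) := by
    apply bavg_norm_le
    intro b
    rw [norm_mul, Complex.norm_real, Real.norm_eq_abs, abs_mul]
    refine mul_le_mul (mul_le_mul (hXK j b) (hZb b) (abs_nonneg _) hK) ?_ (norm_nonneg _) (by positivity)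
    refine (norm_exp_I_sub_le _ _).trans ?_
    rw [← mul_sub, abs_mul, abs_of_nonneg hl]
    exact mul_le_mul_of_nonneg_left (hWWb b) hl
  have n3 : ‖bavg (fun b => Complex.exp (Complex.I * ((l * W' b : ℝ) : ℂ)) -
            Complex.exp (Complex.I * ((l * ∑ k, X k b : ℝ) : ℂ)))‖ ≤ l * Q := by
    apply bavg_norm_le
    intro b
    refine (norm_exp_I_sub_le _ _).trans ?_
    rw [← mul_sub, abs_mul, abs_of_nonneg hl]
    refine mul_le_mul_of_nonneg_left ?_ hl
    rw [hTW' b]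
    simpa [abs_neg] using hZ'b b
  have hIl : ‖Complex.I * (l : ℂ)‖ = l := by
    simp [abs_of_nonneg hl]
  calc _ ≤ K * (2 * (l * Q) ^ 2) + l * (K * Q * (l * Q)) + l * (K * Q) * (l * Q) := by
        refine (norm_add_le _ _).trans (add_le_add ((norm_add_le _ _).trans (add_le_add n1 ?_)) ?_)
        · rw [norm_mul, hIl]; gcongr
        · rw [norm_mul, norm_mul, hIl]; gcongr
    _ = 4 * K * Q ^ 2 * l ^ 2 := by ring

/-- Quantitative CLT for locally dependent sums on the Boolean cube. -/
lemma tikh_clt (A : ι → Finset ι) (N' : ι → Finset ι) (B : ι → Finset ι)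
    (N : ι → Finset ι) (hNN : ∀ j, N j ⊆ N' j) (X : ι → (ι → Bool) → ℝ)
    (hXj : ∀ j, DependsOn (X j) (A j : Set ι))
    (hW : ∀ j, ∀ k ∉ N j, DependsOn (X k) ((A j : Set ι)ᶜ))
    (hjB : ∀ j, DependsOn (X j) (B j : Set ι))
    (hZ : ∀ j, ∀ k ∈ N j, DependsOn (X k) (B j : Set ι))
    (hW' : ∀ j, ∀ k ∉ N' j, DependsOn (X k) ((B j : Set ι)ᶜ))
    (hmean : ∀ j, bavg (fun b => (X j b : ℂ)) = 0) (K Q : ℝ) (hK : 0 ≤ K)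
    (hXK : ∀ k b, |X k b| ≤ K) (hQ : ∀ j, ((N' j).card : ℝ) * K ≤ Q)
    (M : ℝ) (hM : M = Fintype.card ι) (hM0 : 0 < M) (V : ℝ) (hV0 : 0 ≤ V)
    (hV : bavg (fun b => (((∑ k, X k b) ^ 2 : ℝ) : ℂ)) = ((V * M : ℝ) : ℂ)) :
    ‖bavg (fun b => Complex.exp (Complex.I * (((Real.sqrt M)⁻¹ * ∑ k, X k b : ℝ) : ℂ)))
      - (Real.exp (-V / 2) : ℂ)‖ ≤ 4 * K * Q ^ 2 * (Real.sqrt M)⁻¹ := by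
  set φ : ℝ → ℂ := fun l => bavg (fun b => Complex.exp (Complex.I * ((l * ∑ k, X k b : ℝ) : ℂ)))
    with hφ
  set φ' : ℝ → ℂ := fun l => bavg (fun b => Complex.I * (∑ k, X k b : ℝ) *
    Complex.exp (Complex.I * ((l * ∑ k, X k b : ℝ) : ℂ))) with hφ'
  have hd : ∀ l, HasDerivAt φ (φ' l) l := fun l => hasDerivAt_bavg_exp (fun b => ∑ k, X k b) l
  have hode : ∀ l, 0 ≤ l → ‖φ' l + (l * M * V : ℝ) * φ l‖ ≤ M * (4 * K * Q ^ 2 * l ^ 2) := by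
    intro l hl
    have e1 : φ' l = Complex.I * ∑ j, bavg (fun b => (X j b : ℂ) *
        Complex.exp (Complex.I * ((l * ∑ k, X k b : ℝ) : ℂ))) := by
      rw [← bavg_sum, ← bavg_const_mul]
      simp only [hφ']
      congr 1; funext b
      rw [← Finset.sum_mul]; push_cast; ring
    have e2 : ((V * M : ℝ) : ℂ) = ∑ j, bavg (fun b => ((X j b * ∑ k, X k b : ℝ) : ℂ)) := by
      rw [← hV, ← bavg_sum]
      congr 1; funext b
      rw [sq, Finset.sum_mul]
      push_cast; rfl
    have e3 : φ' l + (l * M * V : ℝ) * φ l = Complex.I * ∑ j, (bavg (fun b => (X j b : ℂ) *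
        Complex.exp (Complex.I * ((l * ∑ k, X k b : ℝ) : ℂ)))
        - Complex.I * l * bavg (fun b => ((X j b * ∑ k, X k b : ℝ) : ℂ)) * φ l) := by
      rw [Finset.sum_sub_distrib, ← Finset.sum_mul, ← Finset.mul_sum, ← e2, mul_sub, ← e1]
      have : Complex.I * Complex.I = -1 := Complex.I_mul_I
      push_cast
      linear_combination ((l : ℂ) * M * V * φ l) * this
    rw [e3, norm_mul, Complex.norm_I, one_mul]
    refine (norm_sum_le _ _).trans ?_
    refine (Finset.sum_le_sum (fun j _ => tikh_local (A j) (N j) (N' j) (hNN j) X j (hXj j) (hW j)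
      (B j) (hjB j) (hZ j) (hW' j) (hmean j) K Q hK hXK (hQ j) l hl)).trans ?_
    rw [Finset.sum_const, nsmul_eq_mul, Finset.card_univ, hM]
  set r := (Real.sqrt M)⁻¹ with hr
  have hr0 : 0 < r := by positivity
  have hr2 : r ^ 2 * M = 1 := by
    rw [hr, inv_pow, Real.sq_sqrt hM0.le]; field_simp
  set h : ℝ → ℂ := fun l => (Real.exp (M * V * l ^ 2 / 2) : ℂ) * φ l with hh
  have hhd : ∀ l, HasDerivAt h ((Real.exp (M * V * l ^ 2 / 2) : ℂ) * (φ' l + (l * M * V : ℝ) * φ l)) l := by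
    intro l
    have h1 : HasDerivAt (fun l : ℝ => Real.exp (M * V * l ^ 2 / 2))
        (Real.exp (M * V * l ^ 2 / 2) * (l * M * V)) l := by
      have : HasDerivAt (fun l : ℝ => M * V * l ^ 2 / 2) (l * M * V) l := by
        have := ((hasDerivAt_pow 2 l).const_mul (M * V)).div_const 2
        refine this.congr_deriv ?_
        push_cast; ring
      exact this.exp
    have := h1.ofReal_comp.mul (hd l)
    refine this.congr_deriv ?_
    push_cast; ring
  have hbound : ∀ l ∈ Set.Icc (0:ℝ) r, ‖(Real.exp (M * V * l ^ 2 / 2) : ℂ) * (φ' l + (l * M * V : ℝ) * φ l)‖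
      ≤ Real.exp (V / 2) * (4 * K * Q ^ 2) := by
    intro l hl
    rw [norm_mul, Complex.norm_real, Real.norm_eq_abs, abs_of_pos (Real.exp_pos _)]
    have hl2 : M * l ^ 2 ≤ 1 := by
      have : l ^ 2 ≤ r ^ 2 := pow_le_pow_left₀ hl.1 hl.2 2
      nlinarith
    refine mul_le_mul ?_ ((hode l hl.1).trans ?_) (norm_nonneg _) (Real.exp_pos _).le
    · apply Real.exp_le_exp.2
      nlinarith
    · have : 0 ≤ 4 * K * Q ^ 2 := by positivity
      nlinarith
  have hmv := Convex.norm_image_sub_le_of_norm_hasDerivWithin_le (f := h)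
    (fun l _ => (hhd l).hasDerivWithinAt) hbound (convex_Icc 0 r)
    (Set.left_mem_Icc.2 hr0.le) (Set.right_mem_Icc.2 hr0.le)
  have h0 : h 0 = 1 := by
    simp only [hh, hφ]
    simp [bavg_const]
  have hr' : h r = (Real.exp (V / 2) : ℂ) * φ r := by
    simp only [hh]
    have : M * V * r ^ 2 / 2 = V / 2 := by linear_combination V / 2 * hr2
    rw [this]
  rw [h0, hr', sub_zero, Real.norm_eq_abs, abs_of_pos hr0] at hmv
  have hfin : φ r - (Real.exp (-V / 2) : ℂ) = (Real.exp (-V / 2) : ℂ) * ((Real.exp (V / 2) : ℂ) * φ r - 1) := by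
    rw [mul_sub, ← mul_assoc, ← Complex.ofReal_mul, ← Real.exp_add]
    have : -V / 2 + V / 2 = 0 := by ring
    rw [this]; simp
  show ‖φ r - (Real.exp (-V / 2) : ℂ)‖ ≤ _
  rw [hfin, norm_mul, Complex.norm_real, Real.norm_eq_abs, abs_of_pos (Real.exp_pos _)]
  calc _ ≤ Real.exp (-V / 2) * (Real.exp (V / 2) * (4 * K * Q ^ 2) * r) := by gcongr
    _ = (Real.exp (-V / 2) * Real.exp (V / 2)) * (4 * K * Q ^ 2 * r) := by ring
    _ = _ := by rw [← Real.exp_add]; have : -V / 2 + V / 2 = 0 := by ring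
                rw [this, Real.exp_zero, one_mul]

end tikh


/-- number of `true` letters of a word -/
def ups {ι : Type} [Fintype ι] [DecidableEq ι] (b : ι → Bool) : ℕ :=
  (Finset.univ.filter (fun i => b i = true)).card

/-- real average over all words -/
def ravg {ι : Type} [Fintype ι] [DecidableEq ι] (F : (ι → Bool) → ℝ) : ℝ :=
  (∑ b, F b) / 2 ^ (Fintype.card ι)

/-- sum over the words with `k` letters `true` -/
def csum {ι : Type} [Fintype ι] [DecidableEq ι] (k : ℕ) (F : (ι → Bool) → ℝ) : ℝ :=
  ∑ b ∈ Finset.univ.filter (fun b : ι → Bool => ups b = k), F b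

/-- indicator of a cylinder -/
def cyl {ι : Type} [DecidableEq ι] (U D : Finset ι) (b : ι → Bool) : ℝ :=
  if (∀ a ∈ U, b a = true) ∧ (∀ a ∈ D, b a = false) then 1 else 0

section cyls

variable {ι : Type} [Fintype ι] [DecidableEq ι]

lemma bavg_ofReal (F : (ι → Bool) → ℝ) : bavg (fun b => (F b : ℂ)) = ((ravg F : ℝ) : ℂ) := by
  unfold bavg ravg; push_cast; rfl

lemma ravg_add (F G : (ι → Bool) → ℝ) :
    ravg (fun b => F b + G b) = ravg F + ravg G := by
  unfold ravg; rw [Finset.sum_add_distrib, add_div]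

lemma ravg_sub (F G : (ι → Bool) → ℝ) :
    ravg (fun b => F b - G b) = ravg F - ravg G := by
  unfold ravg; rw [Finset.sum_sub_distrib, sub_div]

lemma ravg_const_mul (c : ℝ) (F : (ι → Bool) → ℝ) :
    ravg (fun b => c * F b) = c * ravg F := by
  unfold ravg; rw [← Finset.mul_sum, mul_div_assoc]

lemma ravg_sum {κ : Type} (s : Finset κ) (F : κ → (ι → Bool) → ℝ) :
    ravg (fun b => ∑ k ∈ s, F k b) = ∑ k ∈ s, ravg (F k) := by
  unfold ravg; rw [Finset.sum_comm, Finset.sum_div]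

lemma ravg_const (c : ℝ) : ravg (fun _ : ι → Bool => c) = c := by
  unfold ravg
  simp [Finset.sum_const, Fintype.card_pi]

lemma ravg_nonneg (F : (ι → Bool) → ℝ) (h : ∀ b, 0 ≤ F b) : 0 ≤ ravg F := by
  unfold ravg
  have := Finset.sum_nonneg (fun b (_ : b ∈ Finset.univ) => h b)
  positivity

lemma ravg_mono (F G : (ι → Bool) → ℝ) (h : ∀ b, F b ≤ G b) : ravg F ≤ ravg G := by
  unfold ravg
  gcongr
  exact h _

lemma ravg_mul_of_dep (F G : (ι → Bool) → ℝ) (A : Finset ι)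
    (hF : DependsOn F (A : Set ι)) (hG : DependsOn G ((A : Set ι)ᶜ)) :
    ravg (fun b => F b * G b) = ravg F * ravg G := by
  have h := bavg_mul_of_dep (fun b => (F b : ℂ)) (fun b => (G b : ℂ)) A
    (fun x y hxy => by simp only [hF hxy]) (fun x y hxy => by simp only [hG hxy])
  rw [bavg_ofReal, bavg_ofReal] at h
  have h2 : (fun b => (F b : ℂ) * (G b : ℂ)) = fun b => ((F b * G b : ℝ) : ℂ) := by
    funext b; push_cast; rfl
  rw [h2, bavg_ofReal] at h
  exact_mod_cast h

lemma csum_sum {κ : Type} (k : ℕ) (s : Finset κ) (F : κ → (ι → Bool) → ℝ) :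
    csum k (fun b => ∑ j ∈ s, F j b) = ∑ j ∈ s, csum k (F j) := by
  unfold csum; rw [Finset.sum_comm]

lemma cyl_sum_uncond (U D : Finset ι) (hUD : Disjoint U D) :
    ∑ b, cyl U D b = 2 ^ (Fintype.card ι - (U.card + D.card)) := by
  have hs : ∑ b, cyl U D b = ((Finset.univ.filter (fun b : ι → Bool =>
      (∀ a ∈ U, b a = true) ∧ (∀ a ∈ D, b a = false))).card : ℝ) := by
    rw [Finset.card_filter]; push_cast
    exact Finset.sum_congr rfl fun b _ => by unfold cyl; congr
  rw [hs]
  have : (Finset.univ.filter (fun b : ι → Bool => (∀ a ∈ U, b a = true) ∧ (∀ a ∈ D, b a = false))).card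
      = ((U ∪ D)ᶜ.powerset).card := by
    apply Finset.card_bij' (fun b _ => Finset.univ.filter (fun i => b i = true) \ U)
      (fun s _ => fun a => decide (a ∈ U ∪ s))
    · intro b hb
      simp only [Finset.mem_filter, Finset.mem_univ, true_and] at hb
      simp only [Finset.mem_powerset]
      intro a ha
      simp only [Finset.mem_sdiff, Finset.mem_filter, Finset.mem_univ, true_and] at ha
      simp only [Finset.mem_compl, Finset.mem_union, not_or]
      refine ⟨ha.2, fun h => ?_⟩
      have := hb.2 a h
      rw [ha.1] at this; exact absurd this (by simp)
    · intro s hs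
      simp only [Finset.mem_powerset] at hs
      simp only [Finset.mem_filter, Finset.mem_univ, true_and]
      refine ⟨fun a ha => by simp [ha], fun a ha => ?_⟩
      have h1 : a ∉ U := fun h => Finset.disjoint_left.1 hUD h ha
      have h2 : a ∉ s := fun h => by
        have := hs h
        simp [ha] at this
      simp [h1, h2]
    · intro b hb
      simp only [Finset.mem_filter, Finset.mem_univ, true_and] at hb
      funext a
      by_cases h : a ∈ U
      · simp [h, hb.1 a h]
      · simp [h]
    · intro s hs
      simp only [Finset.mem_powerset] at hs
      ext a
      by_cases h : a ∈ U
      · have : a ∉ s := fun h' => by have := hs h'; simp [h] at this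
        simp [h, this]
      · simp [h]
  rw [this, Finset.card_powerset, Finset.card_compl, Finset.card_union_of_disjoint hUD]
  push_cast; rfl

lemma cyl_ravg (U D : Finset ι) (hUD : Disjoint U D) :
    ravg (cyl U D) = (1 / 2) ^ (U.card + D.card) := by
  unfold ravg
  rw [cyl_sum_uncond U D hUD]
  have hle : U.card + D.card ≤ Fintype.card ι := by
    rw [← Finset.card_union_of_disjoint hUD]; exact Finset.card_le_univ _
  have : (2:ℝ) ^ (Fintype.card ι) = 2 ^ (Fintype.card ι - (U.card + D.card)) * 2 ^ (U.card + D.card) := by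
    rw [← pow_add]; congr 1; omega
  rw [this, div_pow, one_pow]
  field_simp

lemma cyl_csum (U D : Finset ι) (hUD : Disjoint U D) (k : ℕ) (hk : U.card ≤ k) :
    csum k (cyl U D) = ((Fintype.card ι - (U.card + D.card)).choose (k - U.card) : ℕ) := by
  have hs : csum k (cyl U D) = (((Finset.univ.filter (fun b : ι → Bool => ups b = k)).filter
      (fun b : ι → Bool => (∀ a ∈ U, b a = true) ∧ (∀ a ∈ D, b a = false))).card : ℝ) := by
    rw [Finset.card_filter]; push_cast
    exact Finset.sum_congr rfl fun b _ => by unfold cyl; congr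
  rw [hs, Finset.filter_filter]
  congr 1
  have : (U ∪ D)ᶜ.card = Fintype.card ι - (U.card + D.card) := by
    rw [Finset.card_compl, Finset.card_union_of_disjoint hUD]
  rw [← this, ← Finset.card_powersetCard]
  have hsub : ∀ b : ι → Bool, (∀ a ∈ U, b a = true) → U ⊆ Finset.univ.filter (fun i => b i = true) := by
    intro b hb a ha
    simp [hb a ha]
  apply Finset.card_bij' (fun b _ => Finset.univ.filter (fun i => b i = true) \ U)
      (fun s _ => fun a => decide (a ∈ U ∪ s))
  · intro b hb
    simp only [Finset.mem_filter, Finset.mem_univ, true_and] at hb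
    simp only [Finset.mem_powersetCard]
    constructor
    · intro a ha
      simp only [Finset.mem_sdiff, Finset.mem_filter, Finset.mem_univ, true_and] at ha
      simp only [Finset.mem_compl, Finset.mem_union, not_or]
      refine ⟨ha.2, fun h => ?_⟩
      have := hb.2.2 a h
      rw [ha.1] at this; exact absurd this (by simp)
    · rw [Finset.card_sdiff_of_subset (hsub b hb.2.1)]
      have := hb.1
      unfold ups at this
      rw [this]
  · intro s hs
    simp only [Finset.mem_powersetCard] at hs
    simp only [Finset.mem_filter, Finset.mem_univ, true_and]
    have hdis : Disjoint U s := by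
      rw [Finset.disjoint_right]
      intro a ha h
      have := hs.1 ha
      simp [h] at this
    refine ⟨?_, fun a ha => by simp [ha], fun a ha => ?_⟩
    · unfold ups
      have : Finset.univ.filter (fun i => decide (i ∈ U ∪ s) = true) = U ∪ s := by
        ext a; simp
      rw [this, Finset.card_union_of_disjoint hdis, hs.2]; omega
    · have h1 : a ∉ U := fun h => Finset.disjoint_left.1 hUD h ha
      have h2 : a ∉ s := fun h => by
        have := hs.1 h
        simp [ha] at this
      simp [h1, h2]
  · intro b hb
    simp only [Finset.mem_filter, Finset.mem_univ, true_and] at hb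
    funext a
    by_cases h : a ∈ U
    · simp [h, hb.2.1 a h]
    · simp [h]
  · intro s hs
    simp only [Finset.mem_powersetCard] at hs
    ext a
    by_cases h : a ∈ U
    · have : a ∉ s := fun h' => by have := hs.1 h'; simp [h] at this
      simp [h, this]
    · simp [h]

end cyls

/-! ### asymptotics of conditional cylinder probabilities -/

/-- conditional probability of a cylinder -/
def kap (n u d : ℕ) : ℝ :=
  ((2 * n + 1 - (u + d)).choose (n + 1 - u) : ℕ) / ((2 * n + 1).choose (n + 1) : ℕ)

/-- the correction factor -/
def gfun (u d : ℕ) (e : ℝ) : ℝ :=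
  (∏ j ∈ Finset.range u, (1 + (1 - 2 * (j : ℝ)) * e)) *
    (∏ j ∈ Finset.range d, (1 + (-1 - 2 * (j : ℝ)) * e)) /
      (∏ j ∈ Finset.range (u + d), (1 + (-(j : ℝ)) * e))

lemma hasDerivAt_prod_lin (c : ℕ → ℝ) (k : ℕ) :
    HasDerivAt (fun e : ℝ => ∏ j ∈ Finset.range k, (1 + c j * e)) (∑ j ∈ Finset.range k, c j) 0 := by
  induction k with
  | zero => simpa using hasDerivAt_const (0:ℝ) (1:ℝ)
  | succ k ih =>
    simp only [Finset.prod_range_succ, Finset.sum_range_succ]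
    have h1 : HasDerivAt (fun e : ℝ => 1 + c k * e) (c k) 0 := by
      simpa using ((hasDerivAt_id (0:ℝ)).const_mul (c k)).const_add 1
    have := ih.mul h1
    refine this.congr_deriv ?_
    simp

lemma sum_odd1 (u : ℕ) : ∑ j ∈ Finset.range u, (1 - 2 * (j : ℝ)) = 2 * u - u ^ 2 := by
  induction u with
  | zero => simp
  | succ u ih => rw [Finset.sum_range_succ, ih]; push_cast; ring

lemma sum_odd2 (u : ℕ) : ∑ j ∈ Finset.range u, (-1 - 2 * (j : ℝ)) = - (u:ℝ) ^ 2 := by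
  induction u with
  | zero => simp
  | succ u ih => rw [Finset.sum_range_succ, ih]; push_cast; ring

lemma sum_odd3 (u : ℕ) : ∑ j ∈ Finset.range u, (-(j : ℝ)) = - ((u:ℝ) * (u - 1) / 2) := by
  induction u with
  | zero => simp
  | succ u ih => rw [Finset.sum_range_succ, ih]; push_cast; ring

lemma gfun_zero (u d : ℕ) : gfun u d 0 = 1 := by simp [gfun]

lemma hasDerivAt_gfun (u d : ℕ) :
    HasDerivAt (gfun u d) (2 * u - u ^ 2 - d ^ 2 + ((u:ℝ) + d) * (u + d - 1) / 2) 0 := by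
  have h1 := hasDerivAt_prod_lin (fun j => 1 - 2 * (j : ℝ)) u
  have h2 := hasDerivAt_prod_lin (fun j => -1 - 2 * (j : ℝ)) d
  have h3 := hasDerivAt_prod_lin (fun j => -(j : ℝ)) (u + d)
  have := (h1.mul h2).div h3 (by simp)
  unfold gfun
  refine this.congr_deriv ?_
  simp only [sum_odd1, sum_odd2, sum_odd3]
  simp
  ring

lemma gfun_second (u d : ℕ) :
    HasDerivAt (fun e => gfun (2 * u) (2 * d) e - gfun u d e ^ 2) (-((u:ℝ) - d) ^ 2) 0 := by
  have := (hasDerivAt_gfun (2 * u) (2 * d)).sub ((hasDerivAt_gfun u d).pow 2)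
  refine this.congr_deriv ?_
  rw [gfun_zero]
  push_cast; ring

lemma choose_desc (M k u d : ℕ) (hk : u ≤ k) (hd : k + d ≤ M) :
    (M - (u + d)).choose (k - u) * M.descFactorial (u + d)
      = M.choose k * k.descFactorial u * (M - k).descFactorial d := by
  have h1 : (M - (u + d)).choose (k - u) * (k - u).factorial * (M - k - d).factorial
      = (M - (u + d)).factorial := by
    have := Nat.choose_mul_factorial_mul_factorial (n := M - (u+d)) (k := k - u) (by omega)
    have e : M - (u + d) - (k - u) = M - k - d := by omega
    rwa [e] at this
  have h2 := Nat.choose_mul_factorial_mul_factorial (n := M) (k := k) (by omega)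
  have h3 := Nat.factorial_mul_descFactorial (n := M) (k := u + d) (by omega)
  have h4 := Nat.factorial_mul_descFactorial (n := k) (k := u) hk
  have h5 := Nat.factorial_mul_descFactorial (n := M - k) (k := d) (by omega)
  have p1 : 0 < (k - u).factorial := Nat.factorial_pos _
  have p2 : 0 < (M - k - d).factorial := Nat.factorial_pos _
  apply Nat.eq_of_mul_eq_mul_right (Nat.mul_pos p1 p2)
  calc _ = ((M - (u + d)).choose (k - u) * (k - u).factorial * (M - k - d).factorial)
        * M.descFactorial (u + d) := by ring
    _ = M.factorial := by rw [h1, h3]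
    _ = M.choose k * ((k - u).factorial * k.descFactorial u) *
        ((M - k - d).factorial * (M - k).descFactorial d) := by rw [h4, h5, h2]
    _ = _ := by ring

lemma descFactorial_real (n k : ℕ) (h : k ≤ n) :
    (n.descFactorial k : ℝ) = ∏ j ∈ Finset.range k, ((n : ℝ) - j) := by
  rw [Nat.descFactorial_eq_prod_range]
  push_cast
  apply Finset.prod_congr rfl
  intro j hj
  have : j ≤ n := by have := Finset.mem_range.1 hj; omega
  push_cast [Nat.cast_sub this]; rfl

lemma kap_eq (n u d : ℕ) (h : u + d ≤ n) :
    kap n u d = (1 / 2) ^ (u + d) * gfun u d (1 / (2 * n + 1)) := by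
  have hM : (0:ℝ) < 2 * n + 1 := by positivity
  have hc := choose_desc (2 * n + 1) (n + 1) u d (by omega) (by omega)
  have e : 2 * n + 1 - (n + 1) = n := by omega
  rw [e] at hc
  have hcR : (((2 * n + 1 - (u + d)).choose (n + 1 - u) : ℕ) : ℝ) *
      ((2 * n + 1).descFactorial (u + d) : ℕ) =
      ((2 * n + 1).choose (n + 1) : ℕ) * ((n + 1).descFactorial u : ℕ) * (n.descFactorial d : ℕ) := by
    exact_mod_cast hc
  rw [descFactorial_real _ _ (by omega), descFactorial_real _ _ (by omega),
    descFactorial_real _ _ (by omega)] at hcR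
  have f1 : ∏ j ∈ Finset.range u, (((n + 1 : ℕ) : ℝ) - j)
      = ((2 * n + 1) / 2 : ℝ) ^ u * ∏ j ∈ Finset.range u, (1 + (1 - 2 * (j : ℝ)) * (1 / (2 * n + 1))) := by
    rw [← Finset.card_range u, ← Finset.prod_const, Finset.card_range, ← Finset.prod_mul_distrib]
    apply Finset.prod_congr rfl
    intro j _
    push_cast; field_simp; ring
  have f2 : ∏ j ∈ Finset.range d, ((n : ℝ) - j)
      = ((2 * n + 1) / 2 : ℝ) ^ d * ∏ j ∈ Finset.range d, (1 + (-1 - 2 * (j : ℝ)) * (1 / (2 * n + 1))) := by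
    rw [← Finset.card_range d, ← Finset.prod_const, Finset.card_range, ← Finset.prod_mul_distrib]
    apply Finset.prod_congr rfl
    intro j _
    field_simp; ring
  have f3 : ∏ j ∈ Finset.range (u + d), (((2 * n + 1 : ℕ) : ℝ) - j)
      = (2 * n + 1 : ℝ) ^ (u + d) * ∏ j ∈ Finset.range (u + d), (1 + (-(j : ℝ)) * (1 / (2 * n + 1))) := by
    rw [← Finset.card_range (u + d), ← Finset.prod_const, Finset.card_range, ← Finset.prod_mul_distrib]
    apply Finset.prod_congr rfl
    intro j _
    push_cast; field_simp; ring
  have f3pos : 0 < ∏ j ∈ Finset.range (u + d), (1 + (-(j : ℝ)) * (1 / (2 * n + 1))) := by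
    apply Finset.prod_pos
    intro j hj
    have hj := Finset.mem_range.1 hj
    have : (j : ℝ) < 2 * n + 1 := by
      have : j < 2 * n + 1 := by omega
      exact_mod_cast this
    have : (j : ℝ) * (1 / (2 * n + 1)) < 1 := by
      rw [mul_one_div, div_lt_one hM]; exact this
    linarith
  rw [f1, f2, f3] at hcR
  have hch : (0:ℝ) < ((2 * n + 1).choose (n + 1) : ℕ) := by
    exact_mod_cast Nat.choose_pos (by omega)
  unfold kap gfun
  rw [div_eq_iff hch.ne', ← mul_div_assoc, div_mul_eq_mul_div, eq_div_iff f3pos.ne']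
  have hp : (2 * n + 1 : ℝ) ^ (u + d) ≠ 0 := by positivity
  apply mul_right_cancel₀ hp
  rw [div_pow, div_pow] at hcR
  rw [div_pow, one_pow, pow_add 2]
  generalize (∏ j ∈ Finset.range (u + d), (1 + (-(j : ℝ)) * (1 / (2 * n + 1)))) = x3 at *
  generalize (∏ j ∈ Finset.range d, (1 + (-1 - 2 * (j : ℝ)) * (1 / (2 * n + 1)))) = x2 at *
  generalize (∏ j ∈ Finset.range u, (1 + (1 - 2 * (j : ℝ)) * (1 / (2 * n + 1)))) = x1 at *
  rw [mul_assoc, mul_comm x3, hcR, pow_add]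
  field_simp

lemma tendsto_inv_odd : Tendsto (fun n : ℕ => (1 / (2 * (n:ℝ) + 1))) atTop (nhds 0) := by
  apply Tendsto.div_atTop tendsto_const_nhds
  apply tendsto_atTop_add_const_right
  exact tendsto_natCast_atTop_atTop.const_mul_atTop (by norm_num)

lemma kap_tendsto (u d : ℕ) : Tendsto (fun n => kap n u d) atTop (nhds ((1 / 2) ^ (u + d))) := by
  have h1 : Tendsto (fun n : ℕ => (1 / 2 : ℝ) ^ (u + d) * gfun u d (1 / (2 * n + 1))) atTop
      (nhds ((1 / 2) ^ (u + d) * gfun u d 0)) := by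
    apply Tendsto.const_mul
    exact (hasDerivAt_gfun u d).continuousAt.tendsto.comp tendsto_inv_odd
  rw [gfun_zero, mul_one] at h1
  refine h1.congr' ?_
  filter_upwards [eventually_ge_atTop (u + d)] with n hn
  rw [kap_eq n u d hn]

lemma kap_second (u d : ℕ) :
    Tendsto (fun n : ℕ => (2 * (n:ℝ) + 1) * (kap n (2 * u) (2 * d) - kap n u d ^ 2)) atTop
      (nhds (-(((1 / 2) ^ (u + d)) ^ 2 * ((u:ℝ) - d) ^ 2))) := by
  have h := (gfun_second u d).tendsto_slope_zero
  have h2 : Tendsto (fun n : ℕ => (1 / (2 * (n:ℝ) + 1))) atTop (nhdsWithin 0 {0}ᶜ) := by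
    rw [tendsto_nhdsWithin_iff]
    refine ⟨tendsto_inv_odd, Eventually.of_forall fun n => ?_⟩
    have : (0:ℝ) < 2 * n + 1 := by positivity
    simp; positivity
  have h3 := (h.comp h2).const_mul (((1 / 2 : ℝ) ^ (u + d)) ^ 2)
  have e : -(((1 / 2 : ℝ) ^ (u + d)) ^ 2 * ((u:ℝ) - d) ^ 2)
      = ((1 / 2 : ℝ) ^ (u + d)) ^ 2 * -((u:ℝ) - d) ^ 2 := by ring
  rw [e]
  refine h3.congr' ?_
  filter_upwards [eventually_ge_atTop (2 * u + 2 * d)] with n hn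
  rw [kap_eq n (2 * u) (2 * d) hn, kap_eq n u d (by omega)]
  have e2 : 2 * u + 2 * d = (u + d) * 2 := by ring
  rw [e2, pow_mul]
  simp only [Function.comp, gfun_zero, zero_add, smul_eq_mul, one_div, inv_inv]
  ring


/-- indicator of a cyclic occurrence of `P` at `x` -/
def occ (M ℓ : ℕ) (P : ℕ → Bool) (x : ZMod M) (b : ZMod M → Bool) : ℝ :=
  if ∀ c < ℓ, b (x + (c : ZMod M)) = P c then 1 else 0

def win (M ℓ : ℕ) (x : ZMod M) : Finset (ZMod M) :=
  (Finset.range ℓ).image (fun c : ℕ => x + (c : ZMod M))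

def winB (M ℓ : ℕ) (P : ℕ → Bool) (v : Bool) (x : ZMod M) : Finset (ZMod M) :=
  ((Finset.range ℓ).filter (fun c => P c = v)).image (fun c : ℕ => x + (c : ZMod M))

def pcount (ℓ : ℕ) (P : ℕ → Bool) (v : Bool) : ℕ :=
  ((Finset.range ℓ).filter (fun c => P c = v)).card

def ext {L : ℕ} (w : Fin L → Bool) (c : ℕ) : Bool := if h : c < L then w ⟨c, h⟩ else false

/-- linear occurrence indicator -/
def locc (ℓ : ℕ) (P : ℕ → Bool) (h : ℕ) (v : ℕ → Bool) : ℝ :=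
  if ∀ c < ℓ, v (h + c) = P c then 1 else 0

def grho (ℓ : ℕ) (P : ℕ → Bool) (v : ℕ → Bool) : ℝ :=
  ∑ h ∈ Finset.range (2 * ℓ - 1), locc ℓ P (ℓ - 1) v * locc ℓ P h v

def rhoP (ℓ : ℕ) (P : ℕ → Bool) : ℝ := ravg (fun w : Fin (3 * ℓ) → Bool => grho ℓ P (ext w))

def bitv {ι : Type} (y : ι) (b : ι → Bool) : ℝ := if b y = true then 1 else 0

def nearP (M ℓ : ℕ) (x : ZMod M) : Finset (ZMod M) :=
  (Finset.range (2 * ℓ - 1)).image (fun h : ℕ => x - ((ℓ - 1 : ℕ) : ZMod M) + (h : ZMod M))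

lemma pcount_add (ℓ : ℕ) (P : ℕ → Bool) : pcount ℓ P true + pcount ℓ P false = ℓ := by
  unfold pcount
  have := Finset.card_filter_add_card_filter_not (s := Finset.range ℓ) (fun c => P c = true)
  simpa using this

lemma zmod_add_inj {M L : ℕ} (hL : L ≤ M) (x : ZMod M) :
    Set.InjOn (fun c : ℕ => x + (c : ZMod M)) (Finset.range L : Set ℕ) := by
  intro c hc c' hc' h
  simp only [Finset.coe_range, Set.mem_Iio] at hc hc'
  have h' : (c : ZMod M) = (c' : ZMod M) := add_left_cancel h
  rw [ZMod.natCast_eq_natCast_iff'] at h'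
  rwa [Nat.mod_eq_of_lt (by omega), Nat.mod_eq_of_lt (by omega)] at h'

section occs

variable {M ℓ : ℕ} (P : ℕ → Bool)

lemma occ_nonneg (x : ZMod M) (b : ZMod M → Bool) : 0 ≤ occ M ℓ P x b := by
  unfold occ; split_ifs <;> norm_num

lemma occ_le_one (x : ZMod M) (b : ZMod M → Bool) : occ M ℓ P x b ≤ 1 := by
  unfold occ; split_ifs <;> norm_num

lemma occ_sq (x : ZMod M) (b : ZMod M → Bool) : occ M ℓ P x b * occ M ℓ P x b = occ M ℓ P x b := by
  unfold occ; split_ifs <;> norm_num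

lemma occ_eq_cyl (x : ZMod M) (b : ZMod M → Bool) :
    occ M ℓ P x b = cyl (winB M ℓ P true x) (winB M ℓ P false x) b := by
  unfold occ cyl winB
  congr 1
  apply propext
  simp only [Finset.mem_image, Finset.mem_filter, Finset.mem_range, forall_exists_index, and_imp,
    forall_apply_eq_imp_iff₂]
  constructor
  · intro h
    exact ⟨fun a c hc hp e => by rw [← e, h c hc, hp], fun a c hc hp e => by rw [← e, h c hc, hp]⟩
  · rintro ⟨h1, h2⟩ c hc
    cases hp : P c
    · exact h2 _ c hc hp rfl
    · exact h1 _ c hc hp rfl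

lemma winB_card (hM : ℓ ≤ M) (v : Bool) (x : ZMod M) :
    (winB M ℓ P v x).card = pcount ℓ P v := by
  unfold winB pcount
  apply Finset.card_image_of_injOn
  exact (zmod_add_inj hM x).mono (by intro c; simp; tauto)

lemma winB_subset (v : Bool) (x : ZMod M) : winB M ℓ P v x ⊆ win M ℓ x := by
  unfold winB win
  exact Finset.image_subset_image (Finset.filter_subset _ _)

lemma winB_disj (hM : ℓ ≤ M) (x : ZMod M) :
    Disjoint (winB M ℓ P true x) (winB M ℓ P false x) := by
  rw [Finset.disjoint_left]
  intro a ha hb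
  unfold winB at ha hb
  simp only [Finset.mem_image, Finset.mem_filter, Finset.mem_range] at ha hb
  obtain ⟨c, ⟨hc, hp⟩, rfl⟩ := ha
  obtain ⟨c', ⟨hc', hp'⟩, h⟩ := hb
  have := zmod_add_inj hM x (by simpa using hc') (by simpa using hc) h
  subst this
  rw [hp] at hp'
  exact absurd hp' (by simp)

lemma occ_dep (x : ZMod M) : DependsOn (occ M ℓ P x) (win M ℓ x : Set (ZMod M)) := by
  intro b b' h
  unfold occ
  congr 1
  apply propext
  have : ∀ c < ℓ, b (x + (c : ZMod M)) = b' (x + (c : ZMod M)) := by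
    intro c hc
    apply h
    simp only [win, Finset.coe_image, Set.mem_image, Finset.coe_range, Set.mem_Iio]
    exact ⟨c, hc, rfl⟩
  constructor
  · intro h1 c hc; rw [← this c hc, h1 c hc]
  · intro h1 c hc; rw [this c hc, h1 c hc]

lemma dep_compl_of_disj {ι : Type} {β : Type} {F : (ι → Bool) → β} {A B : Finset ι}
    (hF : DependsOn F (B : Set ι)) (h : Disjoint A B) : DependsOn F ((A : Set ι)ᶜ) := by
  intro x y hxy
  apply hF
  intro i hi
  apply hxy
  intro hA
  exact Finset.disjoint_left.1 h hA hi

lemma near_disj (hℓ : 1 ≤ ℓ) (x y : ZMod M) (h : y ∉ nearP M ℓ x) :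
    Disjoint (win M ℓ x) (win M ℓ y) := by
  rw [Finset.disjoint_left]
  intro a ha hb
  apply h
  unfold win at ha hb
  simp only [Finset.mem_image, Finset.mem_range] at ha hb
  obtain ⟨c, hc, rfl⟩ := ha
  obtain ⟨c', hc', h'⟩ := hb
  unfold nearP
  simp only [Finset.mem_image, Finset.mem_range]
  refine ⟨c + (ℓ - 1 - c'), by omega, ?_⟩
  have hy : y = x + c - c' := by rw [← h']; ring
  rw [hy, Nat.cast_add, Nat.cast_sub (by omega : c' ≤ ℓ - 1)]
  ring

lemma near_card (hM : 3 * ℓ ≤ M) (x : ZMod M) : (nearP M ℓ x).card = 2 * ℓ - 1 := by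
  unfold nearP
  rw [Finset.card_image_of_injOn, Finset.card_range]
  exact zmod_add_inj (by omega) _

variable [NeZero M]

lemma occ_ravg (hM : ℓ ≤ M) (x : ZMod M) : ravg (occ M ℓ P x) = (1 / 2) ^ ℓ := by
  have : occ M ℓ P x = cyl (winB M ℓ P true x) (winB M ℓ P false x) := funext (occ_eq_cyl P x)
  rw [this, cyl_ravg _ _ (winB_disj P hM x), winB_card P hM, winB_card P hM, pcount_add]

lemma occ_csum (hM : ℓ ≤ M) (x : ZMod M) (k : ℕ) (hk : pcount ℓ P true ≤ k) :
    csum k (occ M ℓ P x) =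
      ((M - (pcount ℓ P true + pcount ℓ P false)).choose (k - pcount ℓ P true) : ℕ) := by
  have : occ M ℓ P x = cyl (winB M ℓ P true x) (winB M ℓ P false x) := funext (occ_eq_cyl P x)
  rw [this, cyl_csum _ _ (winB_disj P hM x) _ (by rwa [winB_card P hM]), winB_card P hM,
    winB_card P hM, ZMod.card]

lemma occ_mul_ravg (hM : ℓ ≤ M) (x y : ZMod M) (h : Disjoint (win M ℓ x) (win M ℓ y)) :
    ravg (fun b => occ M ℓ P x b * occ M ℓ P y b) = ((1 / 2) ^ ℓ) ^ 2 := by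
  rw [ravg_mul_of_dep _ _ (win M ℓ x) (occ_dep P x) (dep_compl_of_disj (occ_dep P y) h),
    occ_ravg P hM, occ_ravg P hM, sq]

lemma occ_mul_csum (hM : ℓ ≤ M) (x y : ZMod M) (h : Disjoint (win M ℓ x) (win M ℓ y))
    (k : ℕ) (hk : 2 * pcount ℓ P true ≤ k) :
    csum k (fun b => occ M ℓ P x b * occ M ℓ P y b) =
      ((M - (2 * pcount ℓ P true + 2 * pcount ℓ P false)).choose (k - 2 * pcount ℓ P true) : ℕ) := by
  have hd : ∀ v v', Disjoint (winB M ℓ P v x) (winB M ℓ P v' y) := fun v v' =>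
    Finset.disjoint_of_subset_left (winB_subset P v x)
      (Finset.disjoint_of_subset_right (winB_subset P v' y) h)
  have e : (fun b => occ M ℓ P x b * occ M ℓ P y b) =
      cyl (winB M ℓ P true x ∪ winB M ℓ P true y) (winB M ℓ P false x ∪ winB M ℓ P false y) := by
    funext b
    rw [occ_eq_cyl, occ_eq_cyl]
    unfold cyl
    have hh : ∀ (p q r : Prop) (_ : Decidable p) (_ : Decidable q) (_ : Decidable r), (p ∧ q ↔ r) →
        (if p then (1 : ℝ) else 0) * (if q then (1 : ℝ) else 0) = if r then (1 : ℝ) else 0 := by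
      intro p q r _ _ _ hpq
      by_cases hp : p <;> by_cases hq : q <;> simp [← hpq, hp, hq]
    refine hh _ _ _ _ _ _ ?_
    simp only [Finset.mem_union]
    constructor
    · rintro ⟨⟨h1, h2⟩, h3, h4⟩
      exact ⟨fun a ha => ha.elim (h1 a) (h3 a), fun a ha => ha.elim (h2 a) (h4 a)⟩
    · rintro ⟨h1, h2⟩
      exact ⟨⟨fun a ha => h1 a (Or.inl ha), fun a ha => h2 a (Or.inl ha)⟩,
        fun a ha => h1 a (Or.inr ha), fun a ha => h2 a (Or.inr ha)⟩
  have c1 : ∀ v, (winB M ℓ P v x ∪ winB M ℓ P v y).card = 2 * pcount ℓ P v := by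
    intro v
    rw [Finset.card_union_of_disjoint (hd v v), winB_card P hM, winB_card P hM]; ring
  rw [e, cyl_csum, c1, c1, ZMod.card]
  · rw [Finset.disjoint_union_left, Finset.disjoint_union_right, Finset.disjoint_union_right]
    exact ⟨⟨winB_disj P hM x, hd _ _⟩, (hd _ _).symm, winB_disj P hM y⟩
  · rw [c1]; exact hk

/-- words read through a window -/
lemma window_decomp {L : ℕ} (hL : L ≤ M) (g : (ℕ → Bool) → ℝ)
    (hg : ∀ v v' : ℕ → Bool, (∀ c < L, v c = v' c) → g v = g v') (x : ZMod M) (b : ZMod M → Bool) :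
    g (fun c => b (x + (c : ZMod M))) =
      ∑ w : Fin L → Bool, g (ext w) * occ M L (ext w) x b := by
  rw [Finset.sum_eq_single (fun c : Fin L => b (x + ((c : ℕ) : ZMod M)))]
  · have h1 : ∀ c < L, ext (fun c : Fin L => b (x + ((c : ℕ) : ZMod M))) c = b (x + (c : ZMod M)) := by
      intro c hc; simp [ext, hc]
    have : occ M L (ext (fun c : Fin L => b (x + ((c : ℕ) : ZMod M)))) x b = 1 := by
      unfold occ
      rw [if_pos]
      intro c hc; rw [h1 c hc]
    rw [this, mul_one]
    apply hg
    intro c hc; rw [h1 c hc]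
  · intro w _ hw
    have : occ M L (ext w) x b = 0 := by
      unfold occ
      rw [if_neg]
      intro h
      apply hw
      funext c
      rw [h c c.2]
      simp [ext]
    rw [this, mul_zero]
  · simp

lemma pcount_ext {L : ℕ} (w : Fin L → Bool) : pcount L (ext w) true = ups w := by
  unfold pcount ups
  symm
  apply Finset.card_bij (fun (c : Fin L) _ => (c : ℕ))
  · intro a ha
    simp only [Finset.mem_filter, Finset.mem_univ, true_and] at ha
    simp [ext, ha]
  · intro a _ a' _ h; exact Fin.ext h
  · intro c hc
    simp only [Finset.mem_filter, Finset.mem_range] at hc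
    refine ⟨⟨c, hc.1⟩, ?_, rfl⟩
    simpa [ext, hc.1] using hc.2

lemma window_csum {L : ℕ} (hL : L ≤ M) (g : (ℕ → Bool) → ℝ)
    (hg : ∀ v v' : ℕ → Bool, (∀ c < L, v c = v' c) → g v = g v') (x : ZMod M) (k : ℕ) (hk : L ≤ k) :
    csum k (fun b : ZMod M → Bool => g (fun c => b (x + (c : ZMod M)))) =
      ∑ w : Fin L → Bool, g (ext w) * ((M - (pcount L (ext w) true +
        pcount L (ext w) false)).choose (k - pcount L (ext w) true) : ℕ) := by
  have : (fun b : ZMod M → Bool => g (fun c => b (x + (c : ZMod M)))) =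
      fun b => ∑ w : Fin L → Bool, g (ext w) * occ M L (ext w) x b :=
    funext (window_decomp hL g hg x)
  rw [this, csum_sum]
  apply Finset.sum_congr rfl
  intro w _
  have h2 := occ_csum (ext w) hL x k (by have := pcount_add L (ext w); omega)
  rw [← h2]
  unfold csum
  rw [Finset.mul_sum]

lemma window_ravg {L : ℕ} (hL : L ≤ M) (g : (ℕ → Bool) → ℝ)
    (hg : ∀ v v' : ℕ → Bool, (∀ c < L, v c = v' c) → g v = g v') (x : ZMod M) :
    ravg (fun b : ZMod M → Bool => g (fun c => b (x + (c : ZMod M)))) =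
      ravg (fun w : Fin L → Bool => g (ext w)) := by
  have : (fun b : ZMod M → Bool => g (fun c => b (x + (c : ZMod M)))) =
      fun b => ∑ w : Fin L → Bool, g (ext w) * occ M L (ext w) x b :=
    funext (window_decomp hL g hg x)
  rw [this, ravg_sum]
  have h2 : ∀ w : Fin L → Bool, ravg (fun b => g (ext w) * occ M L (ext w) x b)
      = g (ext w) * (1 / 2) ^ L := fun w => by rw [ravg_const_mul, occ_ravg _ hL]
  rw [Finset.sum_congr rfl (fun w _ => h2 w), ← Finset.sum_mul]
  unfold ravg
  rw [Fintype.card_fin]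
  simp [div_eq_mul_inv]

lemma grho_dep (hℓ : 1 ≤ ℓ) (v v' : ℕ → Bool) (h : ∀ c < 3 * ℓ, v c = v' c) :
    grho ℓ P v = grho ℓ P v' := by
  have key : ∀ h' < 2 * ℓ, locc ℓ P h' v = locc ℓ P h' v' := by
    intro h' hh
    unfold locc
    congr 1
    apply propext
    constructor
    · intro h1 c hc; rw [← h _ (by omega), h1 c hc]
    · intro h1 c hc; rw [h _ (by omega), h1 c hc]
  unfold grho
  apply Finset.sum_congr rfl
  intro h' hh
  have := Finset.mem_range.1 hh
  rw [key _ (by omega), key _ (by omega)]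

lemma near_sum (hℓ : 1 ≤ ℓ) (hM : 3 * ℓ ≤ M) (x : ZMod M) (b : ZMod M → Bool) :
    ∑ y ∈ nearP M ℓ x, occ M ℓ P x b * occ M ℓ P y b =
      grho ℓ P (fun c => b (x - ((ℓ - 1 : ℕ) : ZMod M) + (c : ZMod M))) := by
  unfold nearP grho
  rw [Finset.sum_image (zmod_add_inj (by omega) _)]
  apply Finset.sum_congr rfl
  intro h _
  congr 1
  · unfold occ locc
    congr 1
    apply propext
    refine forall₂_congr fun c hc => ?_
    push_cast
    rw [show x - ((ℓ - 1 : ℕ) : ZMod M) + (((ℓ - 1 : ℕ) : ZMod M) + (c : ZMod M)) = x + c by ring]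
  · unfold occ locc
    congr 1
    apply propext
    refine forall₂_congr fun c hc => ?_
    push_cast
    rw [add_assoc]

lemma near_ravg (hℓ : 1 ≤ ℓ) (hM : 3 * ℓ ≤ M) (x : ZMod M) :
    ravg (fun b => ∑ y ∈ nearP M ℓ x, occ M ℓ P x b * occ M ℓ P y b) = rhoP ℓ P := by
  rw [funext (near_sum P hℓ hM x)]
  exact window_ravg (L := 3 * ℓ) hM (grho ℓ P) (grho_dep P hℓ) _

lemma Y_sq (x : ZMod M → ℝ) (N : ZMod M → Finset (ZMod M)) :
    (∑ y, x y) ^ 2 = ∑ i, ((∑ y ∈ N i, x i * x y) + ∑ y ∈ (N i)ᶜ, x i * x y) := by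
  rw [sq, Finset.sum_mul_sum]
  apply Finset.sum_congr rfl
  intro i _
  rw [Finset.sum_add_sum_compl]

lemma near_compl_card (hM : 3 * ℓ ≤ M) (hℓ : 1 ≤ ℓ) (x : ZMod M) :
    (((nearP M ℓ x)ᶜ.card : ℕ) : ℝ) = M - (2 * ℓ - 1) := by
  rw [Finset.card_compl, near_card hM, ZMod.card, Nat.cast_sub (by omega), Nat.cast_sub (by omega)]
  push_cast; ring

lemma second_moment (hℓ : 1 ≤ ℓ) (hM : 3 * ℓ ≤ M) :
    ravg (fun b => (∑ x, occ M ℓ P x b) ^ 2) =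
      M * (rhoP ℓ P + (M - (2 * ℓ - 1)) * ((1 / 2) ^ ℓ) ^ 2) := by
  have e : (fun b => (∑ x, occ M ℓ P x b) ^ 2) = fun b => ∑ i, ((∑ y ∈ nearP M ℓ i,
      occ M ℓ P i b * occ M ℓ P y b) + ∑ y ∈ (nearP M ℓ i)ᶜ, occ M ℓ P i b * occ M ℓ P y b) :=
    funext fun b => Y_sq _ _
  rw [e, ravg_sum]
  have h : ∀ i : ZMod M, ravg (fun b => (∑ y ∈ nearP M ℓ i,
      occ M ℓ P i b * occ M ℓ P y b) + ∑ y ∈ (nearP M ℓ i)ᶜ, occ M ℓ P i b * occ M ℓ P y b) =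
      rhoP ℓ P + (M - (2 * ℓ - 1)) * ((1 / 2) ^ ℓ) ^ 2 := by
    intro i
    rw [ravg_add, near_ravg P hℓ hM, ravg_sum]
    rw [Finset.sum_congr rfl (fun y hy => occ_mul_ravg P (by omega) i y
      (near_disj hℓ i y (Finset.mem_compl.1 hy)))]
    rw [Finset.sum_const, nsmul_eq_mul, near_compl_card hM hℓ]
  rw [Finset.sum_congr rfl (fun i _ => h i), Finset.sum_const, nsmul_eq_mul, Finset.card_univ, ZMod.card]

lemma mean_csum (hM : ℓ ≤ M) (k : ℕ) (hk : ℓ ≤ k) :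
    csum k (fun b => ∑ x, occ M ℓ P x b) =
      M * ((M - (pcount ℓ P true + pcount ℓ P false)).choose (k - pcount ℓ P true) : ℕ) := by
  rw [csum_sum, Finset.sum_congr rfl (fun x _ => occ_csum P hM x k
    (by have := pcount_add ℓ P; omega)), Finset.sum_const, nsmul_eq_mul, Finset.card_univ, ZMod.card]

lemma second_csum (hℓ : 1 ≤ ℓ) (hM : 3 * ℓ ≤ M) (k : ℕ) (hk : 3 * ℓ ≤ k) :
    csum k (fun b => (∑ x, occ M ℓ P x b) ^ 2) =
      M * ((∑ w : Fin (3 * ℓ) → Bool, grho ℓ P (ext w) * ((M - (pcount (3 * ℓ) (ext w) true +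
        pcount (3 * ℓ) (ext w) false)).choose (k - pcount (3 * ℓ) (ext w) true) : ℕ)) +
       (M - (2 * ℓ - 1)) *
        ((M - (2 * pcount ℓ P true + 2 * pcount ℓ P false)).choose (k - 2 * pcount ℓ P true) : ℕ)) := by
  have e : (fun b => (∑ x, occ M ℓ P x b) ^ 2) = fun b => ∑ i, ((∑ y ∈ nearP M ℓ i,
      occ M ℓ P i b * occ M ℓ P y b) + ∑ y ∈ (nearP M ℓ i)ᶜ, occ M ℓ P i b * occ M ℓ P y b) :=
    funext fun b => Y_sq _ _
  rw [e, csum_sum]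
  have hadd : ∀ F G : (ZMod M → Bool) → ℝ, csum k (fun b => F b + G b) = csum k F + csum k G := by
    intro F G; unfold csum; rw [Finset.sum_add_distrib]
  have h : ∀ i : ZMod M, csum k (fun b => (∑ y ∈ nearP M ℓ i,
      occ M ℓ P i b * occ M ℓ P y b) + ∑ y ∈ (nearP M ℓ i)ᶜ, occ M ℓ P i b * occ M ℓ P y b) =
      (∑ w : Fin (3 * ℓ) → Bool, grho ℓ P (ext w) * ((M - (pcount (3 * ℓ) (ext w) true +
        pcount (3 * ℓ) (ext w) false)).choose (k - pcount (3 * ℓ) (ext w) true) : ℕ)) +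
       (M - (2 * ℓ - 1)) *
        ((M - (2 * pcount ℓ P true + 2 * pcount ℓ P false)).choose (k - 2 * pcount ℓ P true) : ℕ) := by
    intro i
    rw [hadd, csum_sum k (nearP M ℓ i)ᶜ]
    rw [Finset.sum_congr rfl (fun y hy => occ_mul_csum P (by omega) i y
        (near_disj hℓ i y (Finset.mem_compl.1 hy)) k (by have := pcount_add ℓ P; omega))]
    rw [Finset.sum_const, nsmul_eq_mul, near_compl_card hM hℓ]
    rw [funext (near_sum P hℓ hM i), window_csum hM (grho ℓ P) (grho_dep P hℓ) _ k hk]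
  rw [Finset.sum_congr rfl (fun i _ => h i), Finset.sum_const, nsmul_eq_mul, Finset.card_univ, ZMod.card]

end occs


section clt

variable {M ℓ : ℕ} (P : ℕ → Bool)

def Xv (M ℓ : ℕ) (P : ℕ → Bool) (t ψ : ℝ) (x : ZMod M) (b : ZMod M → Bool) : ℝ :=
  t * (occ M ℓ P x b - (1 / 2) ^ ℓ) + ψ * (bitv x b - 1 / 2)

def dlt (ℓ : ℕ) (P : ℕ → Bool) : ℝ := (pcount ℓ P true : ℝ) - pcount ℓ P false

def v0 (ℓ : ℕ) (P : ℕ → Bool) : ℝ :=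
  rhoP ℓ P - (2 * ℓ - 1) * ((1 / 2) ^ ℓ) ^ 2 - ((1 / 2) ^ ℓ) ^ 2 * dlt ℓ P ^ 2

def Vq (ℓ : ℕ) (P : ℕ → Bool) (t ψ : ℝ) : ℝ :=
  1 / 4 * (ψ + 2 * t * (1 / 2) ^ ℓ * dlt ℓ P) ^ 2 + t ^ 2 * v0 ℓ P

lemma mem_win_self (hℓ : 1 ≤ ℓ) (x : ZMod M) : x ∈ win M ℓ x := by
  unfold win
  exact Finset.mem_image.2 ⟨0, Finset.mem_range.2 (by omega), by simp⟩

lemma bitv_dep (x : ZMod M) : DependsOn (bitv x) ({x} : Set (ZMod M)) := by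
  intro b b' h
  unfold bitv
  rw [h x rfl]

lemma Xv_dep (hℓ : 1 ≤ ℓ) (t ψ : ℝ) (x : ZMod M) :
    DependsOn (Xv M ℓ P t ψ x) (win M ℓ x : Set (ZMod M)) := by
  intro b b' h
  unfold Xv
  rw [occ_dep P x h, bitv_dep x (fun i hi => h i (by
    rw [Set.mem_singleton_iff.1 hi]; exact mem_win_self hℓ x))]

lemma bitv_abs (x : ZMod M) (b : ZMod M → Bool) : |bitv x b - 1 / 2| = 1 / 2 := by
  unfold bitv; split_ifs
  · rw [abs_of_nonneg] <;> norm_num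
  · rw [abs_of_nonpos] <;> norm_num

lemma Xv_bound (t ψ : ℝ) (x : ZMod M) (b : ZMod M → Bool) : |Xv M ℓ P t ψ x b| ≤ |t| + |ψ| := by
  unfold Xv
  refine (abs_add_le _ _).trans ?_
  rw [abs_mul, abs_mul, bitv_abs]
  have h1 : |occ M ℓ P x b - (1 / 2) ^ ℓ| ≤ 1 := by
    have := occ_nonneg (ℓ := ℓ) P x b
    have := occ_le_one (ℓ := ℓ) P x b
    have : (1 / 2 : ℝ) ^ ℓ ≤ 1 := pow_le_one₀ (by norm_num) (by norm_num)
    have : (0 : ℝ) ≤ (1 / 2 : ℝ) ^ ℓ := by positivity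
    rw [abs_le]; constructor <;> linarith
  nlinarith [abs_nonneg t, abs_nonneg ψ]

variable [NeZero M]

lemma bitv_ravg (x : ZMod M) : ravg (bitv x) = 1 / 2 := by
  have : bitv x = cyl {x} (∅ : Finset (ZMod M)) := by
    funext b
    unfold bitv cyl
    simp
  rw [this, cyl_ravg _ _ (by simp)]; simp

lemma beta_ravg (x : ZMod M) : ravg (fun b => bitv x b - 1 / 2) = 0 := by
  rw [ravg_sub, ravg_const]
  have := bitv_ravg x
  rw [this]; norm_num

lemma Xv_mean (hM : ℓ ≤ M) (t ψ : ℝ) (x : ZMod M) : ravg (Xv M ℓ P t ψ x) = 0 := by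
  unfold Xv
  rw [ravg_add, ravg_const_mul, ravg_const_mul, beta_ravg, ravg_sub, ravg_const]
  rw [occ_ravg P hM]
  ring

lemma beta_dep (x : ZMod M) : DependsOn (fun b => bitv x b - 1 / 2) (({x} : Finset (ZMod M)) : Set (ZMod M)) := by
  intro b b' h
  simp only
  rw [bitv_dep x (fun i hi => h i (by simpa using hi))]

lemma beta_cov (x y : ZMod M) :
    ravg (fun b => (bitv x b - 1 / 2) * (bitv y b - 1 / 2)) = if x = y then 1 / 4 else 0 := by
  by_cases h : x = y
  · subst h
    rw [if_pos rfl]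
    have : (fun b => (bitv x b - 1 / 2) * (bitv x b - 1 / 2)) = fun _ => (1 / 4 : ℝ) := by
      funext b
      unfold bitv
      split_ifs <;> norm_num
    rw [this, ravg_const]
  · rw [if_neg h, ravg_mul_of_dep _ _ {x} (beta_dep x) (dep_compl_of_disj (beta_dep y) (by simpa using h)),
      beta_ravg, zero_mul]

lemma S_var : ravg (fun b : ZMod M → Bool => (∑ x, (bitv x b - 1 / 2)) ^ 2) = M / 4 := by
  simp only [sq, Finset.sum_mul_sum]
  rw [ravg_sum]
  simp only [ravg_sum, beta_cov]
  simp [ZMod.card]; ring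

lemma occ_beta (hM : ℓ ≤ M) (x : ZMod M) (b : ZMod M → Bool) :
    ∑ y ∈ win M ℓ x, occ M ℓ P x b * (bitv y b - 1 / 2) = dlt ℓ P / 2 * occ M ℓ P x b := by
  unfold win
  rw [Finset.sum_image (zmod_add_inj hM x)]
  by_cases h : ∀ c < ℓ, b (x + (c : ZMod M)) = P c
  · have h1 : occ M ℓ P x b = 1 := by unfold occ; rw [if_pos h]
    rw [h1]
    have h2 : ∀ c ∈ Finset.range ℓ, 1 * (bitv (x + (c : ZMod M)) b - 1 / 2)
        = 1 / 2 * (if P c = true then 1 else 0) - 1 / 2 * (if P c = false then (1:ℝ) else 0) := by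
      intro c hc
      unfold bitv
      rw [h c (Finset.mem_range.1 hc)]
      cases P c <;> norm_num
    rw [Finset.sum_congr rfl h2, Finset.sum_sub_distrib, ← Finset.mul_sum, ← Finset.mul_sum]
    unfold dlt pcount
    simp only [Finset.sum_boole]
    ring
  · have h1 : occ M ℓ P x b = 0 := by unfold occ; rw [if_neg h]
    rw [h1]; simp

lemma cov_YS (hM : ℓ ≤ M) :
    ravg (fun b => (∑ x, occ M ℓ P x b) * (∑ y, (bitv y b - 1 / 2))) =
      M * ((1 / 2) ^ ℓ * dlt ℓ P / 2) := by
  simp only [Finset.sum_mul_sum]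
  rw [ravg_sum]
  have h : ∀ x : ZMod M, ravg (fun b => ∑ y, occ M ℓ P x b * (bitv y b - 1 / 2)) =
      (1 / 2) ^ ℓ * dlt ℓ P / 2 := by
    intro x
    have e : (fun b => ∑ y, occ M ℓ P x b * (bitv y b - 1 / 2)) = fun b =>
        dlt ℓ P / 2 * occ M ℓ P x b + ∑ y ∈ (win M ℓ x)ᶜ, occ M ℓ P x b * (bitv y b - 1 / 2) := by
      funext b
      rw [← occ_beta P hM, Finset.sum_add_sum_compl]
    rw [e, ravg_add, ravg_const_mul, ravg_sum]
    rw [Finset.sum_eq_zero, occ_ravg P hM]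
    · ring
    · intro y hy
      rw [ravg_mul_of_dep _ _ (win M ℓ x) (occ_dep P x) (dep_compl_of_disj (beta_dep y)
        (by simpa using hy)), beta_ravg, mul_zero]
  rw [Finset.sum_congr rfl (fun i _ => h i), Finset.sum_const, nsmul_eq_mul, Finset.card_univ, ZMod.card]

lemma Y_mean (hM : ℓ ≤ M) : ravg (fun b => ∑ x, occ M ℓ P x b) = M * (1 / 2) ^ ℓ := by
  rw [ravg_sum, Finset.sum_congr rfl (fun i _ => occ_ravg P hM i), Finset.sum_const, nsmul_eq_mul,
    Finset.card_univ, ZMod.card]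

lemma S_mean : ravg (fun b : ZMod M → Bool => ∑ x, (bitv x b - 1 / 2)) = 0 := by
  rw [ravg_sum]; simp only [beta_ravg]; simp

lemma Xv_sum (t ψ : ℝ) (b : ZMod M → Bool) : ∑ x, Xv M ℓ P t ψ x b =
    t * (∑ x, occ M ℓ P x b) - t * (M * (1 / 2) ^ ℓ) + ψ * ∑ x, (bitv x b - 1 / 2) := by
  unfold Xv
  rw [Finset.sum_add_distrib, ← Finset.mul_sum, ← Finset.mul_sum, Finset.sum_sub_distrib]
  simp only [Finset.sum_const, Finset.card_univ, ZMod.card, nsmul_eq_mul]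
  ring

lemma Xv_second (hℓ : 1 ≤ ℓ) (hM : 3 * ℓ ≤ M) (t ψ : ℝ) :
    ravg (fun b => (∑ x, Xv M ℓ P t ψ x b) ^ 2) = Vq ℓ P t ψ * M := by
  have e : (fun b => (∑ x, Xv M ℓ P t ψ x b) ^ 2) = fun b =>
      (t ^ 2 * ((∑ x, occ M ℓ P x b) ^ 2) + ψ ^ 2 * ((∑ x, (bitv x b - 1 / 2)) ^ 2)) +
      ((2 * t * ψ) * ((∑ x, occ M ℓ P x b) * (∑ x, (bitv x b - 1 / 2))) +
      ((- 2 * t ^ 2 * (M * (1 / 2) ^ ℓ)) * (∑ x, occ M ℓ P x b) +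
      (- 2 * t * ψ * (M * (1 / 2) ^ ℓ) * (∑ x, (bitv x b - 1 / 2)) +
        t ^ 2 * (M * (1 / 2) ^ ℓ) ^ 2))) := by
    funext b
    rw [Xv_sum]; ring
  rw [e, ravg_add, ravg_add, ravg_add, ravg_add, ravg_add, ravg_const, ravg_const_mul,
    ravg_const_mul, ravg_const_mul, ravg_const_mul, ravg_const_mul, S_mean, Y_mean P (by omega),
    cov_YS P (by omega), S_var, second_moment P hℓ hM]
  unfold Vq v0
  ring

lemma Vq_nonneg_of (hℓ : 1 ≤ ℓ) (t ψ : ℝ) : 0 ≤ Vq ℓ P t ψ := by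
  haveI : NeZero (3 * ℓ) := ⟨by omega⟩
  have h := Xv_second (M := 3 * ℓ) P hℓ le_rfl t ψ
  have h2 : 0 ≤ ravg (fun b => (∑ x, Xv (3 * ℓ) ℓ P t ψ x b) ^ 2) :=
    ravg_nonneg _ fun b => sq_nonneg _
  rw [h] at h2
  have : (0:ℝ) < ((3 * ℓ : ℕ) : ℝ) := by exact_mod_cast (by omega : 0 < 3 * ℓ)
  exact nonneg_of_mul_nonneg_left h2 this

lemma nearP_card_le (L : ℕ) (x : ZMod M) : (nearP M L x).card ≤ 2 * L := by
  unfold nearP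
  refine Finset.card_image_le.trans ?_
  simp

lemma clt_word (hℓ : 1 ≤ ℓ) (hM : 3 * ℓ ≤ M) (t ψ : ℝ) :
    ‖bavg (fun b => Complex.exp (Complex.I * (((Real.sqrt M)⁻¹ * ∑ k, Xv M ℓ P t ψ k b : ℝ) : ℂ)))
      - (Real.exp (-Vq ℓ P t ψ / 2) : ℂ)‖ ≤
      4 * (|t| + |ψ|) * ((6 * ℓ) * (|t| + |ψ|)) ^ 2 * (Real.sqrt M)⁻¹ := by
  have hdep := Xv_dep (M := M) P hℓ t ψ
  have hB : ∀ j : ZMod M, ∀ k ∈ nearP M ℓ j,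
      win M ℓ k ⊆ win M (3 * ℓ) (j - ((ℓ - 1 : ℕ) : ZMod M)) := by
    intro j k hk
    unfold nearP at hk
    simp only [Finset.mem_image, Finset.mem_range] at hk
    obtain ⟨h, hh, rfl⟩ := hk
    intro a ha
    unfold win at ha ⊢
    simp only [Finset.mem_image, Finset.mem_range] at ha ⊢
    obtain ⟨c, hc, rfl⟩ := ha
    exact ⟨h + c, by omega, by push_cast; ring⟩
  have hself : ∀ j : ZMod M, j ∈ nearP M ℓ j := by
    intro j
    unfold nearP
    simp only [Finset.mem_image, Finset.mem_range]
    exact ⟨ℓ - 1, by omega, by ring⟩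
  refine tikh_clt (fun j => win M ℓ j)
    (fun j => nearP M (3 * ℓ) (j - ((ℓ - 1 : ℕ) : ZMod M)))
    (fun j => win M (3 * ℓ) (j - ((ℓ - 1 : ℕ) : ZMod M))) (fun j => nearP M ℓ j)
    ?_ (Xv M ℓ P t ψ) hdep ?_ ?_ ?_ ?_ ?_ (|t| + |ψ|) _ (by positivity) (Xv_bound P t ψ) ?_ M
      (by rw [ZMod.card]) (by exact_mod_cast (by omega : 0 < M)) (Vq ℓ P t ψ)
      (Vq_nonneg_of P hℓ t ψ) ?_
  · intro j k hk
    unfold nearP at hk ⊢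
    simp only [Finset.mem_image, Finset.mem_range] at hk ⊢
    obtain ⟨h, hh, rfl⟩ := hk
    exact ⟨3 * ℓ - 1 + h, by omega, by push_cast; ring⟩
  · intro j k hk
    exact dep_compl_of_disj (hdep k) (near_disj hℓ j k hk)
  · intro j a b h
    exact hdep j (fun i hi => h i (hB j j (hself j) hi))
  · intro j k hk a b h
    exact hdep k (fun i hi => h i (hB j k hk hi))
  · intro j k hk
    refine dep_compl_of_disj (hdep k) ?_
    refine Finset.disjoint_of_subset_right ?_ (near_disj (by omega) _ k hk)
    unfold win
    exact Finset.image_subset_image (by intro c; simp; omega)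
  · intro j
    rw [bavg_ofReal, Xv_mean P (by omega)]; simp
  · intro j
    have := nearP_card_le (M := M) (3 * ℓ) (j - ((ℓ - 1 : ℕ) : ZMod M))
    have h2 : ((nearP M (3 * ℓ) (j - ((ℓ - 1 : ℕ) : ZMod M))).card : ℝ) ≤ 6 * ℓ := by
      have : ((nearP M (3 * ℓ) (j - ((ℓ - 1 : ℕ) : ZMod M))).card : ℝ) ≤ ((2 * (3 * ℓ) : ℕ) : ℝ) := by
        exact_mod_cast this
      push_cast at this; linarith
    gcongr
  · rw [bavg_ofReal (fun b => (∑ k, Xv M ℓ P t ψ k b) ^ 2), Xv_second P hℓ hM]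

end clt


section dom

variable {ι : Type} [Fintype ι] [DecidableEq ι]

lemma bavg_update (F : (ι → Bool) → ℂ) (x : ι) :
    bavg F = bavg (fun b => (F (Function.update b x true) + F (Function.update b x false)) / 2) := by
  have inv : ∀ b : ι → Bool, Function.update (Function.update b x (!(b x))) x
      (!((Function.update b x (!(b x))) x)) = b := by
    intro b
    simp
  have h : ∑ b : ι → Bool, F b = ∑ b : ι → Bool, F (Function.update b x (!(b x))) := by
    symm
    exact Function.Bijective.sum_comp (Function.Involutive.bijective (f := fun b : ι → Bool =>
      Function.update b x (!(b x))) inv) F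
  unfold bavg
  congr 1
  have h2 : ∀ b : ι → Bool, (F (Function.update b x true) + F (Function.update b x false)) / 2 =
      F b / 2 + F (Function.update b x (!(b x))) / 2 := by
    intro b
    cases hb : b x
    · have : Function.update b x false = b := by rw [← hb]; simp
      rw [this]; simp; ring
    · have : Function.update b x true = b := by rw [← hb]; simp
      rw [this]; simp; ring
  rw [Finset.sum_congr rfl (fun b _ => h2 b), Finset.sum_add_distrib, ← Finset.sum_div,
    ← Finset.sum_div, ← h]
  ring

lemma dep_update {β : Type} {F : (ι → Bool) → β} {S : Set ι} (hF : DependsOn F S) {x : ι}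
    (hx : x ∉ S) (b : ι → Bool) (v : Bool) : F (Function.update b x v) = F b := by
  apply hF
  intro i hi
  rw [Function.update_of_ne]
  rintro rfl; exact hx hi

lemma dom_ind (r : ℝ) (hr : 0 ≤ r) (g : ι → (ι → Bool) → ℂ) (T : Finset ι) :
    ∀ (G : (ι → Bool) → ℂ) (K : ℝ), DependsOn G ((T : Set ι)ᶜ) → (∀ b, ‖G b‖ ≤ K) →
    (∀ y ∈ T, DependsOn (g y) (insert y ((T : Set ι)ᶜ))) →
    (∀ y ∈ T, ∀ b, ‖g y (Function.update b y true) + g y (Function.update b y false)‖ ≤ 2 * r) →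
    ‖bavg (fun b => G b * ∏ y ∈ T, g y b)‖ ≤ K * r ^ T.card := by
  induction T using Finset.induction_on with
  | empty =>
    intro G K _ hK _ _
    simpa using bavg_norm_le G K hK
  | insert x T hx ih =>
    intro G K hG hK hg hb
    rw [bavg_update _ x]
    have e : (fun b => (G (Function.update b x true) * ∏ y ∈ insert x T, g y (Function.update b x true)
        + G (Function.update b x false) * ∏ y ∈ insert x T, g y (Function.update b x false)) / 2) =
        fun b => (G b * ((g x (Function.update b x true) + g x (Function.update b x false)) / 2)) *
          ∏ y ∈ T, g y b := by
      funext b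
      have hp : ∀ v, ∏ y ∈ T, g y (Function.update b x v) = ∏ y ∈ T, g y b := by
        intro v
        apply Finset.prod_congr rfl
        intro y hy
        refine dep_update (hg y (Finset.mem_insert_of_mem hy)) ?_ b v
        have : x ≠ y := by rintro rfl; exact hx hy
        simp [this]
      have hGu : ∀ v, G (Function.update b x v) = G b := fun v => dep_update hG (by simp) b v
      rw [Finset.prod_insert hx, Finset.prod_insert hx, hp, hp, hGu, hGu]
      ring
    rw [e, Finset.card_insert_of_notMem hx, pow_succ', ← mul_assoc]
    apply ih
    · intro b b' h
      have h' : ∀ i ∈ (((insert x T : Finset ι) : Set ι))ᶜ, b i = b' i := by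
        intro i hi; apply h; intro hT; apply hi; simp at hT ⊢; tauto
      have hgx : ∀ v, g x (Function.update b x v) = g x (Function.update b' x v) := by
        intro v
        apply hg x (Finset.mem_insert_self x T)
        intro i hi
        by_cases hix : i = x
        · subst hix; simp
        · rw [Function.update_of_ne hix, Function.update_of_ne hix]
          rcases hi with hi | hi
          · exact absurd hi hix
          · exact h' i hi
      simp only
      rw [hG h', hgx, hgx]
    · intro b
      rw [norm_mul, norm_div]
      have h1 := hK b
      have h2 := hb x (Finset.mem_insert_self x T) b
      have : ‖g x (Function.update b x true) + g x (Function.update b x false)‖ / ‖(2:ℂ)‖ ≤ r := by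
        rw [div_le_iff₀ (by simp)]; simpa [mul_comm] using h2
      gcongr
      exact (norm_nonneg _).trans h1
    · intro y hy b b' h
      apply hg y (Finset.mem_insert_of_mem hy)
      intro i hi
      apply h
      rcases hi with hi | hi
      · exact Or.inl hi
      · right; intro hT; apply hi; simp at hT ⊢; tauto
    · intro y hy b
      exact hb y (Finset.mem_insert_of_mem hy) b

lemma cos_bound (z : ℝ) (hz : |z| ≤ 3 * Real.pi / 2) : Real.cos z ≤ 1 - z ^ 2 / 25 := by
  have hpi := Real.pi_gt_three
  have hpi' := Real.pi_lt_d2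
  by_cases h : |z| ≤ Real.pi
  · have h1 := Real.cos_le_one_sub_mul_cos_sq h
    have : 1 / 25 ≤ 2 / Real.pi ^ 2 := by
      rw [div_le_div_iff₀ (by norm_num) (by positivity)]; nlinarith
    nlinarith [sq_nonneg z]
  · push Not at h
    have h1 : Real.cos |z| ≤ 0 :=
      Real.cos_nonpos_of_pi_div_two_le_of_le (by linarith) (by linarith)
    rw [Real.cos_abs] at h1
    have : z ^ 2 ≤ (3 * Real.pi / 2) ^ 2 := by
      rw [← sq_abs z]; gcongr
    nlinarith

lemma norm_exp_add (a c : ℝ) (h : |a - c| ≤ 3 * Real.pi / 2) :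
    ‖Complex.exp (Complex.I * a) + Complex.exp (Complex.I * c)‖ ≤
      2 * Real.exp (-(a - c) ^ 2 / 100) := by
  have e : Complex.exp (Complex.I * a) + Complex.exp (Complex.I * c) =
      Complex.exp (Complex.I * c) * (1 + Complex.exp (((a - c : ℝ) : ℂ) * Complex.I)) := by
    rw [mul_add, ← Complex.exp_add]
    push_cast; ring_nf
  rw [e, norm_mul, mul_comm Complex.I, Complex.norm_exp_ofReal_mul_I, one_mul]
  set z := a - c
  have h2 : ‖1 + Complex.exp ((z : ℂ) * Complex.I)‖ ^ 2 = 2 + 2 * Real.cos z := by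
    rw [Complex.sq_norm, Complex.normSq_apply]
    simp only [Complex.add_re, Complex.add_im, Complex.one_re, Complex.one_im,
      Complex.exp_ofReal_mul_I_re, Complex.exp_ofReal_mul_I_im]
    nlinarith [Real.sin_sq_add_cos_sq z]
  have h3 := cos_bound z h
  have h4 := Real.add_one_le_exp (-z ^ 2 / 50)
  have h5 : (2 * Real.exp (-z ^ 2 / 100)) ^ 2 = 4 * Real.exp (-z ^ 2 / 50) := by
    rw [mul_pow, ← Real.exp_nat_mul]; ring_nf
  refine (sq_le_sq₀ (norm_nonneg _) (by positivity)).1 ?_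
  rw [h2, h5]
  linarith

end dom

section dom2

variable {M ℓ : ℕ} (P : ℕ → Bool) [NeZero M]

def spec (M ℓ : ℕ) : Finset (ZMod M) :=
  (Finset.range (M / ℓ)).image (fun i : ℕ => ((ℓ * i : ℕ) : ZMod M))

lemma spec_card (hℓ : 1 ≤ ℓ) : (spec M ℓ).card = M / ℓ := by
  unfold spec
  rw [Finset.card_image_of_injOn, Finset.card_range]
  intro i hi j hj h
  simp only [Finset.coe_range, Set.mem_Iio] at hi hj
  simp only at h
  have key : ∀ i < M / ℓ, ℓ * i < M := by
    intro i hi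
    calc ℓ * i < ℓ * (M / ℓ) := Nat.mul_lt_mul_of_pos_left hi (by omega)
      _ ≤ M := Nat.mul_div_le M ℓ
  rw [ZMod.natCast_eq_natCast_iff', Nat.mod_eq_of_lt (key i hi), Nat.mod_eq_of_lt (key j hj)] at h
  exact Nat.eq_of_mul_eq_mul_left (by omega) h

lemma spec_win (hℓ : 1 ≤ ℓ) (x y y' : ZMod M) (hy : y ∈ spec M ℓ) (hy' : y' ∈ spec M ℓ)
    (h : y ∈ win M ℓ x) (h' : y' ∈ win M ℓ x) : y = y' := by
  unfold spec at hy hy'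
  unfold win at h h'
  simp only [Finset.mem_image, Finset.mem_range] at *
  obtain ⟨i, hi, rfl⟩ := hy
  obtain ⟨j, hj, rfl⟩ := hy'
  obtain ⟨c, hc, h⟩ := h
  obtain ⟨c', hc', h'⟩ := h'
  have key : ∀ i < M / ℓ, ∀ c < ℓ, ℓ * i + c < M := by
    intro i hi c hc
    calc ℓ * i + c < ℓ * (i + 1) := by rw [mul_add]; omega
      _ ≤ ℓ * (M / ℓ) := Nat.mul_le_mul_left _ hi
      _ ≤ M := Nat.mul_div_le M ℓ
  have e : ((ℓ * i + c' : ℕ) : ZMod M) = ((ℓ * j + c : ℕ) : ZMod M) := by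
    push_cast at h h' ⊢
    rw [← h, ← h']; ring
  rw [ZMod.natCast_eq_natCast_iff', Nat.mod_eq_of_lt (key i hi c' hc'),
    Nat.mod_eq_of_lt (key j hj c hc)] at e
  have e2 : (ℓ * i + c') / ℓ = (ℓ * j + c) / ℓ := by rw [e]
  rw [Nat.mul_add_div (by omega), Nat.mul_add_div (by omega), Nat.div_eq_of_lt hc',
    Nat.div_eq_of_lt hc, add_zero, add_zero] at e2
  rw [e2]

/-- positions whose window contains `y` -/
def back (M ℓ : ℕ) (y : ZMod M) : Finset (ZMod M) :=
  (Finset.range ℓ).image (fun c : ℕ => y - (c : ZMod M))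

lemma mem_back (x y : ZMod M) : x ∈ back M ℓ y ↔ y ∈ win M ℓ x := by
  unfold back win
  simp only [Finset.mem_image, Finset.mem_range]
  constructor
  · rintro ⟨c, hc, rfl⟩; exact ⟨c, hc, by ring⟩
  · rintro ⟨c, hc, rfl⟩; exact ⟨c, hc, by ring⟩

lemma back_diff (hℓ : 1 ≤ ℓ) (t ψ : ℝ) (y : ZMod M) (b : ZMod M → Bool) :
    ∃ Δ : ℝ, |Δ| ≤ ℓ ∧ ∑ x ∈ back M ℓ y, Xv M ℓ P t ψ x (Function.update b y true) -
      ∑ x ∈ back M ℓ y, Xv M ℓ P t ψ x (Function.update b y false) = ψ + t * Δ := by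
  refine ⟨∑ x ∈ back M ℓ y, (occ M ℓ P x (Function.update b y true) -
    occ M ℓ P x (Function.update b y false)), ?_, ?_⟩
  · refine (Finset.abs_sum_le_sum_abs _ _).trans ?_
    have hc : (back M ℓ y).card ≤ ℓ := by
      unfold back; exact Finset.card_image_le.trans (by simp)
    have h1 : ∀ x ∈ back M ℓ y, |occ M ℓ P x (Function.update b y true) -
        occ M ℓ P x (Function.update b y false)| ≤ 1 := by
      intro x _
      have := occ_nonneg (ℓ := ℓ) P x (Function.update b y true)
      have := occ_nonneg (ℓ := ℓ) P x (Function.update b y false)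
      have := occ_le_one (ℓ := ℓ) P x (Function.update b y true)
      have := occ_le_one (ℓ := ℓ) P x (Function.update b y false)
      rw [abs_le]; constructor <;> linarith
    refine (Finset.sum_le_sum h1).trans ?_
    simp only [Finset.sum_const, nsmul_eq_mul, mul_one]
    exact_mod_cast hc
  · rw [← Finset.sum_sub_distrib]
    have h : ∀ x ∈ back M ℓ y, Xv M ℓ P t ψ x (Function.update b y true) -
        Xv M ℓ P t ψ x (Function.update b y false) =
        (if x = y then ψ else 0) + t * (occ M ℓ P x (Function.update b y true) -
    occ M ℓ P x (Function.update b y false)) := by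
      intro x _
      unfold Xv bitv
      by_cases hx : x = y
      · subst hx; simp; ring
      · simp [hx]; ring
    rw [Finset.sum_congr rfl h, Finset.sum_add_distrib, ← Finset.mul_sum]
    congr 1
    rw [Finset.sum_ite_eq', if_pos]
    rw [mem_back]; exact mem_win_self hℓ y

lemma dom_word (hℓ : 1 ≤ ℓ) (hM : ℓ ≤ M) (t ψ : ℝ) (hψ : |ψ| ≤ Real.pi * Real.sqrt M)
    (ht : |t| * ℓ ≤ Real.pi / 2 * Real.sqrt M) :
    ‖bavg (fun b => Complex.exp (Complex.I * (((Real.sqrt M)⁻¹ * ∑ k, Xv M ℓ P t ψ k b : ℝ) : ℂ)))‖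
      ≤ Real.exp (t ^ 2 * ℓ ^ 2 / 100) * Real.exp (-(1 / (400 * ℓ)) * ψ ^ 2) := by
  have hM0 : (0:ℝ) < M := by exact_mod_cast (by omega : 0 < M)
  have hs : 0 < Real.sqrt M := Real.sqrt_pos.2 hM0
  set l := (Real.sqrt M)⁻¹ with hl
  have hl0 : 0 < l := inv_pos.2 hs
  have hls : l * Real.sqrt M = 1 := inv_mul_cancel₀ hs.ne'
  have hl2 : l ^ 2 = (M:ℝ)⁻¹ := by rw [hl, inv_pow, Real.sq_sqrt hM0.le]
  set T := spec M ℓ with hT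
  let E : ZMod M → (ZMod M → Bool) → ℂ := fun x b =>
    Complex.exp (Complex.I * ((l * Xv M ℓ P t ψ x b : ℝ) : ℂ))
  let g : ZMod M → (ZMod M → Bool) → ℂ := fun y b => ∏ x ∈ back M ℓ y, E x b
  let G : (ZMod M → Bool) → ℂ := fun b => ∏ x ∈ (T.biUnion (back M ℓ))ᶜ, E x b
  have hprod : ∀ (S : Finset (ZMod M)) b, ∏ x ∈ S, E x b =
      Complex.exp (Complex.I * ((l * ∑ x ∈ S, Xv M ℓ P t ψ x b : ℝ) : ℂ)) := by
    intro S b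
    simp only [E]
    rw [← Complex.exp_sum]
    congr 1
    push_cast
    rw [Finset.mul_sum, Finset.mul_sum]
  have hdisj : ∀ y ∈ T, ∀ y' ∈ T, y ≠ y' → Disjoint (back M ℓ y) (back M ℓ y') := by
    intro y hy y' hy' hne
    rw [Finset.disjoint_left]
    intro x hx hx'
    rw [mem_back] at hx hx'
    exact hne (spec_win hℓ x y y' hy hy' hx hx')
  have e : (fun b => Complex.exp (Complex.I * ((l * ∑ k, Xv M ℓ P t ψ k b : ℝ) : ℂ))) =
      fun b => G b * ∏ y ∈ T, g y b := by
    funext b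
    rw [← hprod]
    simp only [G, g]
    rw [← Finset.prod_biUnion hdisj, mul_comm, Finset.prod_mul_prod_compl]
  have hE : ∀ x b b', (∀ i ∈ win M ℓ x, b i = b' i) → E x b = E x b' := by
    intro x b b' h
    simp only [E]
    rw [Xv_dep P hℓ t ψ x (fun i hi => h i hi)]
  have hEn : ∀ x b, ‖E x b‖ = 1 := by
    intro x b
    simp only [E]
    rw [mul_comm, Complex.norm_exp_ofReal_mul_I]
  set r := Real.exp (-(l ^ 2 * (ψ ^ 2 / 2 - t ^ 2 * ℓ ^ 2)) / 100) with hr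
  rw [e]
  have main := dom_ind r (Real.exp_pos _).le g T G 1 ?_ ?_ ?_ ?_
  · refine main.trans ?_
    rw [one_mul, hT, spec_card hℓ, hr, ← Real.exp_nat_mul, ← Real.exp_add]
    apply Real.exp_le_exp.2
    have hℓ0 : (0:ℝ) < ℓ := by exact_mod_cast (by omega : 0 < ℓ)
    have hq1 : ((M / ℓ : ℕ) : ℝ) * l ^ 2 ≤ 1 := by
      rw [hl2, ← div_eq_mul_inv, div_le_one hM0]
      exact_mod_cast Nat.div_le_self M ℓ
    have hq2 : 1 / (2 * ℓ) ≤ ((M / ℓ : ℕ) : ℝ) * l ^ 2 := by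
      rw [hl2, ← div_eq_mul_inv, div_le_div_iff₀ (by positivity) hM0, one_mul]
      have h1 : M < ℓ * (M / ℓ + 1) := by
        have := Nat.div_add_mod M ℓ
        have := Nat.mod_lt M (show ℓ > 0 by omega)
        rw [mul_add]; omega
      have h2 : 1 ≤ M / ℓ := Nat.div_pos hM (by omega)
      have h3 : M ≤ (M / ℓ) * (2 * ℓ) := by nlinarith
      exact_mod_cast h3
    set q := ((M / ℓ : ℕ) : ℝ)
    have h5 : q * (-(l ^ 2 * (ψ ^ 2 / 2 - t ^ 2 * ℓ ^ 2)) / 100) =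
      (q * l ^ 2) * (t ^ 2 * ℓ ^ 2) / 100 - (q * l ^ 2) * ψ ^ 2 / 200 := by ring
    rw [h5]
    have h6 : (q * l ^ 2) * (t ^ 2 * ℓ ^ 2) ≤ 1 * (t ^ 2 * ℓ ^ 2) := by gcongr
    have h7 : 1 / (2 * ℓ) * ψ ^ 2 ≤ (q * l ^ 2) * ψ ^ 2 := by gcongr
    have h8 : 1 / (400 * (ℓ:ℝ)) * ψ ^ 2 = 1 / (2 * ℓ) * ψ ^ 2 / 200 := by
      field_simp; ring
    linarith
  · intro b b' h
    simp only [G]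
    apply Finset.prod_congr rfl
    intro x hx
    apply hE
    intro i hi
    apply h
    intro hiT
    apply Finset.mem_compl.1 hx
    exact Finset.mem_biUnion.2 ⟨i, hiT, (mem_back x i).2 hi⟩
  · intro b
    simp only [G]
    rw [norm_prod, Finset.prod_congr rfl (fun x _ => hEn x b)]; simp
  · intro y hy b b' h
    simp only [g]
    apply Finset.prod_congr rfl
    intro x hx
    apply hE
    intro i hi
    apply h
    by_cases hiT : i ∈ T
    · left
      exact spec_win hℓ x i y hiT hy hi ((mem_back x y).1 hx)
    · right; exact hiT
  · intro y hy b
    simp only [g]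
    rw [hprod, hprod]
    obtain ⟨Δ, hΔ, hd⟩ := back_diff P hℓ t ψ y b
    set a := ∑ x ∈ back M ℓ y, Xv M ℓ P t ψ x (Function.update b y true)
    set c := ∑ x ∈ back M ℓ y, Xv M ℓ P t ψ x (Function.update b y false)
    have hz : l * a - l * c = l * (ψ + t * Δ) := by rw [← hd]; ring
    have htΔ : |t * Δ| ≤ |t| * ℓ := by rw [abs_mul]; gcongr
    refine (norm_exp_add _ _ ?_).trans ?_
    · rw [hz, abs_mul, abs_of_pos hl0]
      have h1 : |ψ + t * Δ| ≤ 3 * Real.pi / 2 * Real.sqrt M := by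
        refine (abs_add_le _ _).trans ?_
        linarith
      calc l * |ψ + t * Δ| ≤ l * (3 * Real.pi / 2 * Real.sqrt M) := by gcongr
        _ = 3 * Real.pi / 2 * (l * Real.sqrt M) := by ring
        _ = _ := by rw [hls, mul_one]
    · rw [hz, hr]
      have h2 : (t * Δ) ^ 2 ≤ t ^ 2 * ℓ ^ 2 := by
        rw [← sq_abs, ← sq_abs t, ← mul_pow]; gcongr
      have h3 : ψ ^ 2 / 2 - t ^ 2 * ℓ ^ 2 ≤ (ψ + t * Δ) ^ 2 := by
        nlinarith [sq_nonneg (ψ + 2 * (t * Δ))]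
      have h4 : l ^ 2 * (ψ ^ 2 / 2 - t ^ 2 * ℓ ^ 2) ≤ (l * (ψ + t * Δ)) ^ 2 := by
        rw [mul_pow]; gcongr
      have : Real.exp (-(l * (ψ + t * Δ)) ^ 2 / 100) ≤
          Real.exp (-(l ^ 2 * (ψ ^ 2 / 2 - t ^ 2 * ℓ ^ 2)) / 100) := by
        apply Real.exp_le_exp.2
        linarith
      linarith

end dom2


section four

variable {ℓ : ℕ} (P : ℕ → Bool)

lemma int_exp_k (s : ℝ) (hs : 0 < s) (k : ℤ) :
    ∫ ψ in (-(Real.pi * s))..(Real.pi * s), Complex.exp (Complex.I * ((s⁻¹ * (ψ * k) : ℝ) : ℂ)) =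
      if k = 0 then ((2 * Real.pi * s : ℝ) : ℂ) else 0 := by
  by_cases hk : k = 0
  · subst hk
    simp
    ring
  · rw [if_neg hk]
    have hc : (Complex.I * ((s⁻¹ * k : ℝ) : ℂ)) ≠ 0 := by
      have : s⁻¹ * (k : ℝ) ≠ 0 := mul_ne_zero (inv_ne_zero hs.ne') (by exact_mod_cast hk)
      exact mul_ne_zero Complex.I_ne_zero (by exact_mod_cast this)
    have e : ∀ ψ : ℝ, Complex.exp (Complex.I * ((s⁻¹ * (ψ * k) : ℝ) : ℂ)) =
        Complex.exp ((Complex.I * ((s⁻¹ * k : ℝ) : ℂ)) * ψ) := by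
      intro ψ; congr 1; push_cast; ring
    simp only [e]
    rw [integral_exp_mul_complex hc]
    have hs' : (s : ℂ) ≠ 0 := by exact_mod_cast hs.ne'
    have h1 : Complex.exp ((Complex.I * ((s⁻¹ * k : ℝ) : ℂ)) * ((Real.pi * s : ℝ) : ℂ)) =
        Complex.exp ((Complex.I * ((s⁻¹ * k : ℝ) : ℂ)) * ((-(Real.pi * s) : ℝ) : ℂ)) := by
      rw [Complex.exp_eq_exp_iff_exists_int]
      refine ⟨k, ?_⟩
      push_cast
      field_simp
      ring
    rw [h1, sub_self, zero_div]

/-- total count of cyclic occurrences -/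
def Ycy (M ℓ : ℕ) (P : ℕ → Bool) [NeZero M] (b : ZMod M → Bool) : ℝ := ∑ x, occ M ℓ P x b

def Wd (n : ℕ) : Finset (ZMod (2 * n + 1) → Bool) :=
  Finset.univ.filter (fun b => ups b = n + 1)

def ech (n ℓ : ℕ) (P : ℕ → Bool) (t : ℝ) : ℂ :=
  ∑ b ∈ Wd n, Complex.exp (Complex.I * (((Real.sqrt ((2 * n + 1 : ℕ) : ℝ))⁻¹ *
    (t * (Ycy (2 * n + 1) ℓ P b - ((2 * n + 1 : ℕ) : ℝ) * (1 / 2) ^ ℓ)) : ℝ) : ℂ))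

def Phi (M ℓ : ℕ) (P : ℕ → Bool) [NeZero M] (t ψ : ℝ) : ℂ :=
  bavg (fun b => Complex.exp (Complex.I * (((Real.sqrt M)⁻¹ * ∑ k, Xv M ℓ P t ψ k b : ℝ) : ℂ)))

lemma sum_bitv (n : ℕ) (b : ZMod (2 * n + 1) → Bool) :
    ∑ x, (bitv x b - 1 / 2) = (((ups b : ℤ) - (n + 1 : ℤ) : ℤ) : ℝ) + 1 / 2 := by
  rw [Finset.sum_sub_distrib]
  unfold bitv ups
  rw [Finset.sum_boole]
  simp only [Finset.sum_const, Finset.card_univ, ZMod.card, nsmul_eq_mul]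
  push_cast
  ring

lemma fourier_inv (n : ℕ) (t : ℝ) :
    ∫ ψ in (-(Real.pi * Real.sqrt ((2 * n + 1 : ℕ) : ℝ)))..(Real.pi * Real.sqrt ((2 * n + 1 : ℕ) : ℝ)),
      Phi (2 * n + 1) ℓ P t ψ *
        Complex.exp (Complex.I * (((Real.sqrt ((2 * n + 1 : ℕ) : ℝ))⁻¹ * (-ψ / 2) : ℝ) : ℂ)) =
      ((2 * Real.pi * Real.sqrt ((2 * n + 1 : ℕ) : ℝ) : ℝ) : ℂ) * ech n ℓ P t / 2 ^ (2 * n + 1) := by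
  set s := Real.sqrt ((2 * n + 1 : ℕ) : ℝ) with hs
  have hs0 : 0 < s := Real.sqrt_pos.2 (by positivity)
  have e : ∀ ψ : ℝ, Phi (2 * n + 1) ℓ P t ψ * Complex.exp (Complex.I * ((s⁻¹ * (-ψ / 2) : ℝ) : ℂ)) =
      ∑ b : ZMod (2 * n + 1) → Bool, (Complex.exp (Complex.I * ((s⁻¹ *
    (t * (Ycy (2 * n + 1) ℓ P b - ((2 * n + 1 : ℕ) : ℝ) * (1 / 2) ^ ℓ)) : ℝ) : ℂ)) / 2 ^ (2 * n + 1)) *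
      Complex.exp (Complex.I * ((s⁻¹ * (ψ * ((ups b : ℤ) - (n + 1 : ℤ) : ℤ)) : ℝ) : ℂ)) := by
    intro ψ
    unfold Phi bavg
    rw [ZMod.card, Finset.sum_div, Finset.sum_mul]
    apply Finset.sum_congr rfl
    intro b _
    rw [div_mul_eq_mul_div, div_mul_eq_mul_div, ← Complex.exp_add, ← Complex.exp_add, Xv_sum,
      sum_bitv]
    congr 2
    rw [← hs]
    unfold Ycy
    push_cast
    ring
  simp only [e]
  rw [intervalIntegral.integral_finsetSum]
  · simp only [intervalIntegral.integral_const_mul, int_exp_k s hs0]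
    unfold ech Wd
    rw [Finset.mul_sum, Finset.sum_div, Finset.sum_filter]
    apply Finset.sum_congr rfl
    intro b _
    by_cases h : ups b = n + 1
    · rw [if_pos (by omega), if_pos h]; rw [← hs]; ring
    · rw [if_neg (by omega), if_neg h]; simp
  · intro b _
    apply Continuous.intervalIntegrable
    fun_prop

lemma Phi_cont (M : ℕ) [NeZero M] (t : ℝ) : Continuous (fun ψ => Phi M ℓ P t ψ) := by
  unfold Phi bavg Xv
  fun_prop

lemma Phi_tendsto (hℓ : 1 ≤ ℓ) (t ψ : ℝ) :
    Tendsto (fun n : ℕ => Phi (2 * n + 1) ℓ P t ψ) atTop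
      (nhds ((Real.exp (-Vq ℓ P t ψ / 2) : ℝ) : ℂ)) := by
  rw [tendsto_iff_norm_sub_tendsto_zero]
  have hs : Tendsto (fun n : ℕ => (Real.sqrt ((2 * n + 1 : ℕ) : ℝ))⁻¹) atTop (nhds 0) := by
    apply tendsto_inv_atTop_zero.comp
    apply Real.tendsto_sqrt_atTop.comp
    apply tendsto_natCast_atTop_atTop.comp
    exact tendsto_atTop_mono (fun n => by simp; omega) tendsto_id
  have h2 := hs.const_mul (4 * (|t| + |ψ|) * ((6 * ℓ) * (|t| + |ψ|)) ^ 2)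
  rw [mul_zero] at h2
  refine squeeze_zero' (Eventually.of_forall fun n => norm_nonneg _) ?_ h2
  filter_upwards [eventually_ge_atTop (3 * ℓ)] with n hn
  exact clt_word (M := 2 * n + 1) P hℓ (by omega) t ψ

lemma gauss_int (a : ℝ) : ∫ ψ : ℝ, Real.exp (-(1 / 4 * (ψ + a) ^ 2) / 2) =
    ∫ ψ : ℝ, Real.exp (-(1 / 8) * ψ ^ 2) := by
  have := integral_add_right_eq_self (μ := volume) (fun ψ : ℝ => Real.exp (-(1 / 4 * ψ ^ 2) / 2)) a
  rw [this]
  congr 1; funext ψ; congr 1; ring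

lemma Vq_int (t : ℝ) : ∫ ψ : ℝ, Real.exp (-Vq ℓ P t ψ / 2) =
    Real.exp (-(t ^ 2 * v0 ℓ P) / 2) * ∫ ψ : ℝ, Real.exp (-(1 / 8) * ψ ^ 2) := by
  rw [← gauss_int (2 * t * (1 / 2) ^ ℓ * dlt ℓ P), ← integral_const_mul]
  congr 1; funext ψ
  rw [← Real.exp_add]
  unfold Vq
  congr 1; ring

lemma sqrtM_tendsto : Tendsto (fun n : ℕ => Real.sqrt ((2 * n + 1 : ℕ) : ℝ)) atTop atTop := by
  apply Real.tendsto_sqrt_atTop.comp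
  apply tendsto_natCast_atTop_atTop.comp
  exact tendsto_atTop_mono (fun n => by simp; omega) tendsto_id

lemma ech_tendsto (hℓ : 1 ≤ ℓ) (t : ℝ) :
    Tendsto (fun n : ℕ => ((2 * Real.pi * Real.sqrt ((2 * n + 1 : ℕ) : ℝ) : ℝ) : ℂ) *
      ech n ℓ P t / 2 ^ (2 * n + 1)) atTop
      (nhds ((Real.exp (-(t ^ 2 * v0 ℓ P) / 2) * ∫ ψ : ℝ, Real.exp (-(1 / 8) * ψ ^ 2) : ℝ) : ℂ)) := by
  have hlim : ((Real.exp (-(t ^ 2 * v0 ℓ P) / 2) * ∫ ψ : ℝ, Real.exp (-(1 / 8) * ψ ^ 2) : ℝ) : ℂ) =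
      ∫ ψ : ℝ, ((Real.exp (-Vq ℓ P t ψ / 2) : ℝ) : ℂ) := by
    rw [← Vq_int]; exact integral_ofReal.symm
  rw [hlim]
  let s : ℕ → ℝ := fun n => Real.sqrt ((2 * n + 1 : ℕ) : ℝ)
  let F : ℕ → ℝ → ℂ := fun n => Set.indicator (Set.Ioc (-(Real.pi * s n)) (Real.pi * s n))
    (fun ψ => Phi (2 * n + 1) ℓ P t ψ * Complex.exp (Complex.I * (((s n)⁻¹ * (-ψ / 2) : ℝ) : ℂ)))
  have hF : ∀ n, ((2 * Real.pi * Real.sqrt ((2 * n + 1 : ℕ) : ℝ) : ℝ) : ℂ) *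
      ech n ℓ P t / 2 ^ (2 * n + 1) = ∫ ψ, F n ψ := by
    intro n
    rw [← fourier_inv, intervalIntegral.integral_of_le, ← integral_indicator measurableSet_Ioc]
    have h0 : 0 ≤ Real.pi * Real.sqrt ((2 * n + 1 : ℕ) : ℝ) := by positivity
    linarith
  simp only [hF]
  have hst : Tendsto s atTop atTop := sqrtM_tendsto
  have hnorm : ∀ x : ℝ, ‖Complex.exp (Complex.I * (x : ℂ))‖ = 1 := by
    intro x; rw [mul_comm, Complex.norm_exp_ofReal_mul_I]
  apply tendsto_integral_filter_of_dominated_convergence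
    (fun ψ => Real.exp (t ^ 2 * ℓ ^ 2 / 100) * Real.exp (-(1 / (400 * ℓ)) * ψ ^ 2))
  · refine Eventually.of_forall fun n => ?_
    apply AEStronglyMeasurable.indicator _ measurableSet_Ioc
    apply Continuous.aestronglyMeasurable
    have := Phi_cont (ℓ := ℓ) P (2 * n + 1) t
    fun_prop
  · have h1 : ∀ᶠ n in atTop, |t| * ℓ / (Real.pi / 2) ≤ s n := hst.eventually_ge_atTop _
    filter_upwards [h1, eventually_ge_atTop ℓ] with n hn hnℓ
    refine Eventually.of_forall fun ψ => ?_
    simp only [F]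
    rw [Set.indicator_apply]
    split_ifs with hψ
    · rw [norm_mul, hnorm, mul_one]
      refine dom_word (M := 2 * n + 1) P hℓ (by omega) t ψ ?_ ?_
      · rw [abs_le]; exact ⟨hψ.1.le, hψ.2⟩
      · rw [div_le_iff₀ (by positivity)] at hn
        rw [mul_comm (Real.pi / 2)]; exact hn
    · rw [norm_zero]; positivity
  · apply Integrable.const_mul
    apply integrable_exp_neg_mul_sq
    have : (0:ℝ) < ℓ := by exact_mod_cast (by omega : 0 < ℓ)
    positivity
  · refine Eventually.of_forall fun ψ => ?_
    have h1 : Tendsto (fun n => Phi (2 * n + 1) ℓ P t ψ *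
        Complex.exp (Complex.I * (((s n)⁻¹ * (-ψ / 2) : ℝ) : ℂ))) atTop
        (nhds ((Real.exp (-Vq ℓ P t ψ / 2) : ℝ) : ℂ)) := by
      have h2 : Tendsto (fun n => Complex.exp (Complex.I * (((s n)⁻¹ * (-ψ / 2) : ℝ) : ℂ))) atTop
          (nhds 1) := by
        have h3 : Tendsto (fun n => (s n)⁻¹ * (-ψ / 2)) atTop (nhds 0) := by
          have := (tendsto_inv_atTop_zero.comp hst).mul_const (-ψ / 2)
          rw [zero_mul] at this
          exact this
        have h4 : Continuous (fun x : ℝ => Complex.exp (Complex.I * (x : ℂ))) := by fun_prop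
        have h5 := (h4.tendsto 0).comp h3
        simpa [Function.comp_def] using h5
      have := (Phi_tendsto P hℓ t ψ).mul h2
      rw [mul_one] at this
      exact this
    refine h1.congr' ?_
    have h6 : ∀ᶠ n in atTop, |ψ| + 1 ≤ s n := hst.eventually_ge_atTop _
    filter_upwards [h6] with n hn
    simp only [F]
    rw [Set.indicator_of_mem]
    have h7 : |ψ| < Real.pi * s n := by
      have := Real.pi_gt_three
      have := abs_nonneg ψ
      nlinarith
    rw [abs_lt] at h7
    exact ⟨h7.1, h7.2.le⟩

lemma ech_zero (n : ℕ) : ech n ℓ P 0 = ((Wd n).card : ℂ) := by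
  unfold ech
  simp

lemma char_limit (hℓ : 1 ≤ ℓ) (t : ℝ) :
    Tendsto (fun n : ℕ => ech n ℓ P t / ((Wd n).card : ℂ)) atTop
      (nhds ((Real.exp (-(t ^ 2 * v0 ℓ P) / 2) : ℝ) : ℂ)) := by
  have h1 := ech_tendsto P hℓ t
  have h2 := ech_tendsto P hℓ 0
  have hJ : (0:ℝ) < ∫ ψ : ℝ, Real.exp (-(1 / 8) * ψ ^ 2) := by
    rw [integral_gaussian]
    positivity
  set J := ∫ ψ : ℝ, Real.exp (-(1 / 8) * ψ ^ 2)
  have hJ' : (J : ℂ) ≠ 0 := by exact_mod_cast hJ.ne'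
  have h3 := h1.div h2 (by simpa using hJ')
  have e : ((Real.exp (-(t ^ 2 * v0 ℓ P) / 2) * J : ℝ) : ℂ) /
      ((Real.exp (-(0 ^ 2 * v0 ℓ P) / 2) * J : ℝ) : ℂ) =
      ((Real.exp (-(t ^ 2 * v0 ℓ P) / 2) : ℝ) : ℂ) := by
    rw [Complex.ofReal_mul, Complex.ofReal_mul]
    simp
    field_simp
  rw [e] at h3
  refine h3.congr fun n => ?_
  simp only [Pi.div_apply]
  rw [ech_zero]
  have hc : ((2 * Real.pi * Real.sqrt ((2 * n + 1 : ℕ) : ℝ) : ℝ) : ℂ) ≠ 0 := by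
    have : (0:ℝ) < 2 * Real.pi * Real.sqrt ((2 * n + 1 : ℕ) : ℝ) := by positivity
    exact_mod_cast this.ne'
  rw [div_div_div_cancel_right₀ (pow_ne_zero _ two_ne_zero), mul_div_mul_left _ _ hc]

end four


section mom

variable {ℓ : ℕ} (P : ℕ → Bool)

def favg {α : Type} (S : Finset α) (F : α → ℝ) : ℝ := (∑ a ∈ S, F a) / S.card

lemma Wd_card (n : ℕ) : (((Wd n).card : ℕ) : ℝ) = ((2 * n + 1).choose (n + 1) : ℕ) := by
  have h := cyl_csum (∅ : Finset (ZMod (2 * n + 1))) ∅ (by simp) (n + 1) (by simp)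
  rw [ZMod.card] at h
  simp only [Finset.card_empty, add_zero, Nat.sub_zero] at h
  rw [← h]
  unfold csum cyl Wd
  simp

lemma favg_Y (n : ℕ) (hn : ℓ ≤ n) : favg (Wd n) (Ycy (2 * n + 1) ℓ P) =
    (2 * n + 1) * kap n (pcount ℓ P true) (pcount ℓ P false) := by
  have h := mean_csum (M := 2 * n + 1) (ℓ := ℓ) P (by omega) (n + 1) (by omega)
  unfold favg
  rw [Wd_card]
  have h2 : ∑ b ∈ Wd n, Ycy (2 * n + 1) ℓ P b = csum (n + 1) (fun b => ∑ x, occ (2 * n + 1) ℓ P x b) := rfl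
  rw [h2, h]
  unfold kap
  push_cast
  ring

def rhoN (ℓ : ℕ) (P : ℕ → Bool) (n : ℕ) : ℝ :=
  ∑ w : Fin (3 * ℓ) → Bool, grho ℓ P (ext w) * kap n (pcount (3 * ℓ) (ext w) true)
    (pcount (3 * ℓ) (ext w) false)

lemma favg_Y2 (hℓ : 1 ≤ ℓ) (n : ℕ) (hn : 3 * ℓ ≤ n) :
    favg (Wd n) (fun b => Ycy (2 * n + 1) ℓ P b ^ 2) =
    (2 * n + 1) * (rhoN ℓ P n + ((2 * n + 1) - (2 * ℓ - 1)) *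
      kap n (2 * pcount ℓ P true) (2 * pcount ℓ P false)) := by
  have h := second_csum (M := 2 * n + 1) P hℓ (by omega) (n + 1) (by omega)
  unfold favg
  rw [Wd_card]
  have h2 : ∑ b ∈ Wd n, Ycy (2 * n + 1) ℓ P b ^ 2 =
    csum (n + 1) (fun b => (∑ x, occ (2 * n + 1) ℓ P x b) ^ 2) := rfl
  rw [h2, h]
  unfold rhoN kap
  have e : ∀ w : Fin (3 * ℓ) → Bool, grho ℓ P (ext w) * ((((2 * n + 1 - (pcount (3 * ℓ) (ext w) true +
        pcount (3 * ℓ) (ext w) false)).choose (n + 1 - pcount (3 * ℓ) (ext w) true) : ℕ) : ℝ) /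
        (((2 * n + 1).choose (n + 1) : ℕ) : ℝ)) = grho ℓ P (ext w) * (((2 * n + 1 - (pcount (3 * ℓ) (ext w) true +
        pcount (3 * ℓ) (ext w) false)).choose (n + 1 - pcount (3 * ℓ) (ext w) true) : ℕ) : ℝ) /
        (((2 * n + 1).choose (n + 1) : ℕ) : ℝ) := fun w => by ring
  rw [Finset.sum_congr rfl (fun w _ => e w), ← Finset.sum_div]
  push_cast
  ring

lemma rhoN_tendsto : Tendsto (rhoN ℓ P) atTop (nhds (rhoP ℓ P)) := by
  have : rhoP ℓ P = ∑ w : Fin (3 * ℓ) → Bool, grho ℓ P (ext w) *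
      (1 / 2) ^ (pcount (3 * ℓ) (ext w) true + pcount (3 * ℓ) (ext w) false) := by
    unfold rhoP ravg
    rw [Finset.sum_div, Fintype.card_fin]
    apply Finset.sum_congr rfl
    intro w _
    rw [pcount_add]; simp [div_eq_mul_inv]
  rw [this]
  unfold rhoN
  apply tendsto_finsetSum
  intro w _
  exact (kap_tendsto _ _).const_mul _

lemma M_div_n : Tendsto (fun n : ℕ => (2 * (n:ℝ) + 1) / n) atTop (nhds 2) := by
  have h : Tendsto (fun n : ℕ => 2 + 1 / (n:ℝ)) atTop (nhds (2 + 0)) :=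
    tendsto_const_nhds.add tendsto_one_div_atTop_nhds_zero_nat
  rw [add_zero] at h
  refine h.congr' ?_
  filter_upwards [eventually_gt_atTop 0] with n hn
  have : (n:ℝ) ≠ 0 := by positivity
  field_simp

lemma meanW_limit : Tendsto (fun n : ℕ => favg (Wd n) (Ycy (2 * n + 1) ℓ P) / n) atTop
    (nhds (2 * (1 / 2) ^ ℓ)) := by
  have h := M_div_n.mul (kap_tendsto (pcount ℓ P true) (pcount ℓ P false))
  rw [pcount_add] at h
  refine h.congr' ?_
  filter_upwards [eventually_ge_atTop ℓ] with n hn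
  rw [favg_Y P n hn]; ring

lemma varW_limit (hℓ : 1 ≤ ℓ) : Tendsto (fun n : ℕ => (favg (Wd n) (fun b => Ycy (2 * n + 1) ℓ P b ^ 2) -
    favg (Wd n) (Ycy (2 * n + 1) ℓ P) ^ 2) / n) atTop (nhds (2 * v0 ℓ P)) := by
  have h1 := kap_second (pcount ℓ P true) (pcount ℓ P false)
  have h2 := (kap_tendsto (2 * pcount ℓ P true) (2 * pcount ℓ P false)).const_mul (2 * (ℓ:ℝ) - 1)
  have h3 := M_div_n.mul (((rhoN_tendsto P (ℓ := ℓ)).sub h2).add h1)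
  rw [← mul_add, pcount_add] at h3
  have e : 2 * (rhoP ℓ P - (2 * ℓ - 1) * (1 / 2) ^ (2 * ℓ) +
      -(((1 / 2 : ℝ) ^ ℓ) ^ 2 * ((pcount ℓ P true : ℝ) - pcount ℓ P false) ^ 2)) = 2 * v0 ℓ P := by
    unfold v0 dlt
    rw [← pow_mul, mul_comm ℓ 2]
    ring
  rw [e] at h3
  refine h3.congr' ?_
  filter_upwards [eventually_ge_atTop (3 * ℓ)] with n hn
  rw [favg_Y P n (by omega), favg_Y2 P hℓ n hn]
  ring

/-- transfer of mean and variance asymptotics through a bounded perturbation -/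
lemma favg_diff {α : Type} (S : Finset α) (hS : S.Nonempty) (X Y : α → ℝ) (L : ℝ)
    (h : ∀ a ∈ S, |X a - Y a| ≤ L) : |favg S X - favg S Y| ≤ L := by
  unfold favg
  have hc : (0:ℝ) < S.card := by exact_mod_cast hS.card_pos
  rw [← sub_div, ← Finset.sum_sub_distrib, abs_div, abs_of_pos hc, div_le_iff₀ hc]
  refine (Finset.abs_sum_le_sum_abs _ _).trans ((Finset.sum_le_sum h).trans ?_)
  simp [mul_comm]

lemma favg_add {α : Type} (S : Finset α) (X Y : α → ℝ) :
    favg S (fun a => X a + Y a) = favg S X + favg S Y := by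
  unfold favg; rw [Finset.sum_add_distrib, add_div]

lemma favg_const_mul {α : Type} (S : Finset α) (c : ℝ) (Y : α → ℝ) :
    favg S (fun a => c * Y a) = c * favg S Y := by
  unfold favg; rw [← Finset.mul_sum, mul_div_assoc]

lemma favg_const {α : Type} (S : Finset α) (hS : S.Nonempty) (c : ℝ) :
    favg S (fun _ => c) = c := by
  unfold favg
  have hc : (S.card : ℝ) ≠ 0 := by exact_mod_cast hS.card_pos.ne'
  simp; field_simp

lemma favg_mono {α : Type} (S : Finset α) (X Y : α → ℝ) (h : ∀ a ∈ S, X a ≤ Y a) :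
    favg S X ≤ favg S Y := by
  unfold favg
  gcongr with a ha
  exact h a ha

lemma favg_var {α : Type} (S : Finset α) (hS : S.Nonempty) (X : α → ℝ) (c : ℝ) :
    favg S (fun a => (X a - c) ^ 2) = favg S (fun a => X a ^ 2) - favg S X ^ 2 + (favg S X - c) ^ 2 := by
  have e : (fun a => (X a - c) ^ 2) = fun a => X a ^ 2 + ((-2 * c) * X a + c ^ 2) := by
    funext a; ring
  rw [e, favg_add, favg_add, favg_const_mul, favg_const S hS]
  ring

/-- one sided variance comparison with a free parameter -/
lemma var_le {α : Type} (S : Finset α) (hS : S.Nonempty) (X Y : α → ℝ) (L : ℝ)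
    (h : ∀ a ∈ S, |X a - Y a| ≤ L) (ε : ℝ) (hε : 0 < ε) :
    favg S (fun a => X a ^ 2) - favg S X ^ 2 ≤
      (1 + ε) * (favg S (fun a => Y a ^ 2) - favg S Y ^ 2) + (1 + ε⁻¹) * L ^ 2 := by
  have h1 := favg_var S hS X (favg S Y)
  have h2 := favg_var S hS Y (favg S Y)
  rw [sub_self] at h2
  have h3 : favg S (fun a => (X a - favg S Y) ^ 2) ≤
      favg S (fun a => (1 + ε) * (Y a - favg S Y) ^ 2 + (1 + ε⁻¹) * L ^ 2) := by
    apply favg_mono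
    intro a ha
    have ha := h a ha
    set d := X a - Y a
    set y := Y a - favg S Y
    have e : X a - favg S Y = y + d := by simp only [d, y]; ring
    rw [e]
    have hd : d ^ 2 ≤ L ^ 2 := by
      rw [← sq_abs]; gcongr
    have h5 : 2 * y * d ≤ ε * y ^ 2 + ε⁻¹ * d ^ 2 := by
      have h6 : ε * (y - ε⁻¹ * d) ^ 2 = ε * y ^ 2 - 2 * y * d + ε⁻¹ * d ^ 2 := by
        field_simp; ring
      have h7 : 0 ≤ ε * (y - ε⁻¹ * d) ^ 2 := by positivity
      linarith
    have : (1 + ε⁻¹) * d ^ 2 ≤ (1 + ε⁻¹) * L ^ 2 := by gcongr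
    nlinarith
  rw [favg_add, favg_const_mul, favg_const S hS, h2, h1] at h3
  nlinarith [sq_nonneg (favg S X - favg S Y)]

lemma moments_transfer (α : ℕ → Type) (S : ∀ n, Finset (α n)) (hS : ∀ n, (S n).Nonempty)
    (X Y : ∀ n, α n → ℝ) (L : ℝ) (h : ∀ᶠ n in atTop, ∀ a ∈ S n, |X n a - Y n a| ≤ L) (μ v : ℝ)
    (h1 : Tendsto (fun n : ℕ => favg (S n) (Y n) / n) atTop (nhds μ))
    (h2 : Tendsto (fun n : ℕ => (favg (S n) (fun a => Y n a ^ 2) - favg (S n) (Y n) ^ 2) / n) atTop (nhds v)) :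
    Tendsto (fun n : ℕ => favg (S n) (X n) / n) atTop (nhds μ) ∧
    Tendsto (fun n : ℕ => (favg (S n) (fun a => X n a ^ 2) - favg (S n) (X n) ^ 2) / n) atTop (nhds v) := by
  have hn0 := tendsto_one_div_atTop_nhds_zero_nat (𝕜 := ℝ)
  constructor
  · have h3 : Tendsto (fun n : ℕ => (favg (S n) (X n) - favg (S n) (Y n)) / n) atTop (nhds 0) := by
      have h4 := hn0.const_mul L
      rw [mul_zero] at h4
      refine squeeze_zero_norm' ?_ h4
      filter_upwards [h, eventually_gt_atTop 0] with n hn hn0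
      have := favg_diff (S n) (hS n) (X n) (Y n) L hn
      have hp : (0:ℝ) < n := by exact_mod_cast hn0
      rw [Real.norm_eq_abs, abs_div, abs_of_pos hp, mul_one_div]
      gcongr
    have := h3.add h1
    rw [zero_add] at this
    refine this.congr fun n => ?_
    ring
  · let ε : ℕ → ℝ := fun n => (Real.sqrt n)⁻¹
    have hst : Tendsto (fun n : ℕ => Real.sqrt n) atTop atTop :=
      Real.tendsto_sqrt_atTop.comp tendsto_natCast_atTop_atTop
    have hε : Tendsto ε atTop (nhds 0) := tendsto_inv_atTop_zero.comp hst
    have hε2 : Tendsto (fun n : ℕ => (1 + (ε n)⁻¹) * L ^ 2 / n) atTop (nhds 0) := by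
      have := (hn0.add hε).mul_const (L ^ 2)
      rw [add_zero, zero_mul] at this
      refine this.congr fun n => ?_
      simp only [ε, inv_inv]
      have : (Real.sqrt n)⁻¹ = Real.sqrt n / n := by
        rcases eq_or_ne n 0 with rfl | hn
        · simp
        · have : (n:ℝ) = Real.sqrt n * Real.sqrt n := (Real.mul_self_sqrt (by positivity)).symm
          nth_rw 3 [this]
          have : Real.sqrt n ≠ 0 := by positivity
          field_simp
      rw [this]; ring
    have hone : Tendsto (fun n => 1 + ε n) atTop (nhds 1) := by
      simpa using hε.const_add 1
    have hup : Tendsto (fun n : ℕ => (1 + ε n) * ((favg (S n) (fun a => Y n a ^ 2) -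
        favg (S n) (Y n) ^ 2) / n) + (1 + (ε n)⁻¹) * L ^ 2 / n) atTop (nhds v) := by
      simpa using (hone.mul h2).add hε2
    have hlow : Tendsto (fun n : ℕ => (((favg (S n) (fun a => Y n a ^ 2) -
        favg (S n) (Y n) ^ 2) / n) - (1 + (ε n)⁻¹) * L ^ 2 / n) / (1 + ε n)) atTop (nhds v) := by
      have h9 := (h2.sub hε2).div hone one_ne_zero
      rw [sub_zero, div_one] at h9
      exact h9
    refine tendsto_of_tendsto_of_tendsto_of_le_of_le' hlow hup ?_ ?_
    · filter_upwards [h, eventually_gt_atTop 0] with n hn hn0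
      have hp : (0:ℝ) < n := by exact_mod_cast hn0
      have he : 0 < ε n := inv_pos.2 (Real.sqrt_pos.2 hp)
      have := var_le (S n) (hS n) (Y n) (X n) L (fun a ha => by rw [abs_sub_comm]; exact hn a ha) (ε n) he
      rw [div_le_iff₀ (by positivity), ← sub_div, div_mul_eq_mul_div, div_le_div_iff_of_pos_right hp]
      linarith
    · filter_upwards [h, eventually_gt_atTop 0] with n hn hn0
      have hp : (0:ℝ) < n := by exact_mod_cast hn0
      have he : 0 < ε n := inv_pos.2 (Real.sqrt_pos.2 hp)
      have := var_le (S n) (hS n) (X n) (Y n) L hn (ε n) he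
      rw [← mul_div_assoc, ← add_div, div_le_div_iff_of_pos_right hp]
      exact this

end mom

section pos

variable {ℓ : ℕ} (P : ℕ → Bool)

lemma rho_ge (hℓ : 1 ≤ ℓ) : (1 / 2) ^ ℓ ≤ rhoP ℓ P := by
  have : NeZero (3 * ℓ) := ⟨by omega⟩
  rw [← near_ravg (M := 3 * ℓ) P hℓ le_rfl 0, ← occ_ravg (M := 3 * ℓ) P (by omega) 0]
  apply ravg_mono
  intro b
  have hself : (0 : ZMod (3 * ℓ)) ∈ nearP (3 * ℓ) ℓ 0 := by
    unfold nearP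
    simp only [Finset.mem_image, Finset.mem_range]
    exact ⟨ℓ - 1, by omega, by ring⟩
  have h := Finset.single_le_sum (f := fun y => occ (3 * ℓ) ℓ P 0 b * occ (3 * ℓ) ℓ P y b)
    (fun y _ => mul_nonneg (occ_nonneg P _ _) (occ_nonneg P _ _)) hself
  rw [occ_sq] at h
  exact h

lemma occ_succ (M : ℕ) (x : ZMod M) (b : ZMod M → Bool) (hℓ : 1 ≤ ℓ) (hP : ∀ c < ℓ, P c = true) :
    occ M ℓ P x b * occ M ℓ P (x + 1) b = occ M (ℓ + 1) (fun _ => true) x b := by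
  unfold occ
  by_cases h : ∀ c < ℓ + 1, b (x + (c : ZMod M)) = true
  · rw [if_pos h, if_pos, if_pos, one_mul]
    · intro c hc
      rw [hP c hc, ← h (c + 1) (by omega)]
      push_cast; ring_nf
    · intro c hc
      rw [hP c hc, h c (by omega)]
  · rw [if_neg h]
    by_cases h1 : ∀ c < ℓ, b (x + (c : ZMod M)) = P c
    · rw [if_pos h1, one_mul, if_neg]
      intro h2
      apply h
      intro c hc
      rcases Nat.lt_or_ge c ℓ with h3 | h3
      · rw [h1 c h3, hP c h3]
      · have : c = (ℓ - 1) + 1 := by omega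
        rw [this]
        have := h2 (ℓ - 1) (by omega)
        rw [hP _ (by omega)] at this
        rw [← this]
        push_cast; ring_nf
    · rw [if_neg h1, zero_mul]

lemma rho_ge_two (hℓ : 2 ≤ ℓ) (hP : ∀ c < ℓ, P c = true) : 2 * (1 / 2) ^ ℓ ≤ rhoP ℓ P := by
  have : NeZero (3 * ℓ) := ⟨by omega⟩
  have hp : (2:ℝ) * (1 / 2) ^ ℓ = (1 / 2) ^ ℓ + ((1 / 2) ^ (ℓ + 1) + (1 / 2) ^ (ℓ + 1)) := by
    rw [pow_succ]; ring
  rw [← near_ravg (M := 3 * ℓ) P (by omega) le_rfl 1, hp, ← occ_ravg (M := 3 * ℓ) P (by omega) 1]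
  have h1 := occ_ravg (M := 3 * ℓ) (ℓ := ℓ + 1) (fun _ => true) (by omega) 1
  have h2 := occ_ravg (M := 3 * ℓ) (ℓ := ℓ + 1) (fun _ => true) (by omega) 0
  nth_rw 1 [← h1]
  rw [← h2, ← ravg_add, ← ravg_add]
  apply ravg_mono
  intro b
  have hinj := zmod_add_inj (M := 3 * ℓ) (L := 2 * ℓ - 1) (by omega) (1 - ((ℓ - 1 : ℕ) : ZMod (3 * ℓ)))
  unfold nearP
  rw [Finset.sum_image hinj]
  have hsub : ({ℓ - 2, ℓ - 1, ℓ} : Finset ℕ) ⊆ Finset.range (2 * ℓ - 1) := by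
    intro c hc
    simp only [Finset.mem_insert, Finset.mem_singleton] at hc
    rw [Finset.mem_range]; omega
  refine le_trans ?_ (Finset.sum_le_sum_of_subset_of_nonneg hsub
    (fun y _ _ => mul_nonneg (occ_nonneg P _ _) (occ_nonneg P _ _)))
  rw [Finset.sum_insert (by simp; omega), Finset.sum_insert (by simp; omega), Finset.sum_singleton]
  have e1 : (1 : ZMod (3 * ℓ)) - ((ℓ - 1 : ℕ) : ZMod (3 * ℓ)) + ((ℓ - 2 : ℕ) : ZMod (3 * ℓ)) = 0 := by
    rw [Nat.cast_sub (by omega), Nat.cast_sub (by omega)]; push_cast; ring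
  have e2 : (1 : ZMod (3 * ℓ)) - ((ℓ - 1 : ℕ) : ZMod (3 * ℓ)) + ((ℓ - 1 : ℕ) : ZMod (3 * ℓ)) = 1 := by ring
  have e3 : (1 : ZMod (3 * ℓ)) - ((ℓ - 1 : ℕ) : ZMod (3 * ℓ)) + ((ℓ : ℕ) : ZMod (3 * ℓ)) = 1 + 1 := by
    rw [Nat.cast_sub (by omega)]; push_cast; ring
  rw [e1, e2, e3, occ_sq, occ_succ P _ 1 b (by omega) hP]
  have h3 := occ_succ P _ (0 : ZMod (3 * ℓ)) b (by omega) hP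
  rw [zero_add] at h3
  rw [← h3]
  apply le_of_eq; ring

lemma v0_pos (hℓ : 2 ≤ ℓ) (hud : pcount ℓ P false + 2 ≤ pcount ℓ P true) : 0 < v0 ℓ P := by
  have hadd := pcount_add ℓ P
  have hpow : ((1 / 2 : ℝ) ^ ℓ) * 2 ^ ℓ = 1 := by rw [← mul_pow]; norm_num
  have hp0 : (0:ℝ) < (1 / 2) ^ ℓ := by positivity
  unfold v0 dlt
  have hR : (pcount ℓ P true : ℝ) + pcount ℓ P false = ℓ := by exact_mod_cast hadd
  have hudR : (pcount ℓ P false : ℝ) + 2 ≤ pcount ℓ P true := by exact_mod_cast hud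
  rcases Nat.eq_zero_or_pos (pcount ℓ P false) with h0 | h0
  · have hP : ∀ c < ℓ, P c = true := by
      intro c hc
      unfold pcount at h0
      rw [Finset.card_eq_zero, Finset.filter_eq_empty_iff] at h0
      have := h0 (Finset.mem_range.2 hc)
      simpa using this
    have h1 := rho_ge_two P hℓ hP
    have h2 : ∀ k : ℕ, 2 ≤ k → k ^ 2 + 2 * k < 2 * 2 ^ k + 1 := by
      intro k hk
      induction k, hk using Nat.le_induction with
      | base => norm_num
      | succ k hk ih =>
        have h4 : 2 * k + 2 ≤ 2 * 2 ^ k := by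
          clear ih
          induction k, hk using Nat.le_induction with
          | base => norm_num
          | succ k hk ih => rw [pow_succ]; omega
        rw [pow_succ 2 k]
        nlinarith
    have h3 : (ℓ:ℝ) ^ 2 + 2 * ℓ < 2 * 2 ^ ℓ + 1 := by exact_mod_cast h2 ℓ hℓ
    rw [h0] at hR ⊢
    have hu : (pcount ℓ P true : ℝ) = ℓ := by push_cast at hR; linarith
    rw [hu]
    push_cast
    set p := (1 / 2 : ℝ) ^ ℓ
    have h5 : p ^ 2 * ((ℓ:ℝ) ^ 2 + 2 * ℓ - 1) < p ^ 2 * (2 * 2 ^ ℓ) := by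
      apply mul_lt_mul_of_pos_left _ (by positivity); linarith
    have h6 : p ^ 2 * (2 * 2 ^ ℓ) = 2 * p := by
      calc p ^ 2 * (2 * 2 ^ ℓ) = 2 * p * (p * 2 ^ ℓ) := by ring
        _ = _ := by rw [hpow, mul_one]
    nlinarith
  · have h1 := rho_ge P (by omega : 1 ≤ ℓ)
    have h2 : ∀ k : ℕ, 4 ≤ k → k ^ 2 + 3 < 2 ^ k + 2 * k := by
      intro k hk
      induction k, hk using Nat.le_induction with
      | base => norm_num
      | succ k hk ih =>
        have h4 : 2 * k + 2 ≤ 2 ^ k := by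
          clear ih
          induction k, hk using Nat.le_induction with
          | base => norm_num
          | succ k hk ih => rw [pow_succ]; omega
        rw [pow_succ 2 k]
        nlinarith
    have h3 : (ℓ:ℝ) ^ 2 + 3 < 2 ^ ℓ + 2 * ℓ := by exact_mod_cast h2 ℓ (by omega)
    have h0R : (1:ℝ) ≤ pcount ℓ P false := by exact_mod_cast h0
    set D := (pcount ℓ P true : ℝ) - pcount ℓ P false with hD
    have hD2 : D ^ 2 ≤ (ℓ - 2) ^ 2 := by
      apply pow_le_pow_left₀ <;> linarith
    set p := (1 / 2 : ℝ) ^ ℓ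
    have h5 : p ^ 2 * (2 * ℓ - 1 + D ^ 2) < p ^ 2 * (2 ^ ℓ) := by
      apply mul_lt_mul_of_pos_left _ (by positivity); nlinarith
    have h6 : p ^ 2 * (2 ^ ℓ) = p := by
      calc p ^ 2 * (2 ^ ℓ) = p * (p * 2 ^ ℓ) := by ring
        _ = _ := by rw [hpow, mul_one]
    nlinarith

end pos


section cycle

/-- number of letters `true` among the first `k` ones -/
def cnt {M : ℕ} (b : ZMod M → Bool) (k : ℕ) : ℕ := Nat.count (fun j : ℕ => b (j : ZMod M) = true) k

def hgt {M : ℕ} (b : ZMod M → Bool) (k : ℕ) : ℤ := 2 * (cnt b k : ℤ) - k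

def rot {M : ℕ} (r : ZMod M) (b : ZMod M → Bool) : ZMod M → Bool := fun x => b (x + r)

open Classical in
def Dd (n : ℕ) : Finset (ZMod (2 * n + 1) → Bool) :=
  (Wd n).filter (fun b => ∀ k ∈ Finset.Icc 1 (2 * n + 1), 0 < hgt b k)

lemma mem_Dd (n : ℕ) (b : ZMod (2 * n + 1) → Bool) : b ∈ Dd n ↔ b ∈ Wd n ∧
    ∀ k ∈ Finset.Icc 1 (2 * n + 1), 0 < hgt b k := by
  classical
  unfold Dd
  simp only [Finset.mem_filter]

lemma cnt_add {M : ℕ} (b : ZMod M → Bool) (r k : ℕ) :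
    cnt b (r + k) = cnt b r + cnt (rot (r : ZMod M) b) k := by
  unfold cnt
  rw [Nat.count_add]
  congr 2
  funext j
  unfold rot
  push_cast
  rw [add_comm (r : ZMod M)]

lemma hgt_add {M : ℕ} (b : ZMod M → Bool) (r k : ℕ) :
    hgt b (r + k) = hgt b r + hgt (rot (r : ZMod M) b) k := by
  unfold hgt
  rw [cnt_add]; push_cast; ring

lemma ups_rot {M : ℕ} [NeZero M] (r : ZMod M) (b : ZMod M → Bool) : ups (rot r b) = ups b := by
  unfold ups rot
  apply Finset.card_bij (fun x _ => x + r)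
  · intro a ha; simpa using ha
  · intro a _ a' _ h; exact add_right_cancel h
  · intro y hy; exact ⟨y - r, by simpa using hy, by ring⟩

lemma cnt_full {M : ℕ} [NeZero M] (b : ZMod M → Bool) : cnt b M = ups b := by
  unfold cnt ups
  rw [Nat.count_eq_card_filter_range]
  apply Finset.card_bij (fun (j : ℕ) _ => (j : ZMod M))
  · intro j hj; simp at hj; simp [hj.2]
  · intro j hj j' hj' h
    simp at hj hj'
    rw [ZMod.natCast_eq_natCast_iff', Nat.mod_eq_of_lt hj.1, Nat.mod_eq_of_lt hj'.1] at h
    exact h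
  · intro y hy
    refine ⟨y.val, ?_, by simp⟩
    simp at hy
    simp [hy, ZMod.val_lt]

lemma rot_zero {M : ℕ} (b : ZMod M → Bool) : rot 0 b = b := by
  unfold rot; simp

lemma hgt_period (n : ℕ) (b : ZMod (2 * n + 1) → Bool) (hb : ups b = n + 1) (k : ℕ) :
    hgt b (k + (2 * n + 1)) = hgt b k + 1 := by
  rw [hgt_add]
  congr 1
  unfold hgt
  rw [cnt_full, ups_rot, hb]
  push_cast; ring

lemma cycle_lemma (n : ℕ) (b : ZMod (2 * n + 1) → Bool) (hb : b ∈ Wd n) :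
    ∃! r : ZMod (2 * n + 1), rot r b ∈ Dd n := by
  have hu : ups b = n + 1 := by unfold Wd at hb; simpa using hb
  have hper := hgt_period n b hu
  have key : ∀ r : ZMod (2 * n + 1), rot r b ∈ Dd n ↔
      ∀ k, 1 ≤ k → k ≤ 2 * n + 1 → hgt b r.val < hgt b (r.val + k) := by
    intro r
    unfold Dd Wd
    simp only [Finset.mem_filter, Finset.mem_univ, true_and, ups_rot, hu, Finset.mem_Icc, and_imp]
    refine forall₃_congr fun k _ _ => ?_
    rw [hgt_add, ZMod.natCast_val, ZMod.cast_id', id]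
    omega
  obtain ⟨r, hr, hmin⟩ := Finset.exists_min_image (Finset.range (2 * n + 1))
    (fun r : ℕ => ((2 * n + 1 : ℕ) : ℤ) * hgt b r - r) ⟨0, by simp⟩
  rw [Finset.mem_range] at hr
  have hle : ∀ a < 2 * n + 1, hgt b r ≤ hgt b a := by
    intro a ha
    have := hmin a (Finset.mem_range.2 ha)
    by_contra hc
    push Not at hc
    have h1 : hgt b a + 1 ≤ hgt b r := hc
    have h2 : ((2 * n + 1 : ℕ) : ℤ) * (hgt b a + 1) ≤ ((2 * n + 1 : ℕ) : ℤ) * hgt b r :=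
      mul_le_mul_of_nonneg_left h1 (by positivity)
    rw [mul_add] at h2
    omega
  refine ⟨(r : ZMod (2 * n + 1)), ?_, ?_⟩
  · show rot (r : ZMod (2 * n + 1)) b ∈ Dd n
    rw [key]
    intro k h1 h2
    rw [ZMod.val_natCast, Nat.mod_eq_of_lt hr]
    rcases Nat.lt_or_ge (r + k) (2 * n + 1) with h3 | h3
    · have h4 := hmin _ (Finset.mem_range.2 h3)
      have h5 := hle _ h3
      rcases lt_or_eq_of_le h5 with h6 | h6
      · exact h6
      · rw [← h6] at h4
        push_cast at h4
        omega
    · have h4 : r + k = (r + k - (2 * n + 1)) + (2 * n + 1) := by omega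
      rw [h4, hper]
      have := hle (r + k - (2 * n + 1)) (by omega)
      omega
  · intro r' hr'
    have h1 : rot (r : ZMod (2 * n + 1)) b ∈ Dd n → True := fun _ => trivial
    have hlt := ZMod.val_lt r'
    change rot r' b ∈ Dd n at hr'
    rw [key] at hr'
    have hv : r'.val = r := by
      rcases lt_trichotomy r'.val r with h | h | h
      · exfalso
        have h2 := hr' (r - r'.val) (by omega) (by omega)
        rw [show r'.val + (r - r'.val) = r by omega] at h2
        have h3 := hle r'.val hlt
        omega
      · exact h
      · exfalso
        have h2 := hr' (2 * n + 1 - r'.val + r) (by omega) (by omega)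
        rw [show r'.val + (2 * n + 1 - r'.val + r) = r + (2 * n + 1) by omega, hper] at h2
        have h3 := hle r'.val hlt
        have h4 := hmin _ (Finset.mem_range.2 hlt)
        have h5 : hgt b r'.val = hgt b r := by omega
        rw [h5] at h4
        omega
    rw [← hv]; simp

lemma cycle_sum {E : Type} [AddCommMonoid E] (n : ℕ) (G : (ZMod (2 * n + 1) → Bool) → E)
    (hG : ∀ r b, G (rot r b) = G b) :
    ∑ b ∈ Wd n, G b = (2 * n + 1) • ∑ b ∈ Dd n, G b := by
  have h1 : ∀ b ∈ Wd n, G b = ∑ r : ZMod (2 * n + 1), if rot r b ∈ Dd n then G (rot r b) else 0 := by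
    intro b hb
    obtain ⟨r, hr, huniq⟩ := cycle_lemma n b hb
    rw [Finset.sum_eq_single r]
    · rw [if_pos hr, hG]
    · intro r' _ hne
      rw [if_neg]
      intro h; exact hne (huniq r' h)
    · simp
  rw [Finset.sum_congr rfl h1, Finset.sum_comm]
  have h2 : ∀ r : ZMod (2 * n + 1), ∑ b ∈ Wd n, (if rot r b ∈ Dd n then G (rot r b) else 0) =
      ∑ b ∈ Dd n, G b := by
    intro r
    rw [← Finset.sum_filter]
    apply Finset.sum_bij (fun b _ => rot r b)
    · intro b hb; exact (Finset.mem_filter.1 hb).2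
    · intro b _ b' _ h
      funext x
      have := congrFun h (x - r)
      simpa [rot] using this
    · intro b hb
      refine ⟨rot (-r) b, ?_, ?_⟩
      · have e : rot r (rot (-r) b) = b := by funext x; simp [rot]
        rw [Finset.mem_filter, e]
        refine ⟨?_, hb⟩
        have := ((mem_Dd n b).1 hb).1
        unfold Wd at this ⊢
        simp only [Finset.mem_filter, Finset.mem_univ, true_and] at this ⊢
        rw [ups_rot, this]
      · funext x; simp [rot]
    · intro b _; rfl
  rw [Finset.sum_congr rfl (fun r _ => h2 r), Finset.sum_const, Finset.card_univ, ZMod.card]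

lemma Ycy_rot (n ℓ : ℕ) (P : ℕ → Bool) (r : ZMod (2 * n + 1)) (b : ZMod (2 * n + 1) → Bool) :
    Ycy (2 * n + 1) ℓ P (rot r b) = Ycy (2 * n + 1) ℓ P b := by
  unfold Ycy
  symm
  rw [← Equiv.sum_comp (Equiv.addRight r)]
  apply Finset.sum_congr rfl
  intro x _
  unfold occ rot
  simp only [Equiv.coe_addRight]
  congr 1
  apply propext
  refine forall₂_congr fun c _ => ?_
  rw [add_right_comm]

lemma Wd_card_Dd (n : ℕ) : (Wd n).card = (2 * n + 1) * (Dd n).card := by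
  have := cycle_sum n (fun _ => (1:ℕ)) (fun _ _ => rfl)
  simpa using this

lemma Wd_card_pos (n : ℕ) : 0 < (Wd n).card := by
  have h := Wd_card n
  have : 0 < (2 * n + 1).choose (n + 1) := Nat.choose_pos (by omega)
  have h2 : (Wd n).card = (2 * n + 1).choose (n + 1) := by exact_mod_cast h
  omega

lemma Dd_nonempty (n : ℕ) : (Dd n).Nonempty := by
  have h1 := Wd_card_pos n
  rw [Wd_card_Dd] at h1
  exact Finset.card_pos.1 (Nat.pos_of_mul_pos_left h1)

lemma favg_Dd (n : ℕ) (G : (ZMod (2 * n + 1) → Bool) → ℝ) (hG : ∀ r b, G (rot r b) = G b) :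
    favg (Dd n) G = favg (Wd n) G := by
  unfold favg
  rw [cycle_sum n G hG, Wd_card_Dd, nsmul_eq_mul, Nat.cast_mul]
  have : ((2 * n + 1 : ℕ) : ℝ) ≠ 0 := by positivity
  rw [mul_div_mul_left _ _ this]

lemma cavg_Dd (n : ℕ) (G : (ZMod (2 * n + 1) → Bool) → ℂ) (hG : ∀ r b, G (rot r b) = G b) :
    (∑ b ∈ Dd n, G b) / ((Dd n).card : ℂ) = (∑ b ∈ Wd n, G b) / ((Wd n).card : ℂ) := by
  rw [cycle_sum n G hG, Wd_card_Dd, nsmul_eq_mul, Nat.cast_mul]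
  have : ((2 * n + 1 : ℕ) : ℂ) ≠ 0 := by exact_mod_cast (by omega : 2 * n + 1 ≠ 0)
  rw [mul_div_mul_left _ _ this]

end cycle


section bijection

def pos (s : ℕ → ℤ) (i : ℕ) : ℕ := (2 * (i : ℤ) - ∑ j ∈ Finset.range i, s j).toNat

lemma luka_pattern {n : ℕ} {s : ℕ → ℤ} (h : IsLukaSteps n s) : IsPattern n s := ⟨h.2.1, h.2.2⟩

lemma psum_le {n : ℕ} {s : ℕ → ℤ} (h : IsPattern n s) (i : ℕ) (hi : i ≤ n) :
    ∑ j ∈ Finset.range i, s j ≤ i := by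
  induction i with
  | zero => simp
  | succ k ih =>
    rw [Finset.sum_range_succ]
    have h1 := ih (by omega)
    have h2 := h.1 k (by omega)
    push_cast; omega

lemma pos_cast {n : ℕ} {s : ℕ → ℤ} (h : IsPattern n s) (i : ℕ) (hi : i ≤ n) :
    (pos s i : ℤ) = 2 * (i : ℤ) - ∑ j ∈ Finset.range i, s j := by
  unfold pos
  have := psum_le h i hi
  omega

lemma pos_succ {n : ℕ} {s : ℕ → ℤ} (h : IsPattern n s) (i : ℕ) (hi : i < n) :
    (pos s (i + 1) : ℤ) = pos s i + 2 - s i := by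
  rw [pos_cast h _ hi, pos_cast h _ hi.le, Finset.sum_range_succ]
  push_cast; ring

lemma pos_lt_succ {n : ℕ} {s : ℕ → ℤ} (h : IsPattern n s) (i : ℕ) (hi : i < n) :
    pos s i < pos s (i + 1) := by
  have h1 := pos_succ h i hi
  have h2 := h.1 i hi
  omega

lemma pos_lt {n : ℕ} {s : ℕ → ℤ} (h : IsPattern n s) (i j : ℕ) (hij : i < j) (hj : j ≤ n) :
    pos s i < pos s j := by
  induction j with
  | zero => omega
  | succ k ih =>
    have h1 := pos_lt_succ h k (by omega)
    rcases Nat.lt_or_ge i k with h2 | h2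
    · have := ih h2 (by omega); omega
    · have : i = k := by omega
      subst this; exact h1

lemma pos_lt_iff {n : ℕ} {s : ℕ → ℤ} (h : IsPattern n s) (i j : ℕ) (hi : i ≤ n) (hj : j ≤ n) :
    pos s i < pos s j ↔ i < j := by
  constructor
  · intro h1
    by_contra hc
    rcases Nat.lt_or_ge j i with h2 | h2
    · have := pos_lt h j i h2 hi; omega
    · have : i = j := by omega
      subst this; omega
  · intro h1; exact pos_lt h i j h1 hj

lemma pos_inj {n : ℕ} {s : ℕ → ℤ} (h : IsPattern n s) (i j : ℕ) (hi : i ≤ n) (hj : j ≤ n)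
    (he : pos s i = pos s j) : i = j := by
  have h1 := pos_lt_iff h i j hi hj
  have h2 := pos_lt_iff h j i hj hi
  omega

lemma pos_zero (s : ℕ → ℤ) : pos s 0 = 0 := by simp [pos]

lemma pos_upper {n : ℕ} {s : ℕ → ℤ} (h : IsPattern n s) (i : ℕ) (h1 : 1 ≤ i) (hi : i ≤ n) :
    pos s i + 1 ≤ 2 * i := by
  have h2 := pos_cast h i hi
  have h3 := h.2 i h1 hi
  omega

lemma pos_lt_M {n : ℕ} {s : ℕ → ℤ} (h : IsPattern n s) (i : ℕ) (hi : i ≤ n) :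
    pos s i < 2 * n + 1 := by
  rcases Nat.eq_zero_or_pos i with h0 | h0
  · subst h0; rw [pos_zero]; omega
  · have := pos_upper h i h0 hi; omega

def LRel (n : ℕ) (s : ℕ → ℤ) (b : ZMod (2 * n + 1) → Bool) : Prop :=
  ∀ j < 2 * n + 1, b (j : ZMod (2 * n + 1)) = true ↔ ∃ i ≤ n, pos s i = j

lemma rel_cnt {n : ℕ} {s : ℕ → ℤ} {b : ZMod (2 * n + 1) → Bool} (h : IsPattern n s)
    (hr : LRel n s b) (k : ℕ) (hk : k ≤ 2 * n + 1) :
    cnt b k = ((Finset.range (n + 1)).filter (fun i => pos s i < k)).card := by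
  unfold cnt
  rw [Nat.count_eq_card_filter_range]
  symm
  apply Finset.card_bij (fun i _ => pos s i)
  · intro i hi
    simp only [Finset.mem_filter, Finset.mem_range] at hi ⊢
    exact ⟨hi.2, (hr _ (by omega)).2 ⟨i, by omega, rfl⟩⟩
  · intro i hi j hj he
    simp only [Finset.mem_filter, Finset.mem_range] at hi hj
    exact pos_inj h i j (by omega) (by omega) he
  · intro j hj
    simp only [Finset.mem_filter, Finset.mem_range] at hj
    obtain ⟨i, hi, he⟩ := (hr j (by omega)).1 hj.2
    refine ⟨i, ?_, he⟩
    simp only [Finset.mem_filter, Finset.mem_range]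
    omega

lemma rel_cnt_pos {n : ℕ} {s : ℕ → ℤ} {b : ZMod (2 * n + 1) → Bool} (h : IsPattern n s)
    (hr : LRel n s b) (i : ℕ) (hi : i ≤ n) : cnt b (pos s i) = i := by
  rw [rel_cnt h hr _ (pos_lt_M h i hi).le]
  have : (Finset.range (n + 1)).filter (fun j => pos s j < pos s i) = Finset.range i := by
    ext j
    simp only [Finset.mem_filter, Finset.mem_range]
    constructor
    · rintro ⟨h1, h2⟩; exact (pos_lt_iff h j i (by omega) hi).1 h2
    · intro h1; exact ⟨by omega, (pos_lt_iff h j i (by omega) hi).2 h1⟩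
  rw [this, Finset.card_range]

lemma rel_nth {n : ℕ} {s : ℕ → ℤ} {b : ZMod (2 * n + 1) → Bool} (h : IsPattern n s)
    (hr : LRel n s b) (i : ℕ) (hi : i ≤ n) :
    Nat.nth (fun j : ℕ => b (j : ZMod (2 * n + 1)) = true) i = pos s i := by
  have h1 := rel_cnt_pos h hr i hi
  unfold cnt at h1
  have h2 : (fun j : ℕ => b (j : ZMod (2 * n + 1)) = true) (pos s i) :=
    (hr _ (pos_lt_M h i hi)).2 ⟨i, hi, rfl⟩
  have h3 := Nat.nth_count (p := fun j : ℕ => b (j : ZMod (2 * n + 1)) = true) h2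
  rw [h1] at h3
  exact h3

lemma rel_mem {n : ℕ} {s : ℕ → ℤ} {b : ZMod (2 * n + 1) → Bool} (h : IsPattern n s)
    (hr : LRel n s b) : b ∈ Dd n := by
  rw [mem_Dd]
  constructor
  · unfold Wd
    simp only [Finset.mem_filter, Finset.mem_univ, true_and]
    rw [← cnt_full, rel_cnt h hr _ le_rfl, Finset.filter_true_of_mem, Finset.card_range]
    intro i hi
    exact pos_lt_M h i (by simpa [Nat.lt_succ_iff] using hi)
  · intro k hk
    rw [Finset.mem_Icc] at hk
    have hc := rel_cnt h hr k hk.2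
    set c := cnt b k with hcd
    have hcle : c ≤ n + 1 := by
      rw [hc]; exact (Finset.card_filter_le _ _).trans (by simp)
    unfold hgt
    rw [← hcd]
    rcases Nat.lt_or_ge c (n + 1) with h1 | h1
    · have h2 : k ≤ pos s c := by
        by_contra hcon
        push Not at hcon
        have h3 : (Finset.range (c + 1)).card ≤
            ((Finset.range (n + 1)).filter (fun i => pos s i < k)).card := by
          apply Finset.card_le_card
          intro j hj
          simp only [Finset.mem_filter, Finset.mem_range] at hj ⊢
          refine ⟨by omega, ?_⟩
          rcases Nat.lt_or_ge j c with h4 | h4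
          · have := pos_lt h j c h4 (by omega); omega
          · have : j = c := by omega
            rw [this]; exact hcon
        rw [Finset.card_range] at h3
        omega
      have h5 : c ≠ 0 := by
        intro h0; rw [h0, pos_zero] at h2; omega
      have := pos_upper h c (by omega) (by omega)
      omega
    · omega

lemma rel_exists_word (n : ℕ) (s : ℕ → ℤ) : ∃ b, LRel n s b := by
  classical
  refine ⟨fun x => decide (∃ i ≤ n, pos s i = x.val), ?_⟩
  intro j hj
  rw [decide_eq_true_eq, ZMod.val_natCast, Nat.mod_eq_of_lt hj]

lemma rel_exists_path (n : ℕ) (b : ZMod (2 * n + 1) → Bool) (hb : b ∈ Dd n) :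
    ∃ s, IsLukaSteps n s ∧ LRel n s b := by
  rw [mem_Dd] at hb
  obtain ⟨hW, hp⟩ := hb
  have hu : ups b = n + 1 := by unfold Wd at hW; simpa using hW
  have hM : cnt b (2 * n + 1) = n + 1 := by rw [cnt_full, hu]
  have hb0 : b 0 = true := by
    have := hp 1 (by simp)
    unfold hgt cnt at this
    rw [Nat.count_succ] at this
    by_contra hc
    simp [hc] at this
  set p : ℕ → Prop := fun j : ℕ => b (j : ZMod (2 * n + 1)) = true with hpd
  have hcp : ∀ k, Nat.count p k = cnt b k := fun k => rfl
  have hinf : (setOf p).Infinite := by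
    apply Set.infinite_of_injective_forall_mem (f := fun k : ℕ => (2 * n + 1) * k)
    · intro a a' h
      exact Nat.eq_of_mul_eq_mul_left (by omega) h
    · intro k
      show b (((2 * n + 1) * k : ℕ) : ZMod (2 * n + 1)) = true
      rw [Nat.cast_mul, ZMod.natCast_self, zero_mul, hb0]
  have hn0 : Nat.nth p 0 = 0 := by
    have h2 : p 0 := by show b ((0 : ℕ) : ZMod (2 * n + 1)) = true; simpa using hb0
    have := Nat.nth_count h2
    simpa using this
  have hmono := Nat.nth_strictMono hinf
  have hlt : ∀ i ≤ n, Nat.nth p i < 2 * n + 1 := by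
    intro i hi
    apply Nat.nth_lt_of_lt_count
    rw [hcp, hM]; omega
  set s : ℕ → ℤ := fun i => if i < n then 2 - ((Nat.nth p (i + 1) : ℤ) - Nat.nth p i) else 0 with hs
  have hsum : ∀ i ≤ n, ∑ j ∈ Finset.range i, s j = 2 * (i : ℤ) - Nat.nth p i := by
    intro i
    induction i with
    | zero => intro _; simp [hn0]
    | succ k ih =>
      intro hk
      rw [Finset.sum_range_succ, ih (by omega)]
      simp only [hs]
      rw [if_pos (by omega)]
      push_cast; ring
  have hpos : ∀ i ≤ n, pos s i = Nat.nth p i := by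
    intro i hi
    unfold pos
    rw [hsum i hi]; omega
  refine ⟨s, ⟨?_, ?_, ?_⟩, ?_⟩
  · intro i hi
    simp only [hs]; rw [if_neg (by omega)]
  · intro i hi
    simp only [hs]; rw [if_pos hi]
    have := hmono (Nat.lt_succ_self i)
    simp only [Nat.succ_eq_add_one] at this
    omega
  · intro i h1 hi
    rw [hsum i hi]
    have h2 : 0 < Nat.nth p i := by
      have := hmono (show 0 < i by omega)
      omega
    have h3 := hp (Nat.nth p i) (Finset.mem_Icc.2 ⟨h2, (hlt i hi).le⟩)
    unfold hgt at h3
    rw [← hcp, Nat.count_nth_of_infinite hinf] at h3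
    exact h3
  · intro j hj
    constructor
    · intro hbj
      have hpj : p j := hbj
      have h1 := Nat.nth_count hpj
      have h2 : Nat.count p (j + 1) ≤ Nat.count p (2 * n + 1) := Nat.count_monotone p (by omega)
      rw [Nat.count_succ, if_pos hpj, hcp (2 * n + 1), hM] at h2
      refine ⟨Nat.count p j, by omega, ?_⟩
      rw [hpos _ (by omega), h1]
    · rintro ⟨i, hi, he⟩
      rw [hpos i hi] at he
      have := Nat.nth_mem_of_infinite hinf i
      rw [he] at this
      exact this

lemma rel_unique_word {n : ℕ} {s : ℕ → ℤ} {b b' : ZMod (2 * n + 1) → Bool}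
    (h : LRel n s b) (h' : LRel n s b') : b = b' := by
  funext x
  have h1 := h x.val (ZMod.val_lt x)
  have h2 := h' x.val (ZMod.val_lt x)
  rw [← h2] at h1
  rw [ZMod.natCast_val, ZMod.cast_id', id] at h1
  exact Bool.eq_iff_iff.2 h1

lemma rel_unique_path {n : ℕ} {s s' : ℕ → ℤ} {b : ZMod (2 * n + 1) → Bool}
    (hs : IsLukaSteps n s) (hs' : IsLukaSteps n s') (h : LRel n s b) (h' : LRel n s' b) :
    s = s' := by
  have e : ∀ i ≤ n, pos s i = pos s' i := by
    intro i hi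
    rw [← rel_nth (luka_pattern hs) h i hi, ← rel_nth (luka_pattern hs') h' i hi]
  funext i
  rcases Nat.lt_or_ge i n with hi | hi
  · have h1 := pos_succ (luka_pattern hs) i hi
    have h2 := pos_succ (luka_pattern hs') i hi
    rw [e i hi.le, e (i + 1) hi] at h1
    omega
  · rw [hs.1 i hi, hs'.1 i hi]

lemma exists_equiv (n : ℕ) :
    ∃ e : {b // b ∈ Dd n} ≃ {s : ℕ → ℤ // IsLukaSteps n s}, ∀ b, LRel n (e b).1 b.1 := by
  choose f hf hr using fun b : {b // b ∈ Dd n} => rel_exists_path n b.1 b.2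
  refine ⟨Equiv.ofBijective (fun b => ⟨f b, hf b⟩) ⟨?_, ?_⟩, ?_⟩
  · intro b b' h
    have h1 : f b = f b' := congrArg Subtype.val h
    apply Subtype.ext
    have := hr b
    rw [h1] at this
    exact rel_unique_word this (hr b')
  · rintro ⟨s, hs⟩
    obtain ⟨b, hb⟩ := rel_exists_word n s
    have hbm := rel_mem (luka_pattern hs) hb
    refine ⟨⟨b, hbm⟩, Subtype.ext ?_⟩
    exact rel_unique_path (hf _) hs (hr ⟨b, hbm⟩) hb
  · intro b; exact hr b

end bijection

section occurrences

open Classical in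
def Pw (m : ℕ) (ω : ℕ → ℤ) (c : ℕ) : Bool := decide (∃ j ≤ m, pos ω j = c)

lemma Pw_iff (m : ℕ) (ω : ℕ → ℤ) (c : ℕ) : Pw m ω c = true ↔ ∃ j ≤ m, pos ω j = c := by
  classical
  unfold Pw; rw [decide_eq_true_eq]

lemma Pw_pcount {m : ℕ} {ω : ℕ → ℤ} (hω : IsPattern m ω) :
    pcount (pos ω m + 1) (Pw m ω) true = m + 1 := by
  unfold pcount
  rw [← Finset.card_range (m + 1)]
  symm
  apply Finset.card_bij (fun i _ => pos ω i)
  · intro i hi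
    simp only [Finset.mem_filter, Finset.mem_range] at hi ⊢
    refine ⟨?_, (Pw_iff _ _ _).2 ⟨i, by omega, rfl⟩⟩
    have := pos_lt_iff hω m i le_rfl (by omega)
    omega
  · intro i hi j hj he
    simp only [Finset.mem_range] at hi hj
    exact pos_inj hω i j (by omega) (by omega) he
  · intro c hc
    simp only [Finset.mem_filter, Finset.mem_range] at hc
    obtain ⟨j, hj, he⟩ := (Pw_iff _ _ _).1 hc.2
    exact ⟨j, Finset.mem_range.2 (by omega), he⟩

lemma Pw_hud {m : ℕ} (hm : 1 ≤ m) {ω : ℕ → ℤ} (hω : IsPattern m ω) :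
    2 ≤ pos ω m + 1 ∧ pcount (pos ω m + 1) (Pw m ω) false + 2 ≤
      pcount (pos ω m + 1) (Pw m ω) true := by
  have h1 := Pw_pcount hω
  have h2 := pcount_add (pos ω m + 1) (Pw m ω)
  have h3 := pos_upper hω m hm le_rfl
  have h4 := pos_lt hω 0 m hm le_rfl
  omega

lemma occ_fwd_pos {m n k : ℕ} {ω s : ℕ → ℤ} (hω : IsPattern m ω) (hs : IsPattern n s)
    (hk : k + m ≤ n) (ho : ∀ j < m, s (k + j) = ω j) (j : ℕ) (hj : j ≤ m) :
    pos s (k + j) = pos s k + pos ω j := by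
  induction j with
  | zero => simp [pos_zero]
  | succ i ih =>
    have h1 := ih (by omega)
    have h2 := pos_succ hs (k + i) (by omega)
    have h3 := pos_succ hω i (by omega)
    have h4 := ho i (by omega)
    rw [← add_assoc]
    omega

lemma occ_fwd {m n k : ℕ} {ω s : ℕ → ℤ} {b : ZMod (2 * n + 1) → Bool} (hω : IsPattern m ω)
    (hs : IsPattern n s) (hr : LRel n s b)
    (hk : k + m ≤ n) (ho : ∀ j < m, s (k + j) = ω j) (c : ℕ) (hc : c < pos ω m + 1) :
    b ((pos s k : ZMod (2 * n + 1)) + (c : ZMod (2 * n + 1))) = Pw m ω c := by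
  have hp := occ_fwd_pos hω hs hk ho
  have h1 := hp m le_rfl
  have h2 := pos_lt_M hs (k + m) hk
  rw [← Nat.cast_add]
  apply Bool.eq_iff_iff.2
  rw [hr _ (by omega), Pw_iff]
  constructor
  · rintro ⟨i, hi, he⟩
    have h3 : ¬ i < k := by
      intro hlt
      have := pos_lt hs i k hlt (by omega)
      omega
    have h4 : ¬ k + m < i := by
      intro hlt
      have := pos_lt hs (k + m) i hlt hi
      omega
    have h5 := hp (i - k) (by omega)
    rw [show k + (i - k) = i by omega] at h5
    exact ⟨i - k, by omega, by omega⟩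
  · rintro ⟨j, hj, he⟩
    have := hp j hj
    exact ⟨k + j, by omega, by omega⟩

lemma occ_bwd {m n : ℕ} {ω s : ℕ → ℤ} {b : ZMod (2 * n + 1) → Bool} (hω : IsPattern m ω)
    (hs : IsPattern n s) (hr : LRel n s b) (x : ℕ) (hx : x + (pos ω m + 1) ≤ 2 * n + 1)
    (ho : ∀ c < pos ω m + 1, b ((x : ZMod (2 * n + 1)) + (c : ZMod (2 * n + 1))) = Pw m ω c) :
    ∃ k, k + m ≤ n ∧ pos s k = x ∧ ∀ j < m, s (k + j) = ω j := by
  have ho' : ∀ c < pos ω m + 1, (∃ i ≤ n, pos s i = x + c) ↔ ∃ j ≤ m, pos ω j = c := by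
    intro c hc
    rw [← Pw_iff m ω, ← ho c hc, ← Nat.cast_add, hr _ (by omega)]
  have hle : ∀ j ≤ m, pos ω j < pos ω m + 1 := by
    intro j hj
    have := pos_lt_iff hω m j le_rfl hj
    omega
  obtain ⟨k, hk, hkx⟩ := (ho' 0 (by omega)).2 ⟨0, by omega, pos_zero ω⟩
  have main : ∀ j ≤ m, k + j ≤ n ∧ pos s (k + j) = x + pos ω j := by
    intro j
    induction j with
    | zero => intro _; exact ⟨hk, by rw [pos_zero]; exact hkx⟩
    | succ j ih =>
      intro hj
      obtain ⟨h1, h2⟩ := ih (by omega)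
      have hωlt := pos_lt_succ hω j (by omega)
      obtain ⟨i, hi, hie⟩ := (ho' (pos ω (j + 1)) (hle _ hj)).2 ⟨j + 1, hj, rfl⟩
      have h3 : k + j < i := (pos_lt_iff hs _ _ h1 hi).1 (by omega)
      have h4 : k + (j + 1) ≤ n := by omega
      refine ⟨h4, ?_⟩
      have h5 : pos s (k + (j + 1)) ≤ pos s i := by
        have := pos_lt_iff hs i (k + (j + 1)) hi h4
        omega
      have h6 := pos_lt hs (k + j) (k + (j + 1)) (by omega) h4
      have h7 := hle (j + 1) hj
      obtain ⟨j', hj', he⟩ := (ho' (pos s (k + (j + 1)) - x) (by omega)).1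
        ⟨k + (j + 1), h4, by omega⟩
      have h8 : j < j' := (pos_lt_iff hω _ _ (by omega) hj').1 (by omega)
      have h9 : ¬ (pos ω j' < pos ω (j + 1)) := by
        rw [pos_lt_iff hω _ _ hj' hj]; omega
      omega
  refine ⟨k, (main m le_rfl).1, by omega, ?_⟩
  intro j hj
  have h1 := (main j hj.le).2
  have h2 := (main (j + 1) hj).2
  have h3 := pos_succ hω j hj
  have h4 := pos_succ hs (k + j) (by have := (main (j + 1) hj).1; omega)
  rw [← add_assoc] at h2
  omega

lemma occ_diff {m n : ℕ} {ω s : ℕ → ℤ} {b : ZMod (2 * n + 1) → Bool} (hω : IsPattern m ω)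
    (hs : IsPattern n s) (hr : LRel n s b) :
    |(occCount m ω n s : ℝ) - Ycy (2 * n + 1) (pos ω m + 1) (Pw m ω) b| ≤
      ((pos ω m + 1 : ℕ) : ℝ) := by
  classical
  set ℓ := pos ω m + 1 with hℓ
  set A : Finset ℕ := (Finset.range (n + 1)).filter
    (fun k => k + m ≤ n ∧ ∀ j < m, s (k + j) = ω j) with hA
  set B : Finset (ZMod (2 * n + 1)) := Finset.univ.filter
    (fun x => ∀ c < ℓ, b (x + (c : ZMod (2 * n + 1))) = Pw m ω c) with hB
  have hX : occCount m ω n s = A.card := by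
    unfold occCount
    rw [← Nat.card_eq_finsetCard]
    apply Nat.card_congr
    apply Equiv.subtypeEquivRight
    intro k
    simp only [hA, Finset.mem_filter, Finset.mem_range]
    constructor
    · intro h; exact ⟨by omega, h⟩
    · intro h; exact h.2
  have hY : Ycy (2 * n + 1) ℓ (Pw m ω) b = B.card := by
    unfold Ycy occ
    rw [Finset.sum_boole]
  have h1 : A.card ≤ B.card := by
    apply Finset.card_le_card_of_injOn (fun k => (pos s k : ZMod (2 * n + 1)))
    · intro k hk
      simp only [hA, Finset.coe_filter, Finset.mem_range, Set.mem_setOf_eq] at hk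
      simp only [hB, Finset.coe_filter, Finset.mem_univ, true_and, Set.mem_setOf_eq]
      intro c hc
      exact occ_fwd hω hs hr hk.2.1 hk.2.2 c hc
    · intro k hk k' hk' he
      simp only [hA, Finset.coe_filter, Finset.mem_range, Set.mem_setOf_eq] at hk hk'
      simp only at he
      rw [ZMod.natCast_eq_natCast_iff', Nat.mod_eq_of_lt (pos_lt_M hs k (by omega)),
        Nat.mod_eq_of_lt (pos_lt_M hs k' (by omega))] at he
      exact pos_inj hs k k' (by omega) (by omega) he
  have h2 : B.card ≤ A.card + ℓ := by
    have hsub : B ⊆ A.image (fun k => (pos s k : ZMod (2 * n + 1))) ∪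
        (Finset.Ico (2 * n + 1 - ℓ) (2 * n + 1)).image (fun k : ℕ => (k : ZMod (2 * n + 1))) := by
      intro x hx
      simp only [hB, Finset.mem_filter, Finset.mem_univ, true_and] at hx
      have hxv : ((x.val : ℕ) : ZMod (2 * n + 1)) = x := by simp
      have hlt := ZMod.val_lt x
      rw [Finset.mem_union, Finset.mem_image, Finset.mem_image]
      rcases Nat.lt_or_ge (2 * n + 1) (x.val + ℓ) with h | h
      · right
        exact ⟨x.val, Finset.mem_Ico.2 ⟨by omega, hlt⟩, hxv⟩
      · left
        obtain ⟨k, hk, hkx, hko⟩ := occ_bwd hω hs hr x.val h (by rw [hxv]; exact hx)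
        refine ⟨k, ?_, by rw [hkx, hxv]⟩
        simp only [hA, Finset.mem_filter, Finset.mem_range]
        exact ⟨by omega, hk, hko⟩
    calc B.card ≤ _ := Finset.card_le_card hsub
      _ ≤ _ := Finset.card_union_le _ _
      _ ≤ A.card + (Finset.Ico (2 * n + 1 - ℓ) (2 * n + 1)).card :=
        add_le_add Finset.card_image_le Finset.card_image_le
      _ ≤ A.card + ℓ := by rw [Nat.card_Ico]; omega
  rw [hX, hY]
  have h1' : (A.card : ℝ) ≤ B.card := by exact_mod_cast h1
  have h2' : (B.card : ℝ) ≤ A.card + ℓ := by exact_mod_cast h2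
  have h3' : (0:ℝ) ≤ ℓ := by positivity
  rw [abs_le]
  constructor <;> linarith

end occurrences


section clt

lemma levy_finite (α : ℕ → Type) [∀ n, Fintype (α n)] [∀ n, Nonempty (α n)] (Z : ∀ n, α n → ℝ)
    (h : ∀ t : ℝ, Tendsto (fun n => (∑ a, Complex.exp (Complex.I * ((t * Z n a : ℝ) : ℂ))) /
      (Fintype.card (α n) : ℂ)) atTop (nhds ((Real.exp (-t ^ 2 / 2) : ℝ) : ℂ))) (x : ℝ) :
    Tendsto (fun n => (Nat.card {a : α n // Z n a ≤ x} : ℝ) / (Fintype.card (α n) : ℝ)) atTop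
      (nhds ((Real.sqrt (2 * Real.pi))⁻¹ * ∫ t in Set.Iic x, Real.exp (-t ^ 2 / 2))) := by
  classical
  set ν : ∀ n, Measure ℝ := fun n => ((Fintype.card (α n) : ENNReal)⁻¹) •
    ∑ a, Measure.dirac (Z n a) with hν
  have hc0 : ∀ n, (Fintype.card (α n) : ENNReal) ≠ 0 := fun n => by
    exact_mod_cast Fintype.card_ne_zero
  have hprob : ∀ n, IsProbabilityMeasure (ν n) := by
    intro n
    constructor
    simp only [hν, Measure.smul_apply, Measure.finsetSum_apply, measure_univ, smul_eq_mul,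
      Finset.sum_const, Finset.card_univ, nsmul_eq_mul, mul_one]
    exact ENNReal.inv_mul_cancel (hc0 n) (ENNReal.natCast_ne_top _)
  set νp : ℕ → ProbabilityMeasure ℝ := fun n => ⟨ν n, hprob n⟩ with hνp
  set γ : ProbabilityMeasure ℝ := ⟨ProbabilityTheory.gaussianReal 0 1, inferInstance⟩ with hγ
  have hconv : Tendsto νp atTop (nhds γ) := by
    rw [ProbabilityMeasure.tendsto_iff_tendsto_charFun]
    intro t
    have e2 : charFun (γ : Measure ℝ) t = ((Real.exp (-t ^ 2 / 2) : ℝ) : ℂ) := by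
      show charFun (ProbabilityTheory.gaussianReal 0 1) t = _
      rw [ProbabilityTheory.charFun_gaussianReal]
      push_cast
      congr 1
      simp
      ring
    rw [e2]
    refine (h t).congr fun n => ?_
    show _ = charFun (ν n) t
    rw [charFun_apply_real]
    simp only [hν]
    rw [integral_smul_measure, integral_finsetSum_measure]
    · simp only [integral_dirac, ENNReal.toReal_inv, ENNReal.toReal_natCast]
      rw [div_eq_inv_mul, Complex.real_smul]
      push_cast
      congr 1
      apply Finset.sum_congr rfl
      intro a _
      congr 1
      ring
    · intro a _
      exact integrable_dirac (by simp)
  have hfr : (γ : Measure ℝ) (frontier (Set.Iic x)) = 0 := by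
    show ProbabilityTheory.gaussianReal 0 1 _ = 0
    rw [frontier_Iic]
    haveI := ProbabilityTheory.noAtoms_gaussianReal (μ := 0) (v := 1) one_ne_zero
    exact measure_singleton x
  have hlim := ProbabilityMeasure.tendsto_measure_of_null_frontier_of_tendsto' hconv hfr
  have hlim2 := (ENNReal.tendsto_toReal (measure_ne_top (γ : Measure ℝ) (Set.Iic x))).comp hlim
  have eγ : ((γ : Measure ℝ) (Set.Iic x)).toReal =
      (Real.sqrt (2 * Real.pi))⁻¹ * ∫ t in Set.Iic x, Real.exp (-t ^ 2 / 2) := by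
    show (ProbabilityTheory.gaussianReal 0 1 (Set.Iic x)).toReal = _
    rw [ProbabilityTheory.gaussianReal_apply_eq_integral 0 one_ne_zero, ENNReal.toReal_ofReal]
    · unfold ProbabilityTheory.gaussianPDFReal
      rw [integral_const_mul]
      simp
    · exact integral_nonneg (fun y => ProbabilityTheory.gaussianPDFReal_nonneg 0 1 y)
  rw [eγ] at hlim2
  refine hlim2.congr fun n => ?_
  show (ν n (Set.Iic x)).toReal = _
  simp only [hν, Measure.smul_apply, Measure.finsetSum_apply, smul_eq_mul,
    Measure.dirac_apply' _ measurableSet_Iic]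
  rw [ENNReal.toReal_mul, ENNReal.toReal_inv, ENNReal.toReal_natCast, div_eq_inv_mul]
  congr 1
  rw [Nat.card_eq_fintype_card, Fintype.card_subtype]
  simp only [Set.indicator_apply, Set.mem_Iic, Pi.one_apply]
  rw [Finset.sum_boole]
  simp

lemma sqrt_cmp (n : ℕ) (hn : 1 ≤ n) (X Y p L : ℝ) (hp0 : 0 ≤ p) (hp1 : p ≤ 1) (hY0 : 0 ≤ Y)
    (hY1 : Y ≤ 2 * n + 1) (hXY : |X - Y| ≤ L) :
    |(X - 2 * p * n) / Real.sqrt (2 * n) - (Y - (2 * n + 1) * p) / Real.sqrt (2 * n + 1)| ≤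
      (L + 2) / Real.sqrt (2 * n) := by
  have hn' : (1:ℝ) ≤ n := by exact_mod_cast hn
  set a : ℝ := 2 * n with ha
  have ha0 : 0 < a := by linarith
  set r := Real.sqrt a with hr
  set q := Real.sqrt (a + 1) with hq
  have hr0 : 0 < r := Real.sqrt_pos.2 ha0
  have hq0 : 0 < q := Real.sqrt_pos.2 (by linarith)
  have hrr : r * r = a := Real.mul_self_sqrt ha0.le
  have hqq : q * q = a + 1 := Real.mul_self_sqrt (by linarith)
  have hrq : r ≤ q := Real.sqrt_le_sqrt (by linarith)
  have e : (X - 2 * p * n) / r - (Y - (a + 1) * p) / q =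
      ((X - Y) + p) / r + (Y - (a + 1) * p) / (a + 1) * ((a + 1 - r * q) / r) := by
    rw [show 2 * p * (n:ℝ) = a * p by rw [ha]; ring, ← hqq]
    field_simp
    have hap : a = q * q - 1 := by linarith
    rw [hap]
    ring
  rw [e]
  have hq1 : |(Y - (a + 1) * p) / (a + 1)| ≤ 1 := by
    rw [abs_div, abs_of_pos (by linarith : (0:ℝ) < a + 1), div_le_one (by linarith), abs_le]
    constructor <;> nlinarith
  have h1 : |((X - Y) + p) / r| ≤ (L + 1) / r := by
    rw [abs_div, abs_of_pos hr0]
    gcongr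
    rw [abs_le] at hXY ⊢
    constructor <;> linarith
  have h2 : |(a + 1 - r * q) / r| ≤ 1 / r := by
    rw [abs_div, abs_of_pos hr0]
    gcongr
    rw [abs_le]
    constructor <;> nlinarith
  calc _ ≤ |((X - Y) + p) / r| + |(Y - (a + 1) * p) / (a + 1) * ((a + 1 - r * q) / r)| :=
        abs_add_le _ _
    _ ≤ (L + 1) / r + 1 * (1 / r) := by
        rw [abs_mul]
        gcongr
    _ = (L + 2) / r := by ring

lemma Ycy_bounds (n ℓ : ℕ) (P : ℕ → Bool) (b : ZMod (2 * n + 1) → Bool) :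
    0 ≤ Ycy (2 * n + 1) ℓ P b ∧ Ycy (2 * n + 1) ℓ P b ≤ 2 * n + 1 := by
  unfold Ycy
  constructor
  · apply Finset.sum_nonneg
    intro x _
    unfold occ; split_ifs <;> norm_num
  · calc _ ≤ ∑ x : ZMod (2 * n + 1), (1:ℝ) := by
          apply Finset.sum_le_sum
          intro x _
          unfold occ; split_ifs <;> norm_num
      _ = 2 * n + 1 := by simp

lemma clt_Dd (ℓ : ℕ) (hℓ : 1 ≤ ℓ) (P : ℕ → Bool) (hv : 0 < v0 ℓ P) (L : ℝ)
    (X : ∀ n, {b // b ∈ Dd n} → ℝ)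
    (hX : ∀ n b, |X n b - Ycy (2 * n + 1) ℓ P b.1| ≤ L) (x : ℝ) :
    Tendsto (fun n : ℕ => (Nat.card {b : {b // b ∈ Dd n} //
        X n b ≤ 2 * (1 / 2) ^ ℓ * n + x * Real.sqrt (2 * v0 ℓ P * n)} : ℝ) /
        (Fintype.card {b // b ∈ Dd n} : ℝ)) atTop
      (nhds ((Real.sqrt (2 * Real.pi))⁻¹ * ∫ t in Set.Iic x, Real.exp (-t ^ 2 / 2))) := by
  haveI : ∀ n, Nonempty {b // b ∈ Dd n} := fun n => (Dd_nonempty n).to_subtype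
  set p : ℝ := (1 / 2) ^ ℓ with hp
  have hp0 : 0 ≤ p := by positivity
  have hp1 : p ≤ 1 := pow_le_one₀ (by norm_num) (by norm_num)
  set w := Real.sqrt (v0 ℓ P) with hw
  have hw0 : 0 < w := Real.sqrt_pos.2 hv
  have hww : w ^ 2 = v0 ℓ P := Real.sq_sqrt hv.le
  set Z : ∀ n, {b // b ∈ Dd n} → ℝ := fun n b => (X n b - 2 * p * n) / Real.sqrt (2 * n) / w with hZ
  have hmain := levy_finite (fun n => {b // b ∈ Dd n}) Z ?_ x
  · refine hmain.congr' ?_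
    filter_upwards [eventually_ge_atTop 1] with n hn
    congr 2
    apply Nat.card_congr
    apply Equiv.subtypeEquivRight
    intro b
    have hn' : (0:ℝ) < n := by exact_mod_cast hn
    have hr0 : 0 < Real.sqrt (2 * n) := Real.sqrt_pos.2 (by linarith)
    simp only [hZ]
    rw [div_div, div_le_iff₀ (by positivity), show 2 * v0 ℓ P * (n:ℝ) = (2 * n) * v0 ℓ P by ring,
      Real.sqrt_mul (by linarith : (0:ℝ) ≤ 2 * n) (v0 ℓ P), ← hw]
    constructor <;> intro h <;> linarith
  · intro t
    have h1 := char_limit P hℓ (t / w)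
    have e1 : -((t / w) ^ 2 * v0 ℓ P) / 2 = -t ^ 2 / 2 := by
      rw [← hww]; field_simp
    rw [e1] at h1
    set G : ∀ n, (ZMod (2 * n + 1) → Bool) → ℂ := fun n b => Complex.exp (Complex.I *
      (((Real.sqrt ((2 * n + 1 : ℕ) : ℝ))⁻¹ *
        (t / w * (Ycy (2 * n + 1) ℓ P b - ((2 * n + 1 : ℕ) : ℝ) * (1 / 2) ^ ℓ)) : ℝ) : ℂ)) with hG
    have h2 : ∀ n, ech n ℓ P (t / w) / ((Wd n).card : ℂ) =
        (∑ b : {b // b ∈ Dd n}, G n b.1) / (Fintype.card {b // b ∈ Dd n} : ℂ) := by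
      intro n
      rw [Finset.sum_coe_sort (Dd n) (G n), Fintype.card_coe, cavg_Dd n (G n)]
      · rfl
      · intro r b; simp only [hG]; rw [Ycy_rot]
    have h3 := h1.congr h2
    have h4 : Tendsto (fun n : ℕ =>
        (∑ b, Complex.exp (Complex.I * ((t * Z n b : ℝ) : ℂ))) /
          (Fintype.card {b // b ∈ Dd n} : ℂ) -
        (∑ b : {b // b ∈ Dd n}, G n b.1) / (Fintype.card {b // b ∈ Dd n} : ℂ)) atTop (nhds 0) := by
      have hb : Tendsto (fun n : ℕ => |t / w| * ((L + 2) / Real.sqrt (2 * n))) atTop (nhds 0) := by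
        rw [← mul_zero |t / w|]
        apply Tendsto.const_mul
        apply Tendsto.const_div_atTop
        apply Real.tendsto_sqrt_atTop.comp
        exact Tendsto.const_mul_atTop (by norm_num) tendsto_natCast_atTop_atTop
      refine squeeze_zero_norm' ?_ hb
      filter_upwards [eventually_ge_atTop 1] with n hn
      rw [← sub_div, ← Finset.sum_sub_distrib, norm_div, Complex.norm_natCast,
        div_le_iff₀ (by exact_mod_cast Fintype.card_pos)]
      refine (norm_sum_le_of_le _ (f := fun b : {b // b ∈ Dd n} => Complex.exp (Complex.I * ((t * Z n b : ℝ) : ℂ)) - G n b.1) (n := fun _ => |t / w| * ((L + 2) / Real.sqrt (2 * n))) ?_).trans ?_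
      · intro b _
        refine (norm_exp_I_sub_le _ _).trans ?_
        have := sqrt_cmp n hn (X n b) (Ycy (2 * n + 1) ℓ P b.1) p L hp0 hp1
          (Ycy_bounds n ℓ P b.1).1 (Ycy_bounds n ℓ P b.1).2 (hX n b)
        refine le_trans (le_of_eq ?_) (mul_le_mul_of_nonneg_left this (abs_nonneg (t / w)))
        rw [← abs_mul]
        congr 1
        simp only [hZ, ← hp]
        push_cast
        ring
      · rw [Finset.sum_const, Finset.card_univ, nsmul_eq_mul, mul_comm]
    have h5 := h4.add h3
    simpa using h5

end clt

/-- The number of occurrences of a fixed pattern in a uniformly random Łukasiewicz path of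
length `n` has asymptotically linear mean and variance, and converges after standardization
to a standard Gaussian distribution. -/
theorem luka_pattern_gaussian (m : ℕ) (hm : 1 ≤ m) (ω : ℕ → ℤ) (hω : IsPattern m ω) :
    ∃ μ v : ℝ, 0 < μ ∧ 0 < v ∧
      Tendsto (fun n : ℕ => lukaMean m ω n / (n : ℝ)) atTop (nhds μ) ∧
      Tendsto (fun n : ℕ => (lukaSqMean m ω n - lukaMean m ω n ^ 2) / (n : ℝ)) atTop
        (nhds v) ∧
      ∀ x : ℝ,
        Tendsto (fun n : ℕ =>
            (Nat.card {s : ℕ → ℤ // IsLukaSteps n s ∧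
                (occCount m ω n s : ℝ) ≤ μ * n + x * Real.sqrt (v * n)} : ℝ) /
              (Nat.card {s : ℕ → ℤ // IsLukaSteps n s} : ℝ))
          atTop
          (nhds ((Real.sqrt (2 * Real.pi))⁻¹ * ∫ t in Set.Iic x, Real.exp (-t ^ 2 / 2))) := by
  classical
  choose e he using exists_equiv
  obtain ⟨hℓ2, hud⟩ := Pw_hud hm hω
  set ℓ := pos ω m + 1 with hℓ
  set P := Pw m ω with hP
  have hv := v0_pos P hℓ2 hud
  haveI : ∀ n, Nonempty {b // b ∈ Dd n} := fun n => (Dd_nonempty n).to_subtype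
  set X : ∀ n, {b // b ∈ Dd n} → ℝ := fun n b => (occCount m ω n (e n b).1 : ℝ) with hX
  have hXY : ∀ n b, |X n b - Ycy (2 * n + 1) ℓ P b.1| ≤ (ℓ : ℝ) := by
    intro n b
    exact occ_diff hω (luka_pattern (e n b).2) (he n b)
  have hcard : ∀ n, Nat.card {s : ℕ → ℤ // IsLukaSteps n s} = Fintype.card {b // b ∈ Dd n} := by
    intro n
    rw [← Nat.card_congr (e n), Nat.card_eq_fintype_card]
  have hmean : ∀ n, lukaMean m ω n = favg Finset.univ (X n) := by
    intro n
    unfold lukaMean favg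
    rw [hcard, ← (e n).tsum_eq, tsum_fintype, Finset.card_univ]
  have hsq : ∀ n, lukaSqMean m ω n = favg Finset.univ (fun b => X n b ^ 2) := by
    intro n
    unfold lukaSqMean favg
    rw [hcard, ← (e n).tsum_eq, tsum_fintype, Finset.card_univ]
  have hfav : ∀ n (G : (ZMod (2 * n + 1) → Bool) → ℝ), (∀ r b, G (rot r b) = G b) →
      favg (Finset.univ : Finset {b // b ∈ Dd n}) (fun b => G b.1) = favg (Wd n) G := by
    intro n G hG
    rw [← favg_Dd n G hG]
    unfold favg
    rw [Finset.sum_coe_sort (Dd n) G, Finset.card_univ, Fintype.card_coe]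
  have hY1 : ∀ n, favg (Finset.univ : Finset {b // b ∈ Dd n})
      (fun b => Ycy (2 * n + 1) ℓ P b.1) = favg (Wd n) (Ycy (2 * n + 1) ℓ P) :=
    fun n => hfav n _ (fun r b => Ycy_rot n ℓ P r b)
  have hY2 : ∀ n, favg (Finset.univ : Finset {b // b ∈ Dd n})
      (fun b => Ycy (2 * n + 1) ℓ P b.1 ^ 2) = favg (Wd n) (fun b => Ycy (2 * n + 1) ℓ P b ^ 2) :=
    fun n => hfav n (fun b => Ycy (2 * n + 1) ℓ P b ^ 2) (fun r b => by rw [Ycy_rot])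
  have hmom := moments_transfer (fun n => {b // b ∈ Dd n}) (fun n => Finset.univ)
    (fun n => Finset.univ_nonempty) X (fun n b => Ycy (2 * n + 1) ℓ P b.1) ℓ
    (Eventually.of_forall fun n b _ => hXY n b) (2 * (1 / 2) ^ ℓ) (2 * v0 ℓ P)
    ((meanW_limit P).congr fun n => by rw [hY1])
    ((varW_limit P (by omega)).congr fun n => by rw [hY1, hY2])
  refine ⟨2 * (1 / 2) ^ ℓ, 2 * v0 ℓ P, by positivity, by positivity, ?_, ?_, ?_⟩
  · exact hmom.1.congr fun n => by rw [hmean]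
  · exact hmom.2.congr fun n => by rw [hmean, hsq]
  · intro x
    refine (clt_Dd ℓ (by omega) P hv ℓ X hXY x).congr fun n => ?_
    rw [hcard]
    congr 2
    rw [← Nat.card_congr (Equiv.subtypeSubtypeEquivSubtypeInter (fun s : ℕ → ℤ => IsLukaSteps n s)
      (fun s => (occCount m ω n s : ℝ) ≤ 2 * (1 / 2) ^ ℓ * n + x * Real.sqrt (2 * v0 ℓ P * n)))]
    exact Nat.card_congr ((e n).subtypeEquiv fun b => Iff.rfl)
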